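/- arXiv:2503.18149 — 2 statements merged into one kernel-verified Lean document; each statement's English description precedes it below -/
import Mathlib

section
/- Uniform Sobolev bound on a short time interval, horizontal resistivity: Let s > 2, μ > 0, and M > 0. There exist T > 0 and C ≥ 1, depending only on s, μ and M, with the following property. If a, b : [0,T') × ℝ² → ℝ (for any T' > 0) are smooth functions such that a(t,·) and b(t,·) are Schwartz functions for each t (with all Schwartz seminorms locally bounded in t), (a,b) solves pointwise the system ∂ₜa + (∂_y a)(∂_x b) − (∂_x a)(∂_y b) = μΔa, ∂ₜb − (∂_y a)∂_xΔa + (∂_x a)∂_yΔa = 0, and ‖a(0)‖_{H^{s+1}}² + ‖b(0)‖_{H^{s}}² ≤ M, then for all t ∈ [0, min(T, T')), ‖a(t)‖_{H^{s+1}}² + ‖b(t)‖_{H^{s}}² ≤ C ( ‖a(0)‖_{H^{s+1}}² + ‖b(0)‖_{H^{s}}² ). -/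
open MeasureTheory Real
open scoped FourierTransform

noncomputable section

/-- The plane `ℝ²`. -/
abbrev Plane := EuclideanSpace ℝ (Fin 2)

/-- Partial derivative in the coordinate direction `i` (`i = 0` is `x`, `i = 1` is `y`). -/
def pd (i : Fin 2) (f : Plane → ℝ) (x : Plane) : ℝ :=
  fderiv ℝ f x (EuclideanSpace.single i 1)

/-- The Laplacian `Δ = ∂ₓₓ + ∂_yy` on the plane. -/
def lap (f : Plane → ℝ) (x : Plane) : ℝ :=
  pd 0 (pd 0 f) x + pd 1 (pd 1 f) x

/-- The Sobolev `H^s` norm, `‖f‖_{H^s} = ‖ξ ↦ (1+|ξ|²)^{s/2} (𝓕f)(ξ)‖_{L²}`, written via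
the Fourier integral (which is well defined e.g. for Schwartz functions). -/
def sobNorm (s : ℝ) (f : Plane → ℝ) : ℝ :=
  (∫ ξ : Plane, (1 + ‖ξ‖ ^ 2) ^ s * ‖𝓕 (fun x => (f x : ℂ)) ξ‖ ^ 2) ^ (1/2 : ℝ)

/-!
Write `{f, g} = ∂_y f ∂ₓ g - ∂ₓ f ∂_y g`, so that the system is `∂ₜ a = μ Δ a - {a, b}`,
`∂ₜ b = {a, Δ a}`. The proof is an energy estimate for `E = (2π)² ‖a‖²_{H^{s+1}} + ‖b‖²_{H^s}`,
carried out on the Fourier side, where the bracket becomes a convolution with symbol `ξ ∧ η`. With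
`⟪ξ⟫ = (1 + ‖ξ‖²)^{1/2}`, the two brackets contribute `2 I` to `E'`, where
`I = (2π)⁴ ∬ (‖ξ‖² ⟪η⟫^{2s} - ⟪ξ⟫^{2s+2}) (ξ ∧ η) Re (conj â(ξ) â(ξ - η) b̂(η)) dη dξ`.
Each bracket alone loses a derivative, but the antisymmetry of `ξ ∧ η` combines them into this
difference of symbols, and `|ξ ∧ η| ≤ ⟪ξ - η⟫ min(⟪ξ⟫, ⟪η⟫)` and `|⟪ξ⟫ - ⟪η⟫| ≤ ⟪ξ - η⟫` show that
it gains the missing derivative. Young's inequality and the embedding of `H^{s-1}` into the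
functions with integrable Fourier transform, which needs `s > 2`, then give
`|I| ≲ ‖a‖_{H^{s+1}} ‖b‖_{H^s} ‖a‖_{H^{s+2}}`. The resistivity absorbs `‖a‖_{H^{s+2}}`, leaving
`E' ≤ L (E + E²)`.
-/

namespace EMHD

open Set Filter Topology SchwartzMap
open scoped ENNReal ComplexConjugate ContDiff

section RealInequalities

variable {s x y z m : ℝ}

lemma rpow_sub_rpow_le {p : ℝ} (hp : 1 ≤ p) (hy : 0 ≤ y) (hyx : y ≤ x) :
    x ^ p - y ^ p ≤ p * (x - y) * x ^ (p - 1) := by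
  obtain rfl | hx := (hy.trans hyx).eq_or_lt
  · simp [le_antisymm hyx hy]
  have bernoulli := one_add_mul_self_le_rpow_one_add (s := y / x - 1)
    (by linarith [div_nonneg hy hx.le]) hp
  rw [add_sub_cancel, div_rpow hy hx.le, le_div_iff₀ (by positivity)] at bernoulli
  have hxp : x ^ p = x ^ (p - 1) * x := by
    rw [← rpow_add_one hx.ne', sub_add_cancel]
  calc x ^ p - y ^ p ≤ x ^ p - (1 + p * (y / x - 1)) * x ^ p := by linarith
    _ = p * (x - y) * x ^ (p - 1) := by rw [hxp]; field_simp; ring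

lemma rpow_two_mul (hx : 0 < x) (s : ℝ) : x ^ (2 * s) = x ^ s * x ^ s := by
  rw [two_mul, rpow_add hx]

/-- Either `x ≤ 2 y`, and the mean value theorem applies, or `x ≤ 2 (x - y)`. -/
lemma mul_rpow_sub_rpow_le (hs : 1 / 2 ≤ s) (hy : 0 < y) (hyx : y ≤ x) (hz : x - y ≤ z) :
    y * (x ^ (2 * s) - y ^ (2 * s)) ≤
      2 ^ s * (2 * s * z * (x ^ s * y ^ s) + z ^ s * (y * x ^ s)) := by
  have hx : 0 < x := hy.trans_le hyx
  have hz₀ : 0 ≤ z := by linarith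
  rcases le_total x (2 * y) with hxy | hxy
  · have hxs : x ^ s ≤ 2 ^ s * y ^ s := by
      rw [← mul_rpow two_pos.le hy.le]; gcongr
    calc y * (x ^ (2 * s) - y ^ (2 * s)) ≤ y * (2 * s * (x - y) * x ^ (2 * s - 1)) := by
          gcongr; exact rpow_sub_rpow_le (by linarith) hy.le hyx
      _ ≤ x * (2 * s * z * x ^ (2 * s - 1)) := by gcongr
      _ = 2 * s * z * (x ^ s * x ^ s) := by
          rw [← rpow_two_mul hx, rpow_sub_one hx.ne']; field_simp
      _ ≤ 2 * s * z * (x ^ s * (2 ^ s * y ^ s)) := by gcongr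
      _ = 2 ^ s * (2 * s * z * (x ^ s * y ^ s) + 0) := by ring
      _ ≤ _ := by gcongr; positivity
  · have hxs : x ^ s ≤ 2 ^ s * z ^ s := by
      rw [← mul_rpow two_pos.le hz₀]; gcongr; linarith
    calc y * (x ^ (2 * s) - y ^ (2 * s)) ≤ y * x ^ (2 * s) := by
          gcongr; linarith [rpow_nonneg hy.le (2 * s)]
      _ = y * (x ^ s * x ^ s) := by rw [rpow_two_mul hx]
      _ ≤ y * (x ^ s * (2 ^ s * z ^ s)) := by gcongr
      _ = 2 ^ s * (0 + z ^ s * (y * x ^ s)) := by ring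
      _ ≤ _ := by gcongr; positivity

lemma min_mul_abs_rpow_sub_rpow_le (hs : 1 / 2 ≤ s) (hx : 0 < x) (hy : 0 < y)
    (hz : |x - y| ≤ z) :
    min x y * |y ^ (2 * s) - x ^ (2 * s)| ≤
      2 ^ s * (2 * s * z * (x ^ s * y ^ s) + z ^ s * (y * x ^ s + x * y ^ s)) := by
  have hz₀ : 0 ≤ z := (abs_nonneg _).trans hz
  wlog hyx : y ≤ x generalizing x y
  · rw [min_comm, abs_sub_comm, mul_comm (x ^ s), add_comm (y * x ^ s)]
    exact this hy hx (by rwa [abs_sub_comm]) (le_of_not_ge hyx)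
  have hpow : y ^ (2 * s) ≤ x ^ (2 * s) := rpow_le_rpow hy.le hyx (by linarith)
  rw [min_eq_right hyx, abs_sub_comm, abs_of_nonneg (sub_nonneg.2 hpow)]
  refine (mul_rpow_sub_rpow_le hs hy hyx (abs_le.1 hz).2).trans ?_
  gcongr
  exact le_add_of_nonneg_right (by positivity)

lemma rpow_le_two_rpow_mul_add (hs : 0 ≤ s) (hx : 0 ≤ x) (hy : 0 ≤ y) (hz : 0 ≤ z)
    (hyxz : y ≤ x + z) : y ^ s ≤ 2 ^ s * (x ^ s + z ^ s) := by
  have hmax : y ≤ 2 * max x z := by linarith [le_max_left x z, le_max_right x z]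
  calc y ^ s ≤ (2 * max x z) ^ s := by gcongr
    _ = 2 ^ s * max x z ^ s := mul_rpow two_pos.le (le_max_of_le_left hx)
    _ ≤ 2 ^ s * (x ^ s + z ^ s) := by
        gcongr
        rcases max_choice x z with h | h <;> rw [h]
        · exact le_add_of_nonneg_right (by positivity)
        · exact le_add_of_nonneg_left (by positivity)

lemma mul_rpow_two_mul_le (hs : 0 ≤ s) (hx : 1 ≤ x) (hy : 0 < y) (hz : 1 ≤ z)
    (hyxz : y ≤ x + z) (hm : m ≤ z * x) :
    m * y ^ (2 * s) ≤
      2 ^ s * (z ^ 2 * y ^ s * (x ^ s * x ^ 2) + z ^ s * z * y ^ s * x ^ 3) := by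
  have hx₀ : 0 < x := by linarith
  have hz₀ : 0 < z := by linarith
  have hys : y ^ s ≤ 2 ^ s * (x ^ s + z ^ s) :=
    rpow_le_two_rpow_mul_add hs hx₀.le hy.le hz₀.le hyxz
  calc m * y ^ (2 * s) ≤ z * x * (y ^ s * (2 ^ s * (x ^ s + z ^ s))) := by
        rw [rpow_two_mul hy]; gcongr
    _ = 2 ^ s * (z * y ^ s * (x ^ s * x) + z ^ s * z * y ^ s * x) := by ring
    _ ≤ _ := by
        gcongr
        · exact le_self_pow₀ hz two_ne_zero
        · exact le_self_pow₀ hx two_ne_zero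
        · exact le_self_pow₀ hx three_ne_zero

lemma mul_abs_sq_sub_one_mul_rpow_sub_rpow_le (hs : 1 / 2 ≤ s) (hx : 1 ≤ x) (hy : 1 ≤ y)
    (hz : 1 ≤ z) (hxy : |x - y| ≤ z) (hm₀ : 0 ≤ m) (hm : m ≤ z * min x y) :
    m * |(x ^ 2 - 1) * y ^ (2 * s) - x ^ (2 * s + 2)| ≤
      2 ^ s * (2 * s + 1) * (z ^ (2 : ℝ) * y ^ s * x ^ (s + 2) +
        z ^ (s + 1) * y ^ (1 : ℝ) * x ^ (s + 2) + z ^ (s + 1) * y ^ s * x ^ (3 : ℝ)) := by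
  have hx₀ : 0 < x := by linarith
  have hy₀ : 0 < y := by linarith
  have hz₀ : 0 < z := by linarith
  have hs₀ : 0 < s := by linarith
  rw [rpow_one, show z ^ (2 : ℝ) = z ^ 2 from rpow_ofNat z 2,
    show x ^ (3 : ℝ) = x ^ 3 from rpow_ofNat x 3, rpow_add_one hz₀.ne', rpow_add hx₀,
    rpow_add hx₀, show x ^ (2 : ℝ) = x ^ 2 from rpow_ofNat x 2]
  have htri : |(x ^ 2 - 1) * y ^ (2 * s) - x ^ (2 * s) * x ^ 2| ≤
      x ^ 2 * |y ^ (2 * s) - x ^ (2 * s)| + y ^ (2 * s) := by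
    calc _ = |x ^ 2 * (y ^ (2 * s) - x ^ (2 * s)) - y ^ (2 * s)| := by ring_nf
      _ ≤ _ := (abs_sub _ _).trans_eq (by
        rw [abs_mul, abs_of_nonneg (sq_nonneg x),
          abs_of_nonneg (rpow_nonneg hy₀.le (2 * s))])
  have hmain : m * (x ^ 2 * |y ^ (2 * s) - x ^ (2 * s)|) ≤
      x ^ 2 * z *
        (2 ^ s * (2 * s * z * (x ^ s * y ^ s) + z ^ s * (y * x ^ s + x * y ^ s))) := by
    calc m * (x ^ 2 * |y ^ (2 * s) - x ^ (2 * s)|)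
        ≤ z * min x y * (x ^ 2 * |y ^ (2 * s) - x ^ (2 * s)|) := by gcongr
      _ = x ^ 2 * z * (min x y * |y ^ (2 * s) - x ^ (2 * s)|) := by ring
      _ ≤ _ := mul_le_mul_of_nonneg_left (min_mul_abs_rpow_sub_rpow_le hs hx₀ hy₀ hxy)
          (by positivity)
  have hlower := mul_rpow_two_mul_le hs₀.le hx hy₀ hz (by linarith [(abs_le.1 hxy).1])
    (hm.trans (mul_le_mul_of_nonneg_left (min_le_left x y) hz₀.le))
  calc m * |(x ^ 2 - 1) * y ^ (2 * s) - x ^ (2 * s) * x ^ 2|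
      ≤ m * (x ^ 2 * |y ^ (2 * s) - x ^ (2 * s)|) + m * y ^ (2 * s) := by
        rw [← mul_add]; gcongr
    _ ≤ _ := add_le_add hmain hlower
    _ = 2 ^ s * ((2 * s + 1) * (z ^ 2 * y ^ s * (x ^ s * x ^ 2)) +
          1 * (z ^ s * z * y * (x ^ s * x ^ 2)) + 2 * (z ^ s * z * y ^ s * x ^ 3)) := by ring
    _ ≤ 2 ^ s * ((2 * s + 1) * (z ^ 2 * y ^ s * (x ^ s * x ^ 2)) +
          (2 * s + 1) * (z ^ s * z * y * (x ^ s * x ^ 2)) +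
          (2 * s + 1) * (z ^ s * z * y ^ s * x ^ 3)) := by gcongr <;> linarith
    _ = _ := by ring

end RealInequalities

/-- The Japanese bracket `⟪ξ⟫ = (1 + ‖ξ‖²)^{1/2}`, in powers of which all Fourier weights are
expressed. -/
def japaneseBracket {E : Type*} [NormedAddCommGroup E] (ξ : E) : ℝ := √(1 + ‖ξ‖ ^ 2)

local notation "⟪" ξ "⟫" => japaneseBracket ξ

section JapaneseBracket

variable {E : Type*} [NormedAddCommGroup E]

lemma japaneseBracket_sq (ξ : E) : ⟪ξ⟫ ^ 2 = 1 + ‖ξ‖ ^ 2 := sq_sqrt (by positivity)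

lemma one_le_japaneseBracket (ξ : E) : 1 ≤ ⟪ξ⟫ :=
  one_le_sqrt.2 (le_add_of_nonneg_right (sq_nonneg _))

lemma japaneseBracket_pos (ξ : E) : 0 < ⟪ξ⟫ := one_pos.trans_le (one_le_japaneseBracket ξ)

lemma norm_le_japaneseBracket (ξ : E) : ‖ξ‖ ≤ ⟪ξ⟫ :=
  le_sqrt_of_sq_le (le_add_of_nonneg_left zero_le_one)

lemma japaneseBracket_sub_le (ξ η : E) : ⟪ξ⟫ - ⟪η⟫ ≤ ⟪ξ - η⟫ := by
  have hη := norm_le_japaneseBracket η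
  have htri : ‖ξ‖ ≤ ‖ξ - η‖ + ‖η‖ := by simpa using norm_add_le (ξ - η) η
  refine (sub_le_iff_le_add'.2 ?_).trans (norm_le_japaneseBracket _)
  refine sqrt_le_iff.2 ⟨by have := japaneseBracket_pos η; positivity, ?_⟩
  nlinarith [japaneseBracket_sq η, norm_nonneg ξ, norm_nonneg η, norm_nonneg (ξ - η)]

lemma abs_japaneseBracket_sub_le (ξ η : E) : |⟪ξ⟫ - ⟪η⟫| ≤ ⟪ξ - η⟫ := by
  refine abs_sub_le_iff.2 ⟨japaneseBracket_sub_le ξ η, ?_⟩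
  simpa only [japaneseBracket, norm_sub_rev] using japaneseBracket_sub_le η ξ

@[fun_prop]
lemma continuous_japaneseBracket_rpow (r : ℝ) : Continuous fun ξ : E => ⟪ξ⟫ ^ r := by
  have hcont : Continuous fun ξ : E => ⟪ξ⟫ := by unfold japaneseBracket; fun_prop
  exact hcont.rpow_const fun ξ => Or.inl (japaneseBracket_pos ξ).ne'

lemma one_add_norm_sq_rpow (ξ : E) (r : ℝ) : (1 + ‖ξ‖ ^ 2) ^ r = ⟪ξ⟫ ^ (2 * r) := by
  rw [← japaneseBracket_sq, rpow_mul (japaneseBracket_pos ξ).le, rpow_two]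

lemma integrable_japaneseBracket_rpow_neg [NormedSpace ℝ E] [FiniteDimensional ℝ E]
    [MeasurableSpace E] [BorelSpace E] (ν : Measure E) [ν.IsAddHaarMeasure] {r : ℝ}
    (hr : (Module.finrank ℝ E : ℝ) < r) : Integrable (fun ξ : E => ⟪ξ⟫ ^ (-r)) ν := by
  refine (integrable_rpow_neg_one_add_norm_sq (μ := ν) hr).congr (ae_of_all _ fun ξ => ?_)
  simp only [one_add_norm_sq_rpow]
  congr 1; ring

end JapaneseBracket

section Wedge

/-- The determinant `ξ ∧ η = ξ₀ η₁ - ξ₁ η₀`, the Fourier symbol of the Poisson bracket. -/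
def wedge (ξ η : Plane) : ℝ := ξ 0 * η 1 - ξ 1 * η 0

lemma abs_wedge_le (ξ η : Plane) : |wedge ξ η| ≤ ‖ξ‖ * ‖η‖ := by
  refine abs_le_of_sq_le_sq ?_ (by positivity)
  rw [mul_pow, EuclideanSpace.real_norm_sq_eq, EuclideanSpace.real_norm_sq_eq, Fin.sum_univ_two,
    Fin.sum_univ_two, wedge]
  nlinarith [sq_nonneg (ξ 0 * η 0 + ξ 1 * η 1)]

lemma wedge_swap (ξ η : Plane) : wedge η ξ = -wedge ξ η := by
  simp only [wedge]; ring

lemma wedge_sub_right_self (ξ η : Plane) : wedge (ξ - η) η = wedge ξ η := by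
  simp only [wedge, PiLp.sub_apply]; ring

lemma wedge_sub_left_self (ξ η : Plane) : wedge (ξ - η) ξ = wedge ξ η := by
  simp only [wedge, PiLp.sub_apply]; ring

lemma continuous_wedge : Continuous fun p : Plane × Plane => wedge p.1 p.2 := by
  unfold wedge; fun_prop

lemma abs_wedge_le_japaneseBracket (ξ η : Plane) : |wedge ξ η| ≤ ⟪ξ⟫ * ⟪η⟫ :=
  (abs_wedge_le ξ η).trans <| mul_le_mul (norm_le_japaneseBracket ξ)
    (norm_le_japaneseBracket η) (norm_nonneg η) (japaneseBracket_pos ξ).le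

lemma abs_wedge_le_mul_min (ξ η : Plane) : |wedge ξ η| ≤ ⟪ξ - η⟫ * min ⟪ξ⟫ ⟪η⟫ := by
  rw [mul_min_of_nonneg _ _ (japaneseBracket_pos _).le, le_min_iff]
  constructor
  · simpa only [wedge_sub_left_self] using abs_wedge_le_japaneseBracket (ξ - η) ξ
  · simpa only [wedge_sub_right_self] using abs_wedge_le_japaneseBracket (ξ - η) η

lemma abs_wedge_mul_abs_sub_le {s : ℝ} (hs : 1 / 2 ≤ s) (ξ η : Plane) :
    |wedge ξ η| * |‖ξ‖ ^ 2 * ⟪η⟫ ^ (2 * s) - ⟪ξ⟫ ^ (2 * s + 2)| ≤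
      2 ^ s * (2 * s + 1) * (⟪ξ - η⟫ ^ (2 : ℝ) * ⟪η⟫ ^ s * ⟪ξ⟫ ^ (s + 2) +
        ⟪ξ - η⟫ ^ (s + 1) * ⟪η⟫ ^ (1 : ℝ) * ⟪ξ⟫ ^ (s + 2) +
        ⟪ξ - η⟫ ^ (s + 1) * ⟪η⟫ ^ s * ⟪ξ⟫ ^ (3 : ℝ)) := by
  rw [← sub_eq_of_eq_add' (japaneseBracket_sq ξ)]
  exact mul_abs_sq_sub_one_mul_rpow_sub_rpow_le hs (one_le_japaneseBracket ξ)
    (one_le_japaneseBracket η) (one_le_japaneseBracket _) (abs_japaneseBracket_sub_le ξ η)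
    (abs_nonneg _) (abs_wedge_le_mul_min ξ η)

end Wedge

section Young

lemma lintegral_mul_le_eLpNorm_two_mul {α : Type*} [MeasurableSpace α] {ν : Measure α}
    {f g : α → ℝ≥0∞} (hf : AEMeasurable f ν) (hg : AEMeasurable g ν) :
    ∫⁻ x, f x * g x ∂ν ≤ eLpNorm f 2 ν * eLpNorm g 2 ν := by
  simpa [eLpNorm_eq_lintegral_rpow_enorm_toReal two_ne_zero ENNReal.ofNat_ne_top] using
    ENNReal.lintegral_mul_le_Lp_mul_Lq ν Real.HolderConjugate.two_two hf hg

variable {G : Type*} [AddCommGroup G] [MeasurableSpace G] [MeasurableAdd₂ G] [MeasurableNeg G]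
  {ν : Measure G} [ν.IsAddLeftInvariant] {f g h : G → ℝ≥0∞}

lemma lintegral_lintegral_sub_mul_mul_le_of_L1_right [SFinite ν] (hf : Measurable f)
    (hg : Measurable g) (hh : Measurable h) :
    ∫⁻ x, ∫⁻ y, f (x - y) * g y * h x ∂ν ∂ν ≤
      eLpNorm f 2 ν * (∫⁻ y, g y ∂ν) * eLpNorm h 2 ν := by
  rw [lintegral_lintegral_swap (by fun_prop)]
  calc ∫⁻ y, ∫⁻ x, f (x - y) * g y * h x ∂ν ∂ν
      = ∫⁻ y, g y * ∫⁻ x, f (x - y) * h x ∂ν ∂ν := by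
        refine lintegral_congr fun y => ?_
        rw [← lintegral_const_mul _ (by fun_prop)]
        exact lintegral_congr fun x => by ring
    _ ≤ ∫⁻ y, g y * (eLpNorm f 2 ν * eLpNorm h 2 ν) ∂ν := by
        gcongr with y
        rw [← eLpNorm_comp_measurePreserving (by fun_prop) (measurePreserving_sub_right ν y)]
        exact lintegral_mul_le_eLpNorm_two_mul (by fun_prop) hh.aemeasurable
    _ = _ := by rw [lintegral_mul_const _ hg]; ring

lemma lintegral_lintegral_sub_mul_mul_le_of_L1_left [SFinite ν] [ν.IsNegInvariant]
    (hf : Measurable f) (hg : Measurable g) (hh : Measurable h) :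
    ∫⁻ x, ∫⁻ y, f (x - y) * g y * h x ∂ν ∂ν ≤
      (∫⁻ y, f y ∂ν) * eLpNorm g 2 ν * eLpNorm h 2 ν := by
  calc ∫⁻ x, ∫⁻ y, f (x - y) * g y * h x ∂ν ∂ν
      = ∫⁻ x, ∫⁻ y, g (x - y) * f y * h x ∂ν ∂ν := by
        refine lintegral_congr fun x => ?_
        rw [← lintegral_sub_left_eq_self (fun y => g (x - y) * f y * h x) x]
        exact lintegral_congr fun y => by rw [sub_sub_cancel, mul_comm (f _)]
    _ ≤ eLpNorm g 2 ν * (∫⁻ y, f y ∂ν) * eLpNorm h 2 ν :=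
        lintegral_lintegral_sub_mul_mul_le_of_L1_right hg hf hh
    _ = _ := by ring

lemma lintegral_lintegral_sub_mul_mul_le_of_L1_outer [ν.IsNegInvariant] (hf : Measurable f)
    (hg : Measurable g) (hh : Measurable h) :
    ∫⁻ x, ∫⁻ y, f (x - y) * g y * h x ∂ν ∂ν ≤
      eLpNorm f 2 ν * eLpNorm g 2 ν * ∫⁻ x, h x ∂ν := by
  rw [← lintegral_const_mul _ hh]
  gcongr with x
  rw [lintegral_mul_const _ (by fun_prop)]
  gcongr
  rw [← eLpNorm_comp_measurePreserving (by fun_prop) (Measure.measurePreserving_sub_left ν x)]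
  exact lintegral_mul_le_eLpNorm_two_mul (by fun_prop) hg.aemeasurable

end Young

section SchwartzFamilies

variable {E F F₁ F₂ : Type*} [NormedAddCommGroup E] [NormedSpace ℝ E]
  [NormedAddCommGroup F] [NormedSpace ℝ F] [NormedAddCommGroup F₁] [NormedSpace ℝ F₁]
  [NormedAddCommGroup F₂] [NormedSpace ℝ F₂] {S : Set ℝ}

/-- A family of Schwartz functions all of whose Schwartz seminorms are locally bounded along the
time set `S`. -/
def SchwartzLocallyBoundedOn (f : ℝ → 𝓢(E, F)) (S : Set ℝ) : Prop :=
  ∀ t ∈ S, ∀ k n : ℕ, ∃ K, ∀ᶠ τ in 𝓝[S] t, SchwartzMap.seminorm ℝ k n (f τ) ≤ K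

namespace SchwartzLocallyBoundedOn

variable {f g : ℝ → 𝓢(E, F)}

lemma mono {S' : Set ℝ} (hf : SchwartzLocallyBoundedOn f S) (hS : S' ⊆ S) :
    SchwartzLocallyBoundedOn f S' := fun t ht k n => by
  obtain ⟨K, hK⟩ := hf t (hS ht) k n
  exact ⟨K, hK.filter_mono (nhdsWithin_mono t hS)⟩

lemma const (f : 𝓢(E, F)) (S : Set ℝ) : SchwartzLocallyBoundedOn (fun _ => f) S :=
  fun _ _ k n => ⟨SchwartzMap.seminorm ℝ k n f, Eventually.of_forall fun _ => le_rfl⟩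

lemma sub (hf : SchwartzLocallyBoundedOn f S) (hg : SchwartzLocallyBoundedOn g S) :
    SchwartzLocallyBoundedOn (fun t => f t - g t) S := fun t ht k n => by
  obtain ⟨K, hK⟩ := hf t ht k n
  obtain ⟨L, hL⟩ := hg t ht k n
  refine ⟨K + L, ?_⟩
  filter_upwards [hK, hL] with τ hfτ hgτ
  exact (map_sub_le_add _ _ _).trans (add_le_add hfτ hgτ)

lemma sup_seminorm_le (hf : SchwartzLocallyBoundedOn f S) {t : ℝ} (ht : t ∈ S)
    (s : Finset (ℕ × ℕ)) :
    ∃ K, ∀ᶠ τ in 𝓝[S] t, (s.sup (schwartzSeminormFamily ℝ E F)) (f τ) ≤ K := by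
  choose K hK using fun i : ℕ × ℕ => hf t ht i.1 i.2
  refine ⟨∑ i ∈ s, |K i|, ?_⟩
  filter_upwards [(eventually_all_finset s).2 fun i _ => hK i] with τ hτ
  refine Seminorm.finset_sup_apply_le (by positivity) fun i hi => ?_
  exact ((hτ i hi).trans (le_abs_self _)).trans
    (Finset.single_le_sum (f := fun i => |K i|) (fun _ _ => abs_nonneg _) hi)

lemma clm_comp {E' F' : Type*} [NormedAddCommGroup E'] [NormedSpace ℝ E']
    [NormedAddCommGroup F'] [NormedSpace ℝ F'] (L : 𝓢(E, F) →L[ℝ] 𝓢(E', F'))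
    (hf : SchwartzLocallyBoundedOn f S) : SchwartzLocallyBoundedOn (fun t => L (f t)) S :=
  fun t ht k n => by
  obtain ⟨s, C, -, hC⟩ := Seminorm.bound_of_continuous (schwartz_withSeminorms ℝ E F)
    ((schwartzSeminormFamily ℝ E' F' (k, n)).comp L.toLinearMap)
    (((schwartz_withSeminorms ℝ E' F').continuous_seminorm (k, n)).comp L.continuous)
  obtain ⟨K, hK⟩ := hf.sup_seminorm_le ht s
  refine ⟨C * K, ?_⟩
  filter_upwards [hK] with τ hτ
  exact (hC (f τ)).trans (mul_le_mul_of_nonneg_left hτ C.coe_nonneg)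

lemma pairing {f : ℝ → 𝓢(E, F₁)} {g : ℝ → 𝓢(E, F₂)} (B : F₁ →L[ℝ] F₂ →L[ℝ] F)
    (hf : SchwartzLocallyBoundedOn f S) (hg : SchwartzLocallyBoundedOn g S) :
    SchwartzLocallyBoundedOn (fun t => SchwartzMap.pairing B (f t) (g t)) S := fun t ht k n => by
  choose K hK using fun i => hf t ht k i
  choose L hL using fun i => hg t ht 0 i
  refine ⟨‖B‖ * ∑ i ∈ Finset.range (n + 1), n.choose i * |K i| * |L (n - i)|, ?_⟩
  filter_upwards [(eventually_all_finset (Finset.range (n + 1))).2 fun i _ => hK i,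
    (eventually_all_finset (Finset.range (n + 1))).2 fun i _ => hL (n - i)] with τ hKτ hLτ
  refine SchwartzMap.seminorm_le_bound ℝ k n _ (by positivity) fun x => ?_
  have leibniz := B.norm_iteratedFDeriv_le_of_bilinear (n := n) ((f τ).smooth ⊤) ((g τ).smooth ⊤)
    x (mod_cast le_top)
  calc ‖x‖ ^ k * ‖iteratedFDeriv ℝ n (SchwartzMap.pairing B (f τ) (g τ)) x‖
      ≤ ‖x‖ ^ k * (‖B‖ * ∑ i ∈ Finset.range (n + 1),
          n.choose i * ‖iteratedFDeriv ℝ i (f τ) x‖ * ‖iteratedFDeriv ℝ (n - i) (g τ) x‖) := by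
        gcongr; exact leibniz
    _ = ‖B‖ * ∑ i ∈ Finset.range (n + 1), n.choose i * (‖x‖ ^ k * ‖iteratedFDeriv ℝ i (f τ) x‖) *
          (‖x‖ ^ 0 * ‖iteratedFDeriv ℝ (n - i) (g τ) x‖) := by
        rw [mul_left_comm, Finset.mul_sum]
        exact congrArg _ (Finset.sum_congr rfl fun i _ => by ring)
    _ ≤ _ := by
        gcongr with i hi
        · exact ((SchwartzMap.le_seminorm ℝ k i (f τ) x).trans (hKτ i hi)).trans (le_abs_self _)
        · exact ((SchwartzMap.le_seminorm ℝ 0 (n - i) (g τ) x).trans (hLτ i hi)).trans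
            (le_abs_self _)

lemma decay (hf : SchwartzLocallyBoundedOn f S) {t : ℝ} (ht : t ∈ S) (r : ℝ) :
    ∃ K, 0 ≤ K ∧ ∀ᶠ τ in 𝓝[S] t, ∀ x, ‖f τ x‖ ≤ K * ⟪x⟫ ^ (-r) := by
  obtain ⟨k, hk⟩ := exists_nat_ge r
  obtain ⟨K, hK⟩ := hf.sup_seminorm_le ht (Finset.Iic (k, 0))
  refine ⟨2 ^ k * |K|, by positivity, ?_⟩
  filter_upwards [hK] with τ hτ x
  have hx := japaneseBracket_pos x
  have hxle : ⟪x⟫ ≤ 1 + ‖x‖ := sqrt_one_add_norm_sq_le x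
  have hpow : (1 + ‖x‖) ^ k * ‖f τ x‖ ≤ 2 ^ k * |K| := by
    have := SchwartzMap.one_add_le_sup_seminorm_apply (𝕜 := ℝ) (m := (k, 0)) le_rfl le_rfl (f τ) x
    rw [norm_iteratedFDeriv_zero] at this
    exact this.trans (mul_le_mul_of_nonneg_left (hτ.trans (le_abs_self K)) (by positivity))
  rw [rpow_neg hx.le, ← div_eq_mul_inv, le_div_iff₀ (by positivity), mul_comm]
  refine le_trans ?_ hpow
  gcongr
  calc ⟪x⟫ ^ r ≤ ⟪x⟫ ^ (k : ℝ) := rpow_le_rpow_of_exponent_le (one_le_japaneseBracket x) hk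
    _ = ⟪x⟫ ^ k := rpow_natCast _ _
    _ ≤ (1 + ‖x‖) ^ k := by gcongr

end SchwartzLocallyBoundedOn

end SchwartzFamilies

section WeightedInner

variable {E F : Type*} [NormedAddCommGroup E] [MeasureSpace E] [NormedAddCommGroup F]

/-- The norm of `L²(⟪ξ⟫^{2r} dξ)`; applied to a Fourier transform it is the Sobolev norm `H^r`. -/
def weightedNorm (r : ℝ) (u : E → F) : ℝ := √(∫ ξ, ⟪ξ⟫ ^ (2 * r) * ‖u ξ‖ ^ 2)

/-- The real inner product of `L²(⟪ξ⟫^{2r} dξ)`. -/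
def weightedInner [InnerProductSpace ℝ F] (r : ℝ) (u v : E → F) : ℝ :=
  ∫ ξ, ⟪ξ⟫ ^ (2 * r) * inner ℝ (u ξ) (v ξ)

lemma integral_japaneseBracket_mul_norm_sq_nonneg (r : ℝ) (u : E → F) :
    0 ≤ ∫ ξ, ⟪ξ⟫ ^ r * ‖u ξ‖ ^ 2 :=
  integral_nonneg fun ξ => mul_nonneg (rpow_nonneg (japaneseBracket_pos ξ).le _) (sq_nonneg _)

lemma weightedNorm_nonneg (r : ℝ) (u : E → F) : 0 ≤ weightedNorm r u := sqrt_nonneg _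

lemma weightedNorm_sq (r : ℝ) (u : E → F) :
    weightedNorm r u ^ 2 = ∫ ξ, ⟪ξ⟫ ^ (2 * r) * ‖u ξ‖ ^ 2 :=
  sq_sqrt (integral_japaneseBracket_mul_norm_sq_nonneg _ u)

lemma weightedInner_smul_right [InnerProductSpace ℝ F] (r c : ℝ) (u v : E → F) :
    weightedInner r u (c • v) = c * weightedInner r u v := by
  simp only [weightedInner, Pi.smul_apply, inner_smul_right, mul_left_comm _ c,
    integral_const_mul]

end WeightedInner

section WeightedIntegrability

variable {E F F' : Type*} [NormedAddCommGroup E] [NormedSpace ℝ E] [FiniteDimensional ℝ E]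
  [MeasureSpace E] [BorelSpace E] [(volume : Measure E).IsAddHaarMeasure]
  [NormedAddCommGroup F] [NormedSpace ℝ F] [NormedAddCommGroup F'] [NormedSpace ℝ F']
  {S : Set ℝ} {t : ℝ}

lemma SchwartzLocallyBoundedOn.exists_integrable_bound {f : ℝ → 𝓢(E, F)}
    (hf : SchwartzLocallyBoundedOn f S) (ht : t ∈ S) (r : ℝ) :
    ∃ B : E → ℝ, Integrable B ∧ ∀ᶠ τ in 𝓝[S] t, ∀ x, ⟪x⟫ ^ r * ‖f τ x‖ ≤ B x := by
  set d : ℝ := Module.finrank ℝ E + 1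
  obtain ⟨K, -, hK⟩ := hf.decay ht (r + d)
  refine ⟨fun x => K * ⟪x⟫ ^ (-d),
    (integrable_japaneseBracket_rpow_neg volume (lt_add_one _)).const_mul K, ?_⟩
  filter_upwards [hK] with τ hτ x
  have hx := japaneseBracket_pos x
  calc ⟪x⟫ ^ r * ‖f τ x‖ ≤ ⟪x⟫ ^ r * (K * ⟪x⟫ ^ (-(r + d))) := by gcongr; exact hτ x
    _ = K * ⟪x⟫ ^ (-d) := by
        rw [mul_left_comm, ← rpow_add hx]; ring_nf

lemma SchwartzLocallyBoundedOn.exists_integrable_bound_mul {f : ℝ → 𝓢(E, F)}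
    {g : ℝ → 𝓢(E, F')} (hf : SchwartzLocallyBoundedOn f S) (hg : SchwartzLocallyBoundedOn g S)
    (ht : t ∈ S) (r : ℝ) :
    ∃ B : E → ℝ, Integrable B ∧
      ∀ᶠ τ in 𝓝[S] t, ∀ x, ⟪x⟫ ^ r * (‖f τ x‖ * ‖g τ x‖) ≤ B x := by
  obtain ⟨B, hB, hfB⟩ := hf.exists_integrable_bound ht r
  obtain ⟨K, -, hK⟩ := hg.decay ht 0
  refine ⟨fun x => B x * K, hB.mul_const K, ?_⟩
  filter_upwards [hfB, hK] with τ hfτ hgτ x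
  have hx := japaneseBracket_pos x
  rw [← mul_assoc]
  exact mul_le_mul (hfτ x) (by simpa using hgτ x) (norm_nonneg _)
    (le_trans (by positivity) (hfτ x))

lemma integrable_japaneseBracket_mul_norm (f : 𝓢(E, F)) (r : ℝ) :
    Integrable fun x => ⟪x⟫ ^ r * ‖f x‖ := by
  obtain ⟨B, hB, hfB⟩ :=
    (SchwartzLocallyBoundedOn.const f univ).exists_integrable_bound (mem_univ 0) r
  refine hB.mono' (by fun_prop) (ae_of_all _ fun x => ?_)
  rw [norm_of_nonneg (mul_nonneg (rpow_nonneg (japaneseBracket_pos x).le _) (norm_nonneg _))]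
  exact hfB.self_of_nhdsWithin (mem_univ 0) x

lemma integrable_japaneseBracket_mul_norm_mul_norm (f : 𝓢(E, F)) (g : 𝓢(E, F')) (r : ℝ) :
    Integrable fun x => ⟪x⟫ ^ r * (‖f x‖ * ‖g x‖) := by
  obtain ⟨B, hB, hfgB⟩ := (SchwartzLocallyBoundedOn.const f univ).exists_integrable_bound_mul
    (.const g univ) (mem_univ 0) r
  refine hB.mono' (by fun_prop) (ae_of_all _ fun x => ?_)
  have hx := rpow_pos_of_pos (japaneseBracket_pos x) r
  rw [norm_of_nonneg (by positivity)]
  exact hfgB.self_of_nhdsWithin (mem_univ 0) x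

lemma integrable_japaneseBracket_mul_norm_sq (u : 𝓢(E, F)) (r : ℝ) :
    Integrable fun ξ => ⟪ξ⟫ ^ r * ‖u ξ‖ ^ 2 := by
  simpa only [sq] using integrable_japaneseBracket_mul_norm_mul_norm u u r

lemma integrable_japaneseBracket_mul_inner {H : Type*} [NormedAddCommGroup H]
    [InnerProductSpace ℝ H] (f g : 𝓢(E, H)) (r : ℝ) :
    Integrable fun x => ⟪x⟫ ^ r * inner ℝ (f x) (g x) := by
  refine (integrable_japaneseBracket_mul_norm_mul_norm f g r).mono' (by fun_prop)
    (ae_of_all _ fun x => ?_)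
  have hx := rpow_pos_of_pos (japaneseBracket_pos x) r
  rw [norm_mul, norm_of_nonneg hx.le]
  exact mul_le_mul_of_nonneg_left (norm_inner_le_norm _ _) hx.le

lemma continuousOn_weightedNorm_sq {u : ℝ → 𝓢(E, F)} (hu : SchwartzLocallyBoundedOn u S)
    (hcont : ∀ ξ, ContinuousOn (fun τ => u τ ξ) S) (r : ℝ) :
    ContinuousOn (fun τ => weightedNorm r (u τ) ^ 2) S := fun t ht => by
  simp only [weightedNorm_sq]
  obtain ⟨B, hB, huB⟩ := hu.exists_integrable_bound_mul hu ht (2 * r)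
  refine continuousWithinAt_of_dominated (bound := B) (.of_forall fun τ => by fun_prop) ?_ hB
    (ae_of_all _ fun ξ => continuousWithinAt_const.mul ((hcont ξ t ht).norm.pow 2))
  filter_upwards [huB] with τ hτ
  refine ae_of_all _ fun ξ => ?_
  have hξ := japaneseBracket_pos ξ
  rw [norm_of_nonneg (by positivity), sq]
  exact hτ ξ

end WeightedIntegrability

section WeightedInnerSchwartz

variable {E H : Type*} [NormedAddCommGroup E] [NormedSpace ℝ E] [FiniteDimensional ℝ E]
  [MeasureSpace E] [BorelSpace E] [(volume : Measure E).IsAddHaarMeasure]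
  [NormedAddCommGroup H] [InnerProductSpace ℝ H] {S : Set ℝ} {t : ℝ} {u u' : ℝ → 𝓢(E, H)}

lemma weightedInner_sub_right (r : ℝ) (u v w : 𝓢(E, H)) :
    weightedInner r u (v - w) = weightedInner r u v - weightedInner r u w := by
  simp only [weightedInner, Pi.sub_apply, inner_sub_right, mul_sub]
  exact integral_sub (integrable_japaneseBracket_mul_inner u v _)
    (integrable_japaneseBracket_mul_inner u w _)

lemma hasDerivAt_weightedNorm_sq (hS : IsOpen S) (hu : SchwartzLocallyBoundedOn u S)
    (hu' : SchwartzLocallyBoundedOn u' S)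
    (hderiv : ∀ τ ∈ S, ∀ ξ, HasDerivAt (fun σ => u σ ξ) (u' τ ξ) τ) (ht : t ∈ S) (r : ℝ) :
    HasDerivAt (fun τ => weightedNorm r (u τ) ^ 2) (2 * weightedInner r (u t) (u' t)) t := by
  simp only [weightedNorm_sq, weightedInner, ← integral_const_mul, mul_left_comm (2 : ℝ)]
  obtain ⟨B, hB, huB⟩ := hu.exists_integrable_bound_mul hu' ht (2 * r)
  rw [hS.nhdsWithin_eq ht] at huB
  refine (hasDerivAt_integral_of_dominated_loc_of_deriv_le (bound := fun ξ => 2 * B ξ)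
    (F' := fun τ ξ => ⟪ξ⟫ ^ (2 * r) * (2 * inner ℝ (u τ ξ) (u' τ ξ)))
    (inter_mem huB (hS.mem_nhds ht)) (.of_forall fun τ => by fun_prop)
    (integrable_japaneseBracket_mul_norm_sq (u t) _) (by fun_prop)
    (ae_of_all _ fun ξ τ hτ => ?_) (hB.const_mul 2) (ae_of_all _ fun ξ τ hτ => ?_)).2
  · have hξ := japaneseBracket_pos ξ
    calc ‖⟪ξ⟫ ^ (2 * r) * (2 * inner ℝ (u τ ξ) (u' τ ξ))‖
        = 2 * (⟪ξ⟫ ^ (2 * r) * ‖inner ℝ (u τ ξ) (u' τ ξ)‖) := by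
          rw [norm_mul, norm_mul, norm_of_nonneg (by positivity : 0 ≤ ⟪ξ⟫ ^ (2 * r)), norm_two]
          ring
      _ ≤ 2 * (⟪ξ⟫ ^ (2 * r) * (‖u τ ξ‖ * ‖u' τ ξ‖)) := by
          gcongr; exact norm_inner_le_norm _ _
      _ ≤ 2 * B ξ := by gcongr; exact hτ.1 ξ
  · exact (hderiv τ hτ.2 ξ).norm_sq.const_mul _

end WeightedInnerSchwartz

section FourierTimeDependence

variable {E F : Type*} [NormedAddCommGroup E] [InnerProductSpace ℝ E] [FiniteDimensional ℝ E]
  [MeasurableSpace E] [BorelSpace E] [NormedAddCommGroup F] [NormedSpace ℂ F]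
  {S : Set ℝ} {t : ℝ} {f f' : ℝ → 𝓢(E, F)}

lemma integrable_fourierChar_smul (f : 𝓢(E, F)) (ξ : E) :
    Integrable fun x => 𝐞 (-inner ℝ x ξ) • f x :=
  (Real.fourierIntegral_convergent_iff ξ).2 f.integrable

lemma continuousOn_fourier (hf : SchwartzLocallyBoundedOn f S)
    (hcont : ∀ x, ContinuousOn (fun τ => f τ x) S) (ξ : E) :
    ContinuousOn (fun τ => 𝓕 (f τ) ξ) S := fun t ht => by
  simp only [fourier_coe, Real.fourier_eq]
  obtain ⟨B, hB, hfB⟩ := hf.exists_integrable_bound ht 0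
  refine continuousWithinAt_of_dominated (bound := B)
    (.of_forall fun τ => (integrable_fourierChar_smul (f τ) ξ).aestronglyMeasurable) ?_ hB
    (ae_of_all _ fun x => (hcont x t ht).const_smul _)
  filter_upwards [hfB] with τ hτ
  exact ae_of_all _ fun x => by simpa using hτ x

lemma hasDerivAt_fourier (hS : IsOpen S) (hf' : SchwartzLocallyBoundedOn f' S)
    (hderiv : ∀ τ ∈ S, ∀ x, HasDerivAt (fun σ => f σ x) (f' τ x) τ) (ht : t ∈ S) (ξ : E) :
    HasDerivAt (fun τ => 𝓕 (f τ) ξ) (𝓕 (f' t) ξ) t := by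
  simp only [fourier_coe, Real.fourier_eq]
  obtain ⟨B, hB, hfB⟩ := hf'.exists_integrable_bound ht 0
  rw [hS.nhdsWithin_eq ht] at hfB
  refine (hasDerivAt_integral_of_dominated_loc_of_deriv_le (bound := B)
    (F' := fun τ x => 𝐞 (-inner ℝ x ξ) • f' τ x) (inter_mem hfB (hS.mem_nhds ht))
    (.of_forall fun τ => (integrable_fourierChar_smul (f τ) ξ).aestronglyMeasurable)
    (integrable_fourierChar_smul (f t) ξ)
    (integrable_fourierChar_smul (f' t) ξ).aestronglyMeasurable
    (ae_of_all _ fun x τ hτ => by simpa using hτ.1 x) hB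
    (ae_of_all _ fun x τ hτ => (hderiv τ hτ.2 x).const_smul _)).2

end FourierTimeDependence

section WeightedModulus

variable {E F : Type*} [NormedAddCommGroup E] [NormedAddCommGroup F]

/-- The function `⟪ξ⟫^r ‖u ξ‖` with values in `[0, ∞]`, the form in which Young's inequality
applies to it. -/
def weightedModulus (r : ℝ) (u : E → F) (ξ : E) : ℝ≥0∞ := ENNReal.ofReal (⟪ξ⟫ ^ r * ‖u ξ‖)

variable [NormedSpace ℝ E] [NormedSpace ℝ F] [MeasureSpace E] [BorelSpace E]

lemma measurable_weightedModulus (r : ℝ) (u : 𝓢(E, F)) : Measurable (weightedModulus r u) :=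
  Continuous.measurable (ENNReal.continuous_ofReal.comp (by fun_prop))

variable [FiniteDimensional ℝ E] [(volume : Measure E).IsAddHaarMeasure]

lemma eLpNorm_weightedModulus (r : ℝ) (u : 𝓢(E, F)) :
    eLpNorm (weightedModulus r u) 2 volume = ENNReal.ofReal (weightedNorm r u) := by
  have hsq (ξ : E) : ‖weightedModulus r u ξ‖ₑ ^ (2 : ℝ)
      = ENNReal.ofReal (⟪ξ⟫ ^ (2 * r) * ‖u ξ‖ ^ 2) := by
    have hξ := japaneseBracket_pos ξ
    rw [enorm_eq_self, weightedModulus, ENNReal.ofReal_rpow_of_nonneg (by positivity) zero_le_two,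
      rpow_two, rpow_two_mul hξ]
    ring_nf
  rw [eLpNorm_eq_lintegral_rpow_enorm_toReal two_ne_zero ENNReal.ofNat_ne_top,
    ENNReal.toReal_ofNat, lintegral_congr hsq,
    ← ofReal_integral_eq_lintegral_ofReal (integrable_japaneseBracket_mul_norm_sq u _)
      (ae_of_all _ fun ξ => mul_nonneg (rpow_nonneg (japaneseBracket_pos ξ).le _) (sq_nonneg _)),
    ENNReal.ofReal_rpow_of_nonneg (integral_japaneseBracket_mul_norm_sq_nonneg _ _) (by norm_num),
    weightedNorm, sqrt_eq_rpow]

lemma memLp_two_japaneseBracket_rpow_neg {r : ℝ} (hr : Module.finrank ℝ E < 2 * r) :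
    MemLp (fun ξ : E => ⟪ξ⟫ ^ (-r)) 2 := by
  refine (memLp_two_iff_integrable_sq
    (continuous_japaneseBracket_rpow _).aestronglyMeasurable).2
    ((integrable_japaneseBracket_rpow_neg volume hr).congr (ae_of_all _ fun ξ => ?_))
  simp only [← rpow_mul_natCast (japaneseBracket_pos ξ).le, Nat.cast_ofNat, neg_mul, mul_comm r]

lemma exists_lintegral_weightedModulus_le {r : ℝ} (hr : Module.finrank ℝ E < 2 * r) :
    ∃ K, 0 ≤ K ∧ ∀ (q : ℝ) (u : 𝓢(E, F)),
      ∫⁻ ξ, weightedModulus q u ξ ≤ ENNReal.ofReal (K * weightedNorm (q + r) u) := by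
  have hmem := memLp_two_japaneseBracket_rpow_neg hr
  refine ⟨(eLpNorm (fun ξ : E => ⟪ξ⟫ ^ (-r)) 2).toReal, ENNReal.toReal_nonneg, fun q u => ?_⟩
  rw [ENNReal.ofReal_mul ENNReal.toReal_nonneg, ENNReal.ofReal_toReal hmem.2.ne,
    ← eLpNorm_weightedModulus, ← eLpNorm_enorm]
  refine le_trans (lintegral_mono fun ξ => ?_) (lintegral_mul_le_eLpNorm_two_mul
    hmem.1.enorm (measurable_weightedModulus (q + r) u).aemeasurable)
  have hξ := japaneseBracket_pos ξ
  rw [enorm_eq_ofReal (by positivity), weightedModulus, weightedModulus,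
    ← ENNReal.ofReal_mul (by positivity), ← mul_assoc, ← rpow_add hξ, neg_add_cancel_comm_assoc]

end WeightedModulus

section WedgeForm

/-- The integrand `(ξ ∧ η) Re (conj (w ξ) u(ξ - η) v(η))` of the trilinear form
`(u, v, w) ↦ ⟨{f, g}, h⟩`, where `u`, `v`, `w` are the Fourier transforms of `f`, `g`, `h`. -/
def wedgeForm (u v w : Plane → ℂ) (ξ η : Plane) : ℝ :=
  wedge ξ η * inner ℝ (w ξ) (u (ξ - η) * v η)

lemma abs_wedgeForm_le (u v w : Plane → ℂ) (ξ η : Plane) :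
    |wedgeForm u v w ξ η| ≤ |wedge ξ η| * (‖u (ξ - η)‖ * ‖v η‖ * ‖w ξ‖) := by
  rw [wedgeForm, abs_mul]
  gcongr
  calc _ ≤ ‖w ξ‖ * ‖u (ξ - η) * v η‖ := abs_real_inner_le_norm _ _
    _ = _ := by rw [norm_mul, mul_comm]

lemma wedgeForm_swap {u : Plane → ℂ} (hu : ∀ ξ, u (-ξ) = conj (u ξ)) (v w : Plane → ℂ)
    (ξ η : Plane) : wedgeForm u w v η ξ = -wedgeForm u v w ξ η := by
  rw [wedgeForm, wedgeForm, wedge_swap, ← neg_sub ξ η, hu, neg_mul]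
  simp only [Complex.inner, Complex.mul_re, Complex.mul_im, Complex.conj_re,
    Complex.conj_im]
  ring

lemma integrable_mul_wedgeForm (u v w : 𝓢(Plane, ℂ)) {c : Plane × Plane → ℝ}
    (hc : Continuous c) {q r : ℝ} (hcqr : ∀ p, |c p| ≤ ⟪p.1⟫ ^ q * ⟪p.2⟫ ^ r) :
    Integrable fun p : Plane × Plane => c p * wedgeForm u v w p.1 p.2 := by
  have hdom : Integrable fun p : Plane × Plane => SchwartzMap.seminorm ℝ 0 0 u *
      (⟪p.1⟫ ^ (q + 1) * ‖w p.1‖ * (⟪p.2⟫ ^ (r + 1) * ‖v p.2‖)) :=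
    ((integrable_japaneseBracket_mul_norm w _).mul_prod
      (integrable_japaneseBracket_mul_norm v _)).const_mul _
  refine hdom.mono' ?_ (ae_of_all _ fun ⟨ξ, η⟩ => ?_)
  · unfold wedgeForm
    have := continuous_wedge
    exact Continuous.aestronglyMeasurable (by fun_prop)
  have hξ := japaneseBracket_pos ξ
  have hη := japaneseBracket_pos η
  calc ‖c (ξ, η) * wedgeForm u v w ξ η‖
      ≤ (⟪ξ⟫ ^ q * ⟪η⟫ ^ r) * ((⟪ξ⟫ * ⟪η⟫) * (SchwartzMap.seminorm ℝ 0 0 u * ‖v η‖ * ‖w ξ‖)) := by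
        rw [norm_mul]
        refine mul_le_mul (hcqr _) ((abs_wedgeForm_le _ _ _ _ _).trans ?_) (norm_nonneg _)
          (by positivity)
        gcongr
        · exact abs_wedge_le_japaneseBracket ξ η
        · exact norm_le_seminorm ℝ u _
    _ = _ := by rw [rpow_add_one hξ.ne', rpow_add_one hη.ne']; ring

lemma enorm_mul_wedgeForm_le {s : ℝ} (hs : 1 / 2 ≤ s) (u v w : Plane → ℂ) (ξ η : Plane) :
    ‖(‖ξ‖ ^ 2 * ⟪η⟫ ^ (2 * s) - ⟪ξ⟫ ^ (2 * s + 2)) * wedgeForm u v w ξ η‖ₑ ≤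
      ENNReal.ofReal (2 ^ s * (2 * s + 1)) *
        (weightedModulus 2 u (ξ - η) * weightedModulus s v η * weightedModulus (s + 2) w ξ +
          weightedModulus (s + 1) u (ξ - η) * weightedModulus 1 v η *
            weightedModulus (s + 2) w ξ +
          weightedModulus (s + 1) u (ξ - η) * weightedModulus s v η * weightedModulus 3 w ξ) := by
  have hξ := japaneseBracket_pos ξ
  have hη := japaneseBracket_pos η
  have hξη := japaneseBracket_pos (ξ - η)
  simp only [weightedModulus]
  rw [← ENNReal.ofReal_mul (by positivity), ← ENNReal.ofReal_mul (by positivity),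
    ← ENNReal.ofReal_mul (by positivity), ← ENNReal.ofReal_mul (by positivity),
    ← ENNReal.ofReal_mul (by positivity), ← ENNReal.ofReal_mul (by positivity),
    ← ENNReal.ofReal_add (by positivity) (by positivity),
    ← ENNReal.ofReal_add (by positivity) (by positivity),
    ← ENNReal.ofReal_mul (by positivity), ← ofReal_norm, norm_mul, norm_eq_abs,
    norm_eq_abs]
  refine ENNReal.ofReal_le_ofReal ?_
  calc |‖ξ‖ ^ 2 * ⟪η⟫ ^ (2 * s) - ⟪ξ⟫ ^ (2 * s + 2)| * |wedgeForm u v w ξ η|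
      ≤ |‖ξ‖ ^ 2 * ⟪η⟫ ^ (2 * s) - ⟪ξ⟫ ^ (2 * s + 2)| *
          (|wedge ξ η| * (‖u (ξ - η)‖ * ‖v η‖ * ‖w ξ‖)) := by
        gcongr; exact abs_wedgeForm_le u v w ξ η
    _ = (|wedge ξ η| * |‖ξ‖ ^ 2 * ⟪η⟫ ^ (2 * s) - ⟪ξ⟫ ^ (2 * s + 2)|) *
          (‖u (ξ - η)‖ * ‖v η‖ * ‖w ξ‖) := by ring
    _ ≤ _ := mul_le_mul_of_nonneg_right (abs_wedge_mul_abs_sub_le hs ξ η) (by positivity)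
    _ = _ := by ring

lemma exists_lintegral_weightedModulus_sub_mul_mul_le {s : ℝ} (hs : 2 < s) :
    ∃ K, 0 ≤ K ∧ ∀ u v w : 𝓢(Plane, ℂ),
      ∫⁻ ξ, ∫⁻ η, (weightedModulus 2 u (ξ - η) * weightedModulus s v η *
            weightedModulus (s + 2) w ξ +
          weightedModulus (s + 1) u (ξ - η) * weightedModulus 1 v η *
            weightedModulus (s + 2) w ξ +
          weightedModulus (s + 1) u (ξ - η) * weightedModulus s v η * weightedModulus 3 w ξ) ≤
        ENNReal.ofReal (K * (weightedNorm (s + 1) u * weightedNorm s v *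
          weightedNorm (s + 2) w)) := by
  have hdim : (Module.finrank ℝ Plane : ℝ) < 2 * (s - 1) := by
    rw [finrank_euclideanSpace_fin]; push_cast; linarith
  obtain ⟨K, hK₀, hK⟩ := exists_lintegral_weightedModulus_le (F := ℂ) hdim
  refine ⟨3 * K, by positivity, fun u v w => ?_⟩
  have hu := weightedNorm_nonneg (s + 1) u
  have hv := weightedNorm_nonneg s v
  have hKu : ∫⁻ ξ, weightedModulus 2 u ξ ≤ ENNReal.ofReal (K * weightedNorm (s + 1) u) := by
    convert hK 2 u using 4; ring
  have hKv : ∫⁻ ξ, weightedModulus 1 v ξ ≤ ENNReal.ofReal (K * weightedNorm s v) := by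
    convert hK 1 v using 4; ring
  have hKw : ∫⁻ ξ, weightedModulus 3 w ξ ≤ ENNReal.ofReal (K * weightedNorm (s + 2) w) := by
    convert hK 3 w using 4; ring
  have hmeas (r : ℝ) (f : 𝓢(Plane, ℂ)) := measurable_weightedModulus r f
  have young_left := lintegral_lintegral_sub_mul_mul_le_of_L1_left (ν := volume)
    (hmeas 2 u) (hmeas s v) (hmeas (s + 2) w)
  have young_right := lintegral_lintegral_sub_mul_mul_le_of_L1_right (ν := volume)
    (hmeas (s + 1) u) (hmeas 1 v) (hmeas (s + 2) w)
  have young_outer := lintegral_lintegral_sub_mul_mul_le_of_L1_outer (ν := volume)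
    (hmeas (s + 1) u) (hmeas s v) (hmeas 3 w)
  simp only [eLpNorm_weightedModulus] at young_left young_right young_outer
  rw [lintegral_congr fun ξ => lintegral_add_left (by fun_prop) _,
    lintegral_add_left (by fun_prop),
    lintegral_congr fun ξ => lintegral_add_left (by fun_prop) _,
    lintegral_add_left (by fun_prop)]
  calc _ ≤ ENNReal.ofReal (K * weightedNorm (s + 1) u) * ENNReal.ofReal (weightedNorm s v) *
          ENNReal.ofReal (weightedNorm (s + 2) w) +
        ENNReal.ofReal (weightedNorm (s + 1) u) * ENNReal.ofReal (K * weightedNorm s v) *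
          ENNReal.ofReal (weightedNorm (s + 2) w) +
        ENNReal.ofReal (weightedNorm (s + 1) u) * ENNReal.ofReal (weightedNorm s v) *
          ENNReal.ofReal (K * weightedNorm (s + 2) w) := by
        refine add_le_add (add_le_add (young_left.trans ?_) (young_right.trans ?_))
          (young_outer.trans ?_) <;> gcongr
    _ = _ := by
        simp only [ENNReal.ofReal_mul, hK₀, mul_nonneg, hu, hv, zero_le_three, ENNReal.ofReal_ofNat]
        ring

lemma exists_abs_integral_mul_wedgeForm_le {s : ℝ} (hs : 2 < s) :
    ∃ C, 0 ≤ C ∧ ∀ u v w : 𝓢(Plane, ℂ),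
      |∫ ξ, ∫ η, (‖ξ‖ ^ 2 * ⟪η⟫ ^ (2 * s) - ⟪ξ⟫ ^ (2 * s + 2)) * wedgeForm u v w ξ η| ≤
        C * (weightedNorm (s + 1) u * weightedNorm s v * weightedNorm (s + 2) w) := by
  obtain ⟨K, hK₀, hK⟩ := exists_lintegral_weightedModulus_sub_mul_mul_le hs
  have hc : 0 ≤ 2 ^ s * (2 * s + 1) := by positivity
  refine ⟨2 ^ s * (2 * s + 1) * K, by positivity, fun u v w => ?_⟩
  have hu := weightedNorm_nonneg (s + 1) u
  have hv := weightedNorm_nonneg s v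
  have hw := weightedNorm_nonneg (s + 2) w
  rw [← ENNReal.ofReal_le_ofReal_iff (by positivity), ← norm_eq_abs, ofReal_norm, mul_assoc,
    ENNReal.ofReal_mul hc]
  refine (enorm_integral_le_lintegral_enorm _).trans <| (lintegral_mono fun ξ =>
    (enorm_integral_le_lintegral_enorm _).trans <| lintegral_mono fun η =>
      enorm_mul_wedgeForm_le (by linarith) u v w ξ η).trans ?_
  simp only [lintegral_const_mul' _ _ ENNReal.ofReal_ne_top]
  gcongr
  exact hK u v w

end WedgeForm

section RealFourier

open scoped Laplacian LineDeriv

lemma postcompCLM_lineDerivOp {E F G : Type*} [NormedAddCommGroup E] [NormedSpace ℝ E]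
    [NormedAddCommGroup F] [NormedSpace ℝ F] [NormedAddCommGroup G]
    [NormedSpace ℝ G] (L : F →L[ℝ] G) (f : 𝓢(E, F)) (m : E) :
    SchwartzMap.postcompCLM L (∂_{m} f) = ∂_{m} (SchwartzMap.postcompCLM L f) := by
  ext x
  have hL : HasFDerivAt (SchwartzMap.postcompCLM L f) (L ∘L fderiv ℝ f x) x :=
    L.hasFDerivAt.comp x f.differentiableAt.hasFDerivAt
  rw [SchwartzMap.lineDerivOp_apply_eq_fderiv, hL.fderiv, SchwartzMap.postcompCLM_apply,
    SchwartzMap.lineDerivOp_apply_eq_fderiv, ContinuousLinearMap.comp_apply]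

variable {E : Type*} [NormedAddCommGroup E] [InnerProductSpace ℝ E] [FiniteDimensional ℝ E]
  [MeasurableSpace E] [BorelSpace E]

/-- The Fourier transform `f̂` of a real Schwartz function, as a map of Schwartz spaces. -/
def realFourier : 𝓢(E, ℝ) →L[ℝ] 𝓢(E, ℂ) :=
  FourierTransform.fourierCLM ℝ 𝓢(E, ℂ) ∘L SchwartzMap.postcompCLM Complex.ofRealCLM

lemma coe_realFourier (f : 𝓢(E, ℝ)) : ⇑(realFourier f) = 𝓕 fun x => (f x : ℂ) := rfl

lemma realFourier_apply_neg (f : 𝓢(E, ℝ)) (ξ : E) :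
    realFourier f (-ξ) = conj (realFourier f ξ) := by
  rw [coe_realFourier, Real.fourier_eq, Real.fourier_eq, ← integral_conj]
  congr with x
  simp [Circle.smul_def, Real.fourierChar_apply, ← Complex.exp_conj, Complex.conj_ofNat]

lemma realFourier_lineDerivOp (f : 𝓢(E, ℝ)) (m ξ : E) :
    realFourier (∂_{m} f) ξ = 2 * π * Complex.I * inner ℝ ξ m * realFourier f ξ := by
  have hm : (inner ℝ · m : E → ℝ).HasTemperateGrowth := by fun_prop
  have h : realFourier (∂_{m} f) = 𝓕 (∂_{m} (SchwartzMap.postcompCLM Complex.ofRealCLM f)) := by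
    rw [← postcompCLM_lineDerivOp]; rfl
  rw [h, SchwartzMap.fourier_lineDerivOp_eq, smul_apply, SchwartzMap.smulLeftCLM_apply_apply hm,
    smul_eq_mul, Complex.real_smul, ← mul_assoc]
  rfl

lemma realFourier_laplacian (f : 𝓢(E, ℝ)) (ξ : E) :
    realFourier (Δ f) ξ = -((2 * π) ^ 2 * ‖ξ‖ ^ 2 : ℝ) * realFourier f ξ := by
  set b := stdOrthonormalBasis ℝ E
  have hb : ∑ i, ((inner ℝ ξ (b i) : ℝ) : ℂ) ^ 2 = (‖ξ‖ : ℂ) ^ 2 := by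
    exact_mod_cast b.sum_sq_inner_left ξ
  rw [SchwartzMap.laplacian_eq_sum b, map_sum, sum_apply]
  simp only [realFourier_lineDerivOp]
  calc _ = ∑ i, (2 * π * Complex.I) ^ 2 * realFourier f ξ * (inner ℝ ξ (b i) : ℂ) ^ 2 :=
        Finset.sum_congr rfl fun i _ => by ring
    _ = (2 * π * Complex.I) ^ 2 * realFourier f ξ * (‖ξ‖ : ℂ) ^ 2 := by rw [← Finset.mul_sum, hb]
    _ = _ := by
        rw [mul_pow, Complex.I_sq]
        push_cast
        ring

lemma integrable_sub_mul (f g : 𝓢(E, ℂ)) (ξ : E) : Integrable fun η => f (ξ - η) * g η :=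
  g.integrable.bdd_mul (c := SchwartzMap.seminorm ℝ 0 0 f)
    (by have := f.continuous; exact Continuous.aestronglyMeasurable (by fun_prop))
    (ae_of_all _ fun η => SchwartzMap.norm_le_seminorm ℝ f (ξ - η))

lemma fourier_pairing_mul (f g : 𝓢(E, ℂ)) (ξ : E) :
    𝓕 (SchwartzMap.pairing (ContinuousLinearMap.mul ℂ ℂ) f g) ξ =
      ∫ η, 𝓕 f (ξ - η) * 𝓕 g η := by
  set H := SchwartzMap.convolution (ContinuousLinearMap.mul ℂ ℂ) (𝓕 g) (𝓕 f) with hH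
  have hinv : 𝓕⁻ H = SchwartzMap.pairing (ContinuousLinearMap.mul ℂ ℂ) f g := by
    ext x
    have hneg (h : 𝓢(E, ℂ)) : 𝓕⁻ h x = 𝓕 h (-x) := by
      rw [SchwartzMap.fourierInv_coe, Real.fourierInv_eq_fourier_neg, SchwartzMap.fourier_coe]
    rw [hneg, hH, SchwartzMap.fourier_convolution, SchwartzMap.pairing_apply_apply, ← hneg,
      ← hneg]
    simp [mul_comm]
  rw [← hinv, FourierTransform.fourier_fourierInv_eq, hH, SchwartzMap.convolution_apply,
    convolution_def]
  simp [mul_comm]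

lemma realFourier_pairing_mul (f g : 𝓢(E, ℝ)) (ξ : E) :
    realFourier (SchwartzMap.pairing (ContinuousLinearMap.mul ℝ ℝ) f g) ξ =
      ∫ η, realFourier f (ξ - η) * realFourier g η := by
  have h : SchwartzMap.postcompCLM Complex.ofRealCLM
      (SchwartzMap.pairing (ContinuousLinearMap.mul ℝ ℝ) f g) =
        SchwartzMap.pairing (ContinuousLinearMap.mul ℂ ℂ)
          (SchwartzMap.postcompCLM Complex.ofRealCLM f)
          (SchwartzMap.postcompCLM Complex.ofRealCLM g) := by
    ext x; simp
  exact (congrArg (fun u : 𝓢(E, ℂ) => 𝓕 u ξ) h).trans (fourier_pairing_mul _ _ ξ)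

end RealFourier

section PoissonBracket

open scoped Laplacian LineDeriv

/-- The partial derivative `∂ₓ` (`i = 0`) or `∂_y` (`i = 1`) as an operator on Schwartz
functions. -/
def partialDeriv (i : Fin 2) : 𝓢(Plane, ℝ) →L[ℝ] 𝓢(Plane, ℝ) :=
  LineDeriv.lineDerivOpCLM ℝ 𝓢(Plane, ℝ) (EuclideanSpace.single i (1 : ℝ))

lemma realFourier_partialDeriv (i : Fin 2) (f : 𝓢(Plane, ℝ)) (ξ : Plane) :
    realFourier (partialDeriv i f) ξ = 2 * π * Complex.I * ξ i * realFourier f ξ := by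
  refine (realFourier_lineDerivOp f _ ξ).trans ?_
  simp [EuclideanSpace.inner_single_right]

lemma lap_eq_laplacian (f : 𝓢(Plane, ℝ)) : lap f = ⇑(Δ f : 𝓢(Plane, ℝ)) := by
  ext x
  rw [SchwartzMap.laplacian_eq_sum (EuclideanSpace.basisFun (Fin 2) ℝ), Fin.sum_univ_two]
  simp only [EuclideanSpace.basisFun_apply]
  rfl

/-- The Poisson bracket `{f, g} = ∂_y f ∂ₓ g - ∂ₓ f ∂_y g`, with the sign of the electron MHD
nonlinearities: the system reads `∂ₜ a = μ Δ a - {a, b}`, `∂ₜ b = {a, Δ a}`. -/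
def poissonBracket (f g : 𝓢(Plane, ℝ)) : 𝓢(Plane, ℝ) :=
  SchwartzMap.pairing (.mul ℝ ℝ) (partialDeriv 1 f) (partialDeriv 0 g) -
    SchwartzMap.pairing (.mul ℝ ℝ) (partialDeriv 0 f) (partialDeriv 1 g)

lemma poissonBracket_apply (f g : 𝓢(Plane, ℝ)) (x : Plane) :
    poissonBracket f g x = pd 1 f x * pd 0 g x - pd 0 f x * pd 1 g x := rfl

lemma realFourier_partialDeriv_mul_sub (f g : 𝓢(Plane, ℝ)) (ξ η : Plane) :
    realFourier (partialDeriv 1 f) (ξ - η) * realFourier (partialDeriv 0 g) η -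
        realFourier (partialDeriv 0 f) (ξ - η) * realFourier (partialDeriv 1 g) η =
      ((2 * π) ^ 2 * wedge ξ η : ℝ) • (realFourier f (ξ - η) * realFourier g η) := by
  simp only [realFourier_partialDeriv, PiLp.sub_apply, wedge, Complex.real_smul]
  push_cast
  linear_combination (4 * π ^ 2 * ((ξ 1 - η 1 : ℂ) * η 0 - (ξ 0 - η 0) * η 1) *
    realFourier f (ξ - η) * realFourier g η) * Complex.I_sq

lemma integrable_wedge_smul_realFourier_mul (f g : 𝓢(Plane, ℝ)) (ξ : Plane) :
    Integrable fun η =>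
      ((2 * π) ^ 2 * wedge ξ η : ℝ) • (realFourier f (ξ - η) * realFourier g η) := by
  simp only [← realFourier_partialDeriv_mul_sub]
  exact (integrable_sub_mul _ _ ξ).sub (integrable_sub_mul _ _ ξ)

lemma realFourier_poissonBracket (f g : 𝓢(Plane, ℝ)) (ξ : Plane) :
    realFourier (poissonBracket f g) ξ =
      ∫ η, ((2 * π) ^ 2 * wedge ξ η : ℝ) • (realFourier f (ξ - η) * realFourier g η) := by
  rw [poissonBracket, map_sub, sub_apply, realFourier_pairing_mul, realFourier_pairing_mul,
    ← integral_sub (integrable_sub_mul _ _ _) (integrable_sub_mul _ _ _)]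
  simp only [realFourier_partialDeriv_mul_sub]

lemma SchwartzLocallyBoundedOn.poissonBracket {f g : ℝ → 𝓢(Plane, ℝ)} {S : Set ℝ}
    (hf : SchwartzLocallyBoundedOn f S) (hg : SchwartzLocallyBoundedOn g S) :
    SchwartzLocallyBoundedOn (fun t => poissonBracket (f t) (g t)) S :=
  ((hf.clm_comp (partialDeriv 1)).pairing _ (hg.clm_comp (partialDeriv 0))).sub
    ((hf.clm_comp (partialDeriv 0)).pairing _ (hg.clm_comp (partialDeriv 1)))

end PoissonBracket

lemma integrable_japaneseBracket_mul_wedgeForm (r : ℝ) (u v w : 𝓢(Plane, ℂ)) :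
    Integrable fun p : Plane × Plane => ⟪p.1⟫ ^ r * wedgeForm u v w p.1 p.2 := by
  refine integrable_mul_wedgeForm u v w (q := r) (r := 0)
    ((continuous_japaneseBracket_rpow r).comp continuous_fst) fun p => ?_
  rw [rpow_zero, mul_one, abs_of_pos (rpow_pos_of_pos (japaneseBracket_pos _) _)]

lemma integrable_norm_sq_mul_japaneseBracket_mul_wedgeForm (r : ℝ) (u v w : 𝓢(Plane, ℂ)) :
    Integrable fun p : Plane × Plane =>
      ‖p.1‖ ^ 2 * ⟪p.2⟫ ^ r * wedgeForm u v w p.1 p.2 := by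
  refine integrable_mul_wedgeForm u v w (q := 2) (r := r) ((continuous_fst.norm.pow 2).mul
    ((continuous_japaneseBracket_rpow r).comp continuous_snd)) fun p => ?_
  have := japaneseBracket_pos p.2
  rw [abs_of_nonneg (by positivity), rpow_two]
  gcongr
  exact norm_le_japaneseBracket p.1

section EnergyEstimate

open scoped Laplacian

lemma sobNorm_eq_weightedNorm (s : ℝ) (f : 𝓢(Plane, ℝ)) :
    sobNorm s f = weightedNorm s (realFourier f) := by
  simp only [sobNorm, weightedNorm, sqrt_eq_rpow, one_add_norm_sq_rpow, coe_realFourier]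

/-- The inner product of the real Sobolev space `H^s`, on Schwartz functions. -/
def sobolevInner (s : ℝ) (f g : 𝓢(Plane, ℝ)) : ℝ :=
  weightedInner s (realFourier f) (realFourier g)

lemma sobolevInner_smul_right (s c : ℝ) (f g : 𝓢(Plane, ℝ)) :
    sobolevInner s f (c • g) = c * sobolevInner s f g := by
  rw [sobolevInner, map_smul, sobolevInner, ← weightedInner_smul_right]; rfl

lemma sobolevInner_sub_right (s : ℝ) (f g h : 𝓢(Plane, ℝ)) :
    sobolevInner s f (g - h) = sobolevInner s f g - sobolevInner s f h := by
  rw [sobolevInner, map_sub, sobolevInner, sobolevInner, ← weightedInner_sub_right]; rfl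

lemma sobolevInner_laplacian (s : ℝ) (f : 𝓢(Plane, ℝ)) :
    sobolevInner s f (Δ f) = -((2 * π) ^ 2 * (sobNorm (s + 1) f ^ 2 - sobNorm s f ^ 2)) := by
  rw [sobNorm_eq_weightedNorm, sobNorm_eq_weightedNorm, weightedNorm_sq, weightedNorm_sq,
    ← integral_sub (integrable_japaneseBracket_mul_norm_sq _ _)
      (integrable_japaneseBracket_mul_norm_sq _ _), ← integral_const_mul, ← integral_neg,
    sobolevInner, weightedInner]
  congr with ξ
  have hweight : ⟪ξ⟫ ^ (2 * (s + 1)) = ⟪ξ⟫ ^ (2 * s) * (1 + ‖ξ‖ ^ 2) := by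
    rw [mul_add, mul_one, rpow_add (japaneseBracket_pos ξ), rpow_two, japaneseBracket_sq]
  rw [realFourier_laplacian, ← Complex.ofReal_neg, ← Complex.real_smul, inner_smul_right,
    real_inner_self_eq_norm_sq, hweight]
  ring

lemma sobolevInner_poissonBracket (s : ℝ) (f g h : 𝓢(Plane, ℝ)) :
    sobolevInner s h (poissonBracket f g) = (2 * π) ^ 2 *
      ∫ ξ, ∫ η, ⟪ξ⟫ ^ (2 * s) *
        wedgeForm (realFourier f) (realFourier g) (realFourier h) ξ η := by
  rw [sobolevInner, weightedInner, ← integral_const_mul]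
  congr with ξ
  rw [realFourier_poissonBracket,
    ← integral_inner (integrable_wedge_smul_realFourier_mul f g ξ), ← integral_const_mul,
    ← integral_const_mul]
  simp only [inner_smul_right, wedgeForm]
  congr with η
  ring

lemma wedgeForm_realFourier_laplacian (f g h : 𝓢(Plane, ℝ)) (ξ η : Plane) :
    wedgeForm (realFourier f) (realFourier (Δ g)) (realFourier h) η ξ =
      (2 * π) ^ 2 * ‖ξ‖ ^ 2 *
        wedgeForm (realFourier f) (realFourier h) (realFourier g) ξ η := by
  have hΔ : wedgeForm (realFourier f) (realFourier (Δ g)) (realFourier h) η ξ =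
      -((2 * π) ^ 2 * ‖ξ‖ ^ 2) *
        wedgeForm (realFourier f) (realFourier g) (realFourier h) η ξ := by
    rw [wedgeForm, realFourier_laplacian, ← Complex.ofReal_neg, ← Complex.real_smul,
      mul_smul_comm, inner_smul_right, wedgeForm]
    ring
  rw [hΔ, wedgeForm_swap (realFourier_apply_neg f), neg_mul_neg]

lemma sobolevInner_poissonBracket_laplacian (s : ℝ) (f g h : 𝓢(Plane, ℝ)) :
    sobolevInner s h (poissonBracket f (Δ g)) = (2 * π) ^ 4 *
      ∫ ξ, ∫ η, ‖ξ‖ ^ 2 * ⟪η⟫ ^ (2 * s) *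
        wedgeForm (realFourier f) (realFourier h) (realFourier g) ξ η := by
  rw [sobolevInner_poissonBracket,
    integral_integral_swap (integrable_japaneseBracket_mul_wedgeForm ..)]
  simp only [← integral_const_mul, wedgeForm_realFourier_laplacian]
  congr! 4
  ring

/-- In the energy balance the two brackets cancel to leading order. -/
lemma exists_abs_sobolevInner_poissonBracket_sub_le {s : ℝ} (hs : 2 < s) :
    ∃ C, 0 ≤ C ∧ ∀ a b : 𝓢(Plane, ℝ),
      |sobolevInner s b (poissonBracket a (Δ a)) -
          (2 * π) ^ 2 * sobolevInner (s + 1) a (poissonBracket a b)| ≤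
        C * (sobNorm (s + 1) a * sobNorm s b * sobNorm (s + 2) a) := by
  obtain ⟨C, hC₀, hC⟩ := exists_abs_integral_mul_wedgeForm_le hs
  refine ⟨(2 * π) ^ 4 * C, by positivity, fun a b => ?_⟩
  set u := realFourier a
  set v := realFourier b
  have hdiff : sobolevInner s b (poissonBracket a (Δ a)) -
      (2 * π) ^ 2 * sobolevInner (s + 1) a (poissonBracket a b) = (2 * π) ^ 4 *
        ∫ ξ, ∫ η, (‖ξ‖ ^ 2 * ⟪η⟫ ^ (2 * s) - ⟪ξ⟫ ^ (2 * s + 2)) * wedgeForm u v u ξ η := by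
    simp only [sub_mul]
    rw [integral_integral_sub (integrable_norm_sq_mul_japaneseBracket_mul_wedgeForm ..)
      (integrable_japaneseBracket_mul_wedgeForm ..), sobolevInner_poissonBracket_laplacian,
      sobolevInner_poissonBracket, mul_add_one]
    ring
  rw [hdiff, abs_mul, abs_of_pos (by positivity), mul_assoc, sobNorm_eq_weightedNorm,
    sobNorm_eq_weightedNorm, sobNorm_eq_weightedNorm]
  gcongr
  exact hC u v u

/-- The energy `(2π)² ‖a‖²_{H^{s+1}} + ‖b‖²_{H^s}`. The factor `(2π)²`, the one relating `Δ` to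
`‖ξ‖²` on the Fourier side, is what makes the top-order terms of the two brackets cancel. -/
def emhdEnergy (s : ℝ) (a b : 𝓢(Plane, ℝ)) : ℝ :=
  (2 * π) ^ 2 * sobNorm (s + 1) a ^ 2 + sobNorm s b ^ 2

/-- The time derivative of `emhdEnergy` along the system `∂ₜ a = μ Δ a - {a, b}`,
`∂ₜ b = {a, Δ a}`. -/
def emhdEnergyRate (μ s : ℝ) (a b : 𝓢(Plane, ℝ)) : ℝ :=
  (2 * π) ^ 2 * (2 * sobolevInner (s + 1) a (μ • Δ a - poissonBracket a b)) +
    2 * sobolevInner s b (poissonBracket a (Δ a))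

lemma emhdEnergyRate_eq (μ s : ℝ) (a b : 𝓢(Plane, ℝ)) :
    emhdEnergyRate μ s a b =
      2 * (sobolevInner s b (poissonBracket a (Δ a)) -
          (2 * π) ^ 2 * sobolevInner (s + 1) a (poissonBracket a b)) -
        2 * μ * (2 * π) ^ 4 * (sobNorm (s + 2) a ^ 2 - sobNorm (s + 1) a ^ 2) := by
  rw [emhdEnergyRate, sobolevInner_sub_right, sobolevInner_smul_right, sobolevInner_laplacian,
    show s + 1 + 1 = s + 2 by ring]
  ring

lemma one_le_two_pi_sq : 1 ≤ (2 * π) ^ 2 := by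
  nlinarith [pi_gt_three]

lemma sobNorm_sq_add_sobNorm_sq_le_emhdEnergy (s : ℝ) (a b : 𝓢(Plane, ℝ)) :
    sobNorm (s + 1) a ^ 2 + sobNorm s b ^ 2 ≤ emhdEnergy s a b :=
  add_le_add_left (le_mul_of_one_le_left (sq_nonneg _) one_le_two_pi_sq) _

lemma emhdEnergy_le (s : ℝ) (a b : 𝓢(Plane, ℝ)) :
    emhdEnergy s a b ≤ (2 * π) ^ 2 * (sobNorm (s + 1) a ^ 2 + sobNorm s b ^ 2) := by
  rw [mul_add]
  exact add_le_add_right (le_mul_of_one_le_left (sq_nonneg _) one_le_two_pi_sq) _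

theorem exists_emhdEnergyRate_le {s μ : ℝ} (hs : 2 < s) (hμ : 0 < μ) :
    ∃ L, 0 < L ∧ ∀ a b : 𝓢(Plane, ℝ),
      emhdEnergyRate μ s a b ≤ L * (emhdEnergy s a b + emhdEnergy s a b ^ 2) := by
  obtain ⟨C, -, hC⟩ := exists_abs_sobolevInner_poissonBracket_sub_le hs
  set m := 2 * μ * (2 * π) ^ 4
  have hm₀ : 0 < m := by positivity
  refine ⟨m + C ^ 2 / m, by positivity, fun a b => ?_⟩
  set A₁ := sobNorm (s + 1) a
  set A₂ := sobNorm (s + 2) a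
  set B := sobNorm s b
  set E := emhdEnergy s a b
  have hABE : A₁ ^ 2 + B ^ 2 ≤ E := sobNorm_sq_add_sobNorm_sq_le_emhdEnergy s a b
  have hAE : A₁ ^ 2 ≤ E := (le_add_of_nonneg_right (sq_nonneg B)).trans hABE
  have hBE : B ^ 2 ≤ E := (le_add_of_nonneg_left (sq_nonneg A₁)).trans hABE
  have hE₀ : 0 ≤ E := (sq_nonneg A₁).trans hAE
  have hyoung : 2 * (C * (A₁ * B * A₂)) ≤ m * A₂ ^ 2 + C ^ 2 / m * (A₁ ^ 2 * B ^ 2) := by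
    have hsq : 0 ≤ (m * A₂ - C * (A₁ * B)) ^ 2 / m := by positivity
    have hexp : (m * A₂ - C * (A₁ * B)) ^ 2 / m =
        m * A₂ ^ 2 + C ^ 2 / m * (A₁ ^ 2 * B ^ 2) - 2 * (C * (A₁ * B * A₂)) := by
      field_simp
      ring
    linarith
  calc emhdEnergyRate μ s a b ≤ 2 * (C * (A₁ * B * A₂)) - m * (A₂ ^ 2 - A₁ ^ 2) := by
        rw [emhdEnergyRate_eq]
        linarith [le_of_abs_le (hC a b)]
    _ ≤ m * A₁ ^ 2 + C ^ 2 / m * (A₁ ^ 2 * B ^ 2) := by linarith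
    _ ≤ m * E + C ^ 2 / m * (E * E) := by gcongr
    _ ≤ (m + C ^ 2 / m) * (E + E ^ 2) := by
        have : 0 ≤ m * E ^ 2 + C ^ 2 / m * E := by positivity
        linarith

end EnergyEstimate

section DifferentialInequality

variable {E E' : ℝ → ℝ} {L : ℝ}

/-- `log (E / (1 + E))` grows at most at rate `L`. -/
lemma antitoneOn_div_one_add_mul_exp {D : Set ℝ} (hD : Convex ℝ D) (hE₀ : ∀ t, 0 ≤ E t)
    (hcont : ContinuousOn E D) (hderiv : ∀ t ∈ interior D, HasDerivAt E (E' t) t)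
    (hE' : ∀ t ∈ interior D, E' t ≤ L * (E t + E t ^ 2)) :
    AntitoneOn (fun t => E t / (1 + E t) * exp (-(L * t))) D := by
  have hpos (t : ℝ) : 0 < 1 + E t := add_pos_of_pos_of_nonneg one_pos (hE₀ t)
  have hG (t : ℝ) (ht : t ∈ interior D) :
      HasDerivAt (fun t => E t / (1 + E t) * exp (-(L * t)))
        ((E' t - L * (E t + E t ^ 2)) * (exp (-(L * t)) / (1 + E t) ^ 2)) t := by
    have hquot : HasDerivAt (fun t => E t / (1 + E t))
        ((E' t * (1 + E t) - E t * E' t) / (1 + E t) ^ 2) t :=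
      (hderiv t ht).div ((hderiv t ht).const_add 1) (hpos t).ne'
    have hexp : HasDerivAt (fun t => exp (-(L * t))) (exp (-(L * t)) * -(L * 1)) t :=
      ((hasDerivAt_id t).const_mul L).neg.exp
    refine (hquot.mul hexp).congr_deriv ?_
    have := (hpos t).ne'
    field_simp
    ring
  refine antitoneOn_of_deriv_nonpos hD ?_
    (fun t ht => (hG t ht).differentiableAt.differentiableWithinAt) fun t ht => ?_
  · exact (hcont.div (continuousOn_const.add hcont) fun t _ => (hpos t).ne').mul (by fun_prop)
  · rw [(hG t ht).deriv]
    exact mul_nonpos_of_nonpos_of_nonneg (sub_nonpos.2 (hE' t ht)) (by positivity)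

lemma le_three_mul_of_div_one_add_le {x y q M : ℝ} (hx : 0 ≤ x) (hy : 0 ≤ y) (hyM : y ≤ M)
    (hq : q ≤ 1 + 1 / (2 * (1 + M))) (hxy : x / (1 + x) ≤ q * (y / (1 + y))) : x ≤ 3 * y := by
  have hqM : (q - 1) * (1 + M) ≤ 1 / 2 := by
    have hM : 0 < 1 + M := by linarith
    calc (q - 1) * (1 + M) ≤ 1 / (2 * (1 + M)) * (1 + M) := by gcongr; linarith
      _ = 1 / 2 := by field_simp
  rw [mul_div_assoc', div_le_div_iff₀ (by linarith) (by linarith)] at hxy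
  have hq_le : q ≤ 3 / 2 := by nlinarith
  have hqy : (q - 1) * y ≤ 1 / 2 := by nlinarith
  nlinarith

lemma le_three_mul_of_deriv_le {M T t : ℝ} (hL : 0 < L) (hE₀ : ∀ t, 0 ≤ E t)
    (hcont : ContinuousOn E (Ico 0 T)) (hderiv : ∀ t ∈ Ioo 0 T, HasDerivAt E (E' t) t)
    (hE' : ∀ t ∈ Ioo 0 T, E' t ≤ L * (E t + E t ^ 2)) (hM : E 0 ≤ M) (ht : t ∈ Ico 0 T)
    (htM : t ≤ log (1 + 1 / (2 * (1 + M))) / L) : E t ≤ 3 * E 0 := by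
  rw [← interior_Ico] at hderiv hE'
  have hanti := antitoneOn_div_one_add_mul_exp (convex_Ico 0 T) hE₀ hcont hderiv hE'
    ⟨le_rfl, ht.1.trans_lt ht.2⟩ ht ht.1
  have hM₀ : 0 ≤ M := (hE₀ 0).trans hM
  refine le_three_mul_of_div_one_add_le (q := exp (L * t)) (hE₀ t) (hE₀ 0) hM ?_ ?_
  · rw [← le_log_iff_exp_le (by positivity), mul_comm]
    exact (le_div_iff₀ hL).1 htM
  · rw [mul_comm, ← div_le_iff₀ (exp_pos _), div_eq_mul_inv _ (exp _), ← exp_neg]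
    simpa using hanti

end DifferentialInequality

section Solutions

open scoped Laplacian

variable {S : Set ℝ} {f f' : ℝ → 𝓢(Plane, ℝ)} {t : ℝ}

lemma continuousOn_sobNorm_sq (hf : SchwartzLocallyBoundedOn f S)
    (hcont : ∀ x, ContinuousOn (fun τ => f τ x) S) (s : ℝ) :
    ContinuousOn (fun τ => sobNorm s (f τ) ^ 2) S := by
  simp only [sobNorm_eq_weightedNorm]
  exact continuousOn_weightedNorm_sq (hf.clm_comp realFourier)
    (continuousOn_fourier (hf.clm_comp (SchwartzMap.postcompCLM Complex.ofRealCLM))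
      fun x => Complex.continuous_ofReal.comp_continuousOn (hcont x)) s

lemma hasDerivAt_sobNorm_sq (hS : IsOpen S) (hf : SchwartzLocallyBoundedOn f S)
    (hf' : SchwartzLocallyBoundedOn f' S)
    (hderiv : ∀ τ ∈ S, ∀ x, HasDerivAt (fun σ => f σ x) (f' τ x) τ) (ht : t ∈ S) (s : ℝ) :
    HasDerivAt (fun τ => sobNorm s (f τ) ^ 2) (2 * sobolevInner s (f t) (f' t)) t := by
  simp only [sobNorm_eq_weightedNorm]
  exact hasDerivAt_weightedNorm_sq hS (hf.clm_comp realFourier) (hf'.clm_comp realFourier)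
    (fun τ hτ ξ => hasDerivAt_fourier hS
      (hf'.clm_comp (SchwartzMap.postcompCLM Complex.ofRealCLM))
      (fun σ hσ x => (hderiv σ hσ x).ofReal_comp) hτ ξ) ht s

/-- A solution on `[0, T)` of the 2½D electron MHD system with horizontal resistivity `μ`:
`∂ₜ a = μ Δ a - {a, b}`, `∂ₜ b = {a, Δ a}`, with time derivatives taken pointwise in space (one
sided at `t = 0`) and locally bounded Schwartz seminorms. -/
structure IsEMHDSolution (μ T : ℝ) (a b : ℝ → 𝓢(Plane, ℝ)) : Prop where
  locallyBounded_fst : SchwartzLocallyBoundedOn a (Ico 0 T)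
  locallyBounded_snd : SchwartzLocallyBoundedOn b (Ico 0 T)
  hasDerivWithinAt_fst : ∀ t ∈ Ico 0 T, ∀ x, HasDerivWithinAt (fun τ => a τ x)
    ((μ • Δ (a t) - poissonBracket (a t) (b t)) x) (Ico 0 T) t
  hasDerivWithinAt_snd : ∀ t ∈ Ico 0 T, ∀ x, HasDerivWithinAt (fun τ => b τ x)
    (poissonBracket (a t) (Δ (a t)) x) (Ico 0 T) t

namespace IsEMHDSolution

variable {μ T : ℝ} {a b : ℝ → 𝓢(Plane, ℝ)}

lemma continuousOn_emhdEnergy (h : IsEMHDSolution μ T a b) (s : ℝ) :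
    ContinuousOn (fun t => emhdEnergy s (a t) (b t)) (Ico 0 T) :=
  ((continuousOn_sobNorm_sq h.locallyBounded_fst
    (fun x t ht => (h.hasDerivWithinAt_fst t ht x).continuousWithinAt) _).const_mul _).add
    (continuousOn_sobNorm_sq h.locallyBounded_snd
      (fun x t ht => (h.hasDerivWithinAt_snd t ht x).continuousWithinAt) _)

lemma hasDerivAt_emhdEnergy (h : IsEMHDSolution μ T a b) (s : ℝ) (ht : t ∈ Ioo 0 T) :
    HasDerivAt (fun τ => emhdEnergy s (a τ) (b τ)) (emhdEnergyRate μ s (a t) (b t)) t := by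
  have ha := h.locallyBounded_fst.mono Ioo_subset_Ico_self
  have hb := h.locallyBounded_snd.mono Ioo_subset_Ico_self
  have hΔ : SchwartzLocallyBoundedOn (fun t => Δ (a t)) (Ioo 0 T) :=
    ha.clm_comp (LineDeriv.laplacianCLM ℝ Plane 𝓢(Plane, ℝ))
  have hμΔ : SchwartzLocallyBoundedOn (fun t => μ • Δ (a t)) (Ioo 0 T) :=
    ha.clm_comp (μ • LineDeriv.laplacianCLM ℝ Plane 𝓢(Plane, ℝ))
  have hnhds {τ : ℝ} (hτ : τ ∈ Ioo 0 T) : Ico 0 T ∈ 𝓝 τ := Ico_mem_nhds hτ.1 hτ.2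
  exact ((hasDerivAt_sobNorm_sq isOpen_Ioo ha (hμΔ.sub (ha.poissonBracket hb))
    (fun τ hτ x => (h.hasDerivWithinAt_fst τ (Ioo_subset_Ico_self hτ) x).hasDerivAt (hnhds hτ))
    ht (s + 1)).const_mul _).add
    (hasDerivAt_sobNorm_sq isOpen_Ioo hb (ha.poissonBracket hΔ)
    (fun τ hτ x => (h.hasDerivWithinAt_snd τ (Ioo_subset_Ico_self hτ) x).hasDerivAt (hnhds hτ))
    ht s)

end IsEMHDSolution

lemma SchwartzLocallyBoundedOn.of_forall_abs_sub_lt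
    (hf : ∀ t ∈ S, ∀ k n : ℕ, ∃ δ > 0, ∃ K : ℝ, ∀ τ ∈ S, |τ - t| < δ →
      SchwartzMap.seminorm ℝ k n (f τ) ≤ K) : SchwartzLocallyBoundedOn f S := fun t ht k n => by
  obtain ⟨δ, hδ, K, hK⟩ := hf t ht k n
  refine ⟨K, ?_⟩
  filter_upwards [self_mem_nhdsWithin, mem_nhdsWithin_of_mem_nhds (Metric.ball_mem_nhds t hδ)]
    with τ hτ hτδ
  exact hK τ hτ (by simpa [Real.dist_eq] using hτδ)

lemma differentiableOn_apply_of_contDiffOn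
    (hf : ContDiffOn ℝ ∞ (fun q : ℝ × Plane => f q.1 q.2) (S ×ˢ univ)) (x : Plane) :
    DifferentiableOn ℝ (fun τ => f τ x) S := by
  have hslice : DifferentiableOn ℝ (fun τ : ℝ => (τ, x)) S := by fun_prop
  exact (hf.differentiableOn (by simp)).comp hslice fun τ hτ => ⟨hτ, mem_univ x⟩

lemma IsEMHDSolution.of_contDiffOn {μ T : ℝ} {a b : ℝ → 𝓢(Plane, ℝ)}
    (ha : ContDiffOn ℝ ∞ (fun q : ℝ × Plane => a q.1 q.2) (Ico 0 T ×ˢ univ))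
    (hb : ContDiffOn ℝ ∞ (fun q : ℝ × Plane => b q.1 q.2) (Ico 0 T ×ˢ univ))
    (hbdd : ∀ t ∈ Ico 0 T, ∀ k n : ℕ, ∃ δ > 0, ∃ K : ℝ, ∀ τ ∈ Ico 0 T, |τ - t| < δ →
      SchwartzMap.seminorm ℝ k n (a τ) ≤ K ∧ SchwartzMap.seminorm ℝ k n (b τ) ≤ K)
    (heq_a : ∀ t ∈ Ico 0 T, ∀ x : Plane, derivWithin (fun τ => a τ x) (Ico 0 T) t
      + pd 1 (a t) x * pd 0 (b t) x - pd 0 (a t) x * pd 1 (b t) x = μ * lap (a t) x)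
    (heq_b : ∀ t ∈ Ico 0 T, ∀ x : Plane, derivWithin (fun τ => b τ x) (Ico 0 T) t
      - pd 1 (a t) x * pd 0 (lap (a t)) x + pd 0 (a t) x * pd 1 (lap (a t)) x = 0) :
    IsEMHDSolution μ T a b where
  locallyBounded_fst := .of_forall_abs_sub_lt fun t ht k n =>
    let ⟨δ, hδ, K, hK⟩ := hbdd t ht k n
    ⟨δ, hδ, K, fun τ hτ hτδ => (hK τ hτ hτδ).1⟩
  locallyBounded_snd := .of_forall_abs_sub_lt fun t ht k n =>
    let ⟨δ, hδ, K, hK⟩ := hbdd t ht k n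
    ⟨δ, hδ, K, fun τ hτ hτδ => (hK τ hτ hτδ).2⟩
  hasDerivWithinAt_fst t ht x := by
    refine (differentiableOn_apply_of_contDiffOn ha x t ht).hasDerivWithinAt.congr_deriv ?_
    rw [sub_apply, smul_apply, smul_eq_mul, poissonBracket_apply, ← lap_eq_laplacian]
    linarith [heq_a t ht x]
  hasDerivWithinAt_snd t ht x := by
    refine (differentiableOn_apply_of_contDiffOn hb x t ht).hasDerivWithinAt.congr_deriv ?_
    rw [poissonBracket_apply, ← lap_eq_laplacian]
    linarith [heq_b t ht x]

end Solutions

end EMHD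

theorem emhd_uniform_sobolev_bound_horizontal_general {s μ M : ℝ} (hs : 2 < s) (hμ : 0 < μ)
    (hM : 0 ≤ M) :
    ∃ T : ℝ, 0 < T ∧ ∃ C : ℝ, 1 ≤ C ∧
      ∀ T' : ℝ, ∀ a b : ℝ → SchwartzMap Plane ℝ, EMHD.IsEMHDSolution μ T' a b →
      sobNorm (s + 1) (a 0) ^ 2 + sobNorm s (b 0) ^ 2 ≤ M →
      ∀ t : ℝ, 0 ≤ t → t < min T T' →
        sobNorm (s + 1) (a t) ^ 2 + sobNorm s (b t) ^ 2
          ≤ C * (sobNorm (s + 1) (a 0) ^ 2 + sobNorm s (b 0) ^ 2) := by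
  obtain ⟨L, hL, hrate⟩ := EMHD.exists_emhdEnergyRate_le hs hμ
  have hκ := EMHD.one_le_two_pi_sq
  refine ⟨log (1 + 1 / (2 * (1 + (2 * π) ^ 2 * M))) / L,
    div_pos (log_pos (lt_add_of_pos_right 1 (by positivity))) hL, 3 * (2 * π) ^ 2, by linarith,
    fun T' a b hab h₀ t ht₀ ht => ?_⟩
  have hE₀ (t : ℝ) : 0 ≤ EMHD.emhdEnergy s (a t) (b t) :=
    (add_nonneg (sq_nonneg _) (sq_nonneg _)).trans
      (EMHD.sobNorm_sq_add_sobNorm_sq_le_emhdEnergy s (a t) (b t))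
  have hEM : EMHD.emhdEnergy s (a 0) (b 0) ≤ (2 * π) ^ 2 * M :=
    (EMHD.emhdEnergy_le s _ _).trans (by gcongr)
  calc sobNorm (s + 1) (a t) ^ 2 + sobNorm s (b t) ^ 2
      ≤ EMHD.emhdEnergy s (a t) (b t) := EMHD.sobNorm_sq_add_sobNorm_sq_le_emhdEnergy s _ _
    _ ≤ 3 * EMHD.emhdEnergy s (a 0) (b 0) :=
        EMHD.le_three_mul_of_deriv_le hL hE₀ (hab.continuousOn_emhdEnergy s)
          (fun _ => hab.hasDerivAt_emhdEnergy s) (fun τ _ => hrate (a τ) (b τ)) hEM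
          ⟨ht₀, ht.trans_le (min_le_right _ _)⟩ (ht.le.trans (min_le_left _ _))
    _ ≤ 3 * (2 * π) ^ 2 * (sobNorm (s + 1) (a 0) ^ 2 + sobNorm s (b 0) ^ 2) := by
        linarith [EMHD.emhdEnergy_le s (a 0) (b 0)]

/-- Uniform Sobolev bound on a short time interval for the 2½D electron MHD system with
horizontal resistivity `μ > 0` (and `ν = 0`): for `s > 2`, `μ > 0`, `M > 0` there exist
`T > 0` and `C ≥ 1` (depending only on `s, μ, M`) such that any smooth solution on
`[0,T')` that is Schwartz in space (with Schwartz seminorms locally bounded in time)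
with `‖a(0)‖_{H^{s+1}}² + ‖b(0)‖_{H^s}² ≤ M` satisfies
`‖a(t)‖_{H^{s+1}}² + ‖b(t)‖_{H^s}² ≤ C(‖a(0)‖_{H^{s+1}}² + ‖b(0)‖_{H^s}²)` on
`[0, min(T,T'))`. -/
theorem emhd_uniform_sobolev_bound_horizontal
    (s μ M : ℝ) (hs : 2 < s) (hμ : 0 < μ) (hM : 0 < M) :
    ∃ T : ℝ, 0 < T ∧ ∃ C : ℝ, 1 ≤ C ∧
      ∀ T' : ℝ, 0 < T' →
      ∀ a b : ℝ → SchwartzMap Plane ℝ,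
      ContDiffOn ℝ (⊤ : ℕ∞) (fun q : ℝ × Plane => a q.1 q.2) (Set.Ico 0 T' ×ˢ Set.univ) →
      ContDiffOn ℝ (⊤ : ℕ∞) (fun q : ℝ × Plane => b q.1 q.2) (Set.Ico 0 T' ×ˢ Set.univ) →
      (∀ t ∈ Set.Ico 0 T', ∀ k n : ℕ, ∃ δ > 0, ∃ K : ℝ,
        ∀ τ ∈ Set.Ico 0 T', |τ - t| < δ →
          SchwartzMap.seminorm ℝ k n (a τ) ≤ K ∧ SchwartzMap.seminorm ℝ k n (b τ) ≤ K) →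
      (∀ t ∈ Set.Ico 0 T', ∀ x : Plane,
        derivWithin (fun τ => a τ x) (Set.Ico 0 T') t
          + pd 1 (a t) x * pd 0 (b t) x - pd 0 (a t) x * pd 1 (b t) x = μ * lap (a t) x) →
      (∀ t ∈ Set.Ico 0 T', ∀ x : Plane,
        derivWithin (fun τ => b τ x) (Set.Ico 0 T') t
          - pd 1 (a t) x * pd 0 (lap (a t)) x + pd 0 (a t) x * pd 1 (lap (a t)) x = 0) →
      sobNorm (s+1) (⇑(a 0)) ^ 2 + sobNorm s (⇑(b 0)) ^ 2 ≤ M →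
      ∀ t : ℝ, 0 ≤ t → t < min T T' →
        sobNorm (s+1) (⇑(a t)) ^ 2 + sobNorm s (⇑(b t)) ^ 2
          ≤ C * (sobNorm (s+1) (⇑(a 0)) ^ 2 + sobNorm s (⇑(b 0)) ^ 2) := by
  obtain ⟨T, hT, C, hC, hbound⟩ := emhd_uniform_sobolev_bound_horizontal_general hs hμ hM.le
  exact ⟨T, hT, C, hC, fun T' _ a b ha hb hbdd heq_a heq_b =>
    hbound T' a b (.of_contDiffOn ha hb hbdd heq_a heq_b)⟩
end
end

section
/- Uniform Sobolev bound on a short time interval, vertical resistivity: Let s > 2, ν > 0, and M > 0. There exist T > 0 and C ≥ 1, depending only on s, ν and M, with the following property. If a, b : [0,T') × ℝ² → ℝ (for any T' > 0) are smooth functions such that a(t,·) and b(t,·) are Schwartz functions for each t (with all Schwartz seminorms locally bounded in t), (a,b) solves pointwise the system ∂ₜa + (∂_y a)(∂_x b) − (∂_x a)(∂_y b) = 0, ∂ₜb − (∂_y a)∂_xΔa + (∂_x a)∂_yΔa = νΔb, and ‖a(0)‖_{H^{s+1}}² + ‖b(0)‖_{H^{s}}² ≤ M, then for all t ∈ [0,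 min(T, T')), ‖a(t)‖_{H^{s+1}}² + ‖b(t)‖_{H^{s}}² ≤ C ( ‖a(0)‖_{H^{s+1}}² + ‖b(0)‖_{H^{s}}² ). -/
open MeasureTheory Real
open scoped FourierTransform

noncomputable section

/-!
The energy is `E = 4π² ‖a‖²_{H^{s+1}} + ‖b‖²_{H^s}`. On the Fourier side, the nonlinear part of `E'`
is an integral of `m(p, q) â(p) â(q) b̂(r)` over `p + q + r = 0`, and `m` contains the factor
`p₀ q₁ - p₁ q₀`, which is the symbol of the Poisson bracket and is antisymmetric. As `a` enters
twice, `m` may be symmetrized, which turns its other factor into differences of powers of Japanese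
brackets. The resulting symbol is bounded by `(⟨p⟩⟨q⟩⟨r⟩)^{s+1}` times the largest of `⟨p⟩^{1-s}`,
`⟨q⟩^{1-s}`, `⟨r⟩^{1-s}`. Since `⟨·⟩^{1-s}` lies in `L²(ℝ²)` for `s > 2`, the nonlinear part of `E'`
is at most a multiple of `‖a‖²_{H^{s+1}} ‖b‖_{H^{s+1}}`. The last norm has one derivative more than
`E` controls; the dissipation in the equation for `b` absorbs it by the arithmetic-geometric mean
inequality. What remains is `E' ≤ c (E² + E)`, so `E` at most doubles on a short time interval.
-/

/-! ### The symbol inequality -/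

lemma abs_rpow_sub_rpow_le {e x y G : ℝ} (he : 1 ≤ e) (hx : 0 ≤ x) (hxG : x ≤ G) (hy : 0 ≤ y)
    (hyG : y ≤ G) : |x ^ e - y ^ e| ≤ e * G ^ (e - 1) * |x - y| := by
  refine (convex_Icc 0 G).norm_image_sub_le_of_norm_hasDerivWithin_le
    (fun z _ => (hasDerivAt_rpow_const (Or.inr he)).hasDerivWithinAt) (fun z hz => ?_)
    ⟨hy, hyG⟩ ⟨hx, hxG⟩
  have hz₀ : 0 ≤ z := hz.1
  rw [norm_of_nonneg (by positivity)]
  gcongr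
  exact hz.2

/-- The symbol of the trilinear form that governs the growth of the energy of a solution
`(a, b)`; the arguments are the Japanese brackets of the frequencies of `a`, `a` and `b`. -/
def energySymbol (s P Q R : ℝ) : ℝ :=
  (Q ^ 2 - P ^ 2) * R ^ (2 * s) + P ^ (2 * (s + 1)) - Q ^ (2 * (s + 1))

lemma energySymbol_swap (s P Q R : ℝ) : energySymbol s Q P R = -energySymbol s P Q R := by
  unfold energySymbol; ring

section EnergySymbol

variable {s P Q R G : ℝ}

lemma abs_energySymbol_le_of_abs_sub_le_right (hs : 1 / 2 ≤ s) (hP : 0 < P) (hQ : 0 < Q)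
    (hR : 0 < R) (hPG : P ≤ G) (hQG : Q ≤ G) (hRG : R ≤ G) (h : |P - Q| ≤ R) :
    |energySymbol s P Q R| ≤ (2 * s + 4) * (R * G ^ (2 * s + 1)) := by
  have hG : 0 < G := hP.trans_le hPG
  have hpow : |P ^ (2 * (s + 1)) - Q ^ (2 * (s + 1))| ≤ 2 * (s + 1) * G ^ (2 * s + 1) * R := by
    refine (abs_rpow_sub_rpow_le (by linarith) hP.le hPG hQ.le hQG).trans ?_
    rw [show 2 * (s + 1) - 1 = 2 * s + 1 by ring]
    gcongr
  have hsq : |(Q ^ 2 - P ^ 2) * R ^ (2 * s)| ≤ R * (2 * G) * G ^ (2 * s) := by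
    rw [sq_sub_sq, mul_comm (Q + P), abs_mul, abs_mul, abs_sub_comm Q P,
      abs_of_pos (add_pos hQ hP), abs_of_pos (rpow_pos_of_pos hR _)]
    gcongr
    linarith
  calc |energySymbol s P Q R|
      ≤ |(Q ^ 2 - P ^ 2) * R ^ (2 * s)| + |P ^ (2 * (s + 1)) - Q ^ (2 * (s + 1))| := by
        rw [energySymbol, add_sub_assoc]; exact abs_add_le _ _
    _ ≤ R * (2 * G) * G ^ (2 * s) + 2 * (s + 1) * G ^ (2 * s + 1) * R := add_le_add hsq hpow
    _ = (2 * s + 4) * (R * G ^ (2 * s + 1)) := by rw [rpow_add_one hG.ne']; ring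

lemma abs_energySymbol_le_of_abs_sub_le_left (hs : 1 / 2 ≤ s) (hP : 0 < P) (hQ : 0 < Q)
    (hR : 0 < R) (hPG : P ≤ G) (hQG : Q ≤ G) (hRG : R ≤ G) (h : |R - Q| ≤ P) :
    |energySymbol s P Q R| ≤ (2 * s + 4) * (P * G ^ (2 * s + 1)) := by
  have hG : 0 < G := hP.trans_le hPG
  have hRQ : |R ^ (2 * s) - Q ^ (2 * s)| ≤ 2 * s * G ^ (2 * s - 1) * P := by
    refine (abs_rpow_sub_rpow_le (by linarith) hR.le hRG hQ.le hQG).trans ?_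
    gcongr
  have hRP : |R ^ (2 * s) - P ^ (2 * s)| ≤ G ^ (2 * s) :=
    abs_sub_le_of_nonneg_of_le (by positivity) (by gcongr) (by positivity) (by gcongr)
  calc |energySymbol s P Q R|
      = |Q ^ 2 * (R ^ (2 * s) - Q ^ (2 * s)) - P ^ 2 * (R ^ (2 * s) - P ^ (2 * s))| := by
        rw [energySymbol, show 2 * (s + 1) = 2 * s + 2 by ring, rpow_add hP, rpow_add hQ,
          rpow_two, rpow_two]
        ring_nf
    _ ≤ Q ^ 2 * |R ^ (2 * s) - Q ^ (2 * s)| + P ^ 2 * |R ^ (2 * s) - P ^ (2 * s)| := by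
        refine (abs_sub _ _).trans_eq ?_
        rw [abs_mul, abs_mul, abs_sq, abs_sq]
    _ ≤ G ^ 2 * (2 * s * G ^ (2 * s - 1) * P) + P * G * G ^ (2 * s) := by
        rw [sq P]; gcongr
    _ = (2 * s + 1) * (P * G ^ (2 * s + 1)) := by
        rw [rpow_add_one hG.ne', rpow_sub_one hG.ne']; field_simp
    _ ≤ (2 * s + 4) * (P * G ^ (2 * s + 1)) := by gcongr; norm_num

lemma sq_mul_max_rpow_le {L U V : ℝ} (hs : 0 ≤ s) (hL : 0 < L) (hLU : L ≤ U) (hLV : L ≤ V)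
    (h : |U - V| ≤ L) :
    L ^ 2 * max U V ^ (2 * (s + 1)) ≤
      2 ^ (s + 1) * ((L * U * V) ^ (s + 1) * L ^ (1 - s)) := by
  have hU : 0 < U := hL.trans_le hLU
  have hV : 0 < V := hL.trans_le hLV
  have hmax : max U V ^ 2 ≤ 2 * (U * V) := by
    rw [abs_le] at h
    rcases max_choice U V with h' | h' <;> rw [h'] <;> nlinarith
  calc L ^ 2 * max U V ^ (2 * (s + 1))
      = L ^ 2 * (max U V ^ 2) ^ (s + 1) := by
        rw [rpow_mul (hU.le.trans (le_max_left _ _)), rpow_two]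
    _ ≤ L ^ 2 * (2 * (U * V)) ^ (s + 1) := by gcongr
    _ = 2 ^ (s + 1) * ((L * U * V) ^ (s + 1) * L ^ (1 - s)) := by
        rw [mul_assoc L, mul_rpow two_pos.le (by positivity), mul_rpow hL.le (by positivity),
          ← rpow_two, show (2 : ℝ) = s + 1 + (1 - s) by ring, rpow_add hL]
        ring_nf

lemma mul_le_of_le_mul_max_rpow {c X Y L U V : ℝ} (hs : 0 ≤ s) (hc : 0 ≤ c) (hL : 0 < L)
    (hLU : L ≤ U) (hLV : L ≤ V) (h : |U - V| ≤ L) (hY₀ : 0 ≤ Y) (hX : X ≤ L * U)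
    (hY : Y ≤ c * (L * max U V ^ (2 * s + 1))) :
    X * Y ≤ c * 2 ^ (s + 1) * ((L * U * V) ^ (s + 1) * L ^ (1 - s)) := by
  have hG : 0 < max U V := (hL.trans_le hLU).trans_le (le_max_left _ _)
  calc X * Y ≤ (L * max U V) * (c * (L * max U V ^ (2 * s + 1))) := by
        gcongr
        exact hX.trans (by gcongr; exact le_max_left _ _)
    _ = c * (L ^ 2 * max U V ^ (2 * (s + 1))) := by
        rw [show 2 * (s + 1) = 2 * s + 1 + 1 by ring, rpow_add_one hG.ne' (2 * s + 1)]; ring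
    _ ≤ c * (2 ^ (s + 1) * ((L * U * V) ^ (s + 1) * L ^ (1 - s))) :=
        mul_le_mul_of_nonneg_left (sq_mul_max_rpow_le hs hL hLU hLV h) hc
    _ = _ := by ring

/-- The constant in `mul_abs_energySymbol_le`. -/
def symbolConst (s : ℝ) : ℝ := (2 * s + 4) * 2 ^ (s + 1)

-- The two largest of `P`, `Q`, `R` are comparable and differ by at most the smallest one, which
-- is therefore the factor gained both from `X` and from the cancellation in the symbol.
lemma mul_abs_energySymbol_le {X : ℝ} (hs : 1 / 2 ≤ s) (hP : 0 < P) (hQ : 0 < Q) (hR : 0 < R)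
    (hPQR : P ≤ Q + R) (hQPR : Q ≤ P + R) (hRPQ : R ≤ P + Q) (hXPQ : X ≤ P * Q)
    (hXQR : X ≤ Q * R) (hXPR : X ≤ P * R) :
    X * |energySymbol s P Q R| ≤ symbolConst s *
      ((P * Q * R) ^ (s + 1) * (P ^ (1 - s) + Q ^ (1 - s) + R ^ (1 - s))) := by
  have hs₀ : 0 ≤ s := by linarith
  have hc : 0 ≤ 2 * s + 4 := by linarith
  suffices h : ∃ L ∈ ({P, Q, R} : Set ℝ),
      X * |energySymbol s P Q R| ≤ symbolConst s * ((P * Q * R) ^ (s + 1) * L ^ (1 - s)) by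
    obtain ⟨L, hL, h⟩ := h
    refine h.trans ?_
    have hp := rpow_pos_of_pos hP (1 - s)
    have hq := rpow_pos_of_pos hQ (1 - s)
    have hr := rpow_pos_of_pos hR (1 - s)
    unfold symbolConst
    gcongr
    rcases hL with rfl | rfl | rfl <;> linarith
  by_cases hPmin : P ≤ Q ∧ P ≤ R
  · have hd : |Q - R| ≤ P := abs_le.2 ⟨by linarith, by linarith⟩
    refine ⟨P, by simp, mul_le_of_le_mul_max_rpow hs₀ hc hP hPmin.1 hPmin.2 hd (abs_nonneg _) hXPQ
      (abs_energySymbol_le_of_abs_sub_le_left hs hP hQ hR (hPmin.1.trans (le_max_left _ _))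
        (le_max_left _ _) (le_max_right _ _) (abs_sub_comm Q R ▸ hd))⟩
  by_cases hQmin : Q ≤ P ∧ Q ≤ R
  · have hd : |P - R| ≤ Q := abs_le.2 ⟨by linarith, by linarith⟩
    refine ⟨Q, by simp, ?_⟩
    rw [← abs_neg, ← energySymbol_swap, mul_comm P Q]
    exact mul_le_of_le_mul_max_rpow hs₀ hc hQ hQmin.1 hQmin.2 hd (abs_nonneg _)
      (mul_comm P Q ▸ hXPQ) (abs_energySymbol_le_of_abs_sub_le_left hs hQ hP hR
        (hQmin.1.trans (le_max_left _ _)) (le_max_left _ _) (le_max_right _ _)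
        (abs_sub_comm P R ▸ hd))
  · have hRP : R ≤ P := by grind
    have hRQ : R ≤ Q := by grind
    have hd : |P - Q| ≤ R := abs_le.2 ⟨by linarith, by linarith⟩
    refine ⟨R, by simp, ?_⟩
    rw [mul_comm (P * Q), ← mul_assoc R]
    exact mul_le_of_le_mul_max_rpow hs₀ hc hR hRP hRQ hd (abs_nonneg _) (mul_comm P R ▸ hXPR)
      (abs_energySymbol_le_of_abs_sub_le_right hs hP hQ hR (le_max_left _ _) (le_max_right _ _)
        (hRP.trans (le_max_left _ _)) hd)

end EnergySymbol

/-! ### Japanese brackets -/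

/-- The Japanese bracket `⟨x⟩ = (1 + ‖x‖²)^{1/2}`. -/
def japBracket {E : Type*} [Norm E] (x : E) : ℝ := √(1 + ‖x‖ ^ 2)

section JapBracket

variable {E : Type*} [NormedAddCommGroup E] (x y : E)

lemma japBracket_sq : japBracket x ^ 2 = 1 + ‖x‖ ^ 2 := sq_sqrt (by positivity)

lemma one_le_japBracket : 1 ≤ japBracket x :=
  one_le_sqrt.2 (le_add_of_nonneg_right (sq_nonneg _))

lemma japBracket_pos : 0 < japBracket x := one_pos.trans_le (one_le_japBracket x)

lemma japBracket_rpow (e : ℝ) : japBracket x ^ e = (1 + ‖x‖ ^ 2) ^ (e / 2) := by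
  rw [japBracket, sqrt_eq_rpow, ← rpow_mul (by positivity), one_div_mul_eq_div]

lemma japBracket_neg : japBracket (-x) = japBracket x := by simp [japBracket]

lemma norm_le_japBracket : ‖x‖ ≤ japBracket x :=
  le_sqrt_of_sq_le (le_add_of_nonneg_left zero_le_one)

lemma japBracket_add_le : japBracket (x + y) ≤ japBracket x + japBracket y := by
  refine sqrt_le_iff.2 ⟨(add_pos (japBracket_pos x) (japBracket_pos y)).le, ?_⟩
  have hxy : ‖x‖ * ‖y‖ ≤ japBracket x * japBracket y :=
    mul_le_mul (norm_le_japBracket x) (norm_le_japBracket y) (norm_nonneg y) (japBracket_pos x).le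
  have hadd : ‖x + y‖ ^ 2 ≤ (‖x‖ + ‖y‖) ^ 2 := by gcongr; exact norm_add_le x y
  nlinarith [japBracket_sq x, japBracket_sq y]

lemma japBracket_neg_sub : japBracket (-x - y) = japBracket (x + y) := by
  rw [← neg_add', japBracket_neg]

lemma japBracket_le_add_japBracket_add : japBracket x ≤ japBracket y + japBracket (x + y) := by
  simpa [japBracket_neg] using japBracket_add_le (-y) (x + y)

lemma one_add_norm_prod_le_japBracket (z : E × E) :
    1 + ‖z‖ ≤ 2 * (japBracket z.1 * japBracket z.2) := by
  have h₁ := one_le_japBracket z.1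
  have h₂ := one_le_japBracket z.2
  have hnorm : ‖z‖ ≤ japBracket z.1 * japBracket z.2 :=
    max_le ((norm_le_japBracket z.1).trans (le_mul_of_one_le_right (by linarith) h₂))
      ((norm_le_japBracket z.2).trans (le_mul_of_one_le_left (by linarith) h₁))
  linarith [one_le_mul_of_one_le_of_one_le h₁ h₂]

end JapBracket

section JapBracketRpow

variable {E : Type*} [NormedAddCommGroup E] [InnerProductSpace ℝ E]

@[fun_prop]
lemma hasTemperateGrowth_japBracket_rpow (e : ℝ) :
    (fun x : E => japBracket x ^ e).HasTemperateGrowth := by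
  simp only [japBracket_rpow]
  fun_prop

lemma memLp_two_japBracket_rpow_neg [FiniteDimensional ℝ E] [MeasurableSpace E] [BorelSpace E]
    (μ : Measure E) [μ.IsAddHaarMeasure] {r : ℝ} (hr : Module.finrank ℝ E < 2 * r) :
    MemLp (fun x : E => japBracket x ^ (-r)) 2 μ := by
  have hcont := (hasTemperateGrowth_japBracket_rpow (E := E) (-r)).1.continuous
  rw [memLp_two_iff_integrable_sq hcont.aestronglyMeasurable]
  refine (integrable_rpow_neg_one_add_norm_sq (μ := μ) hr).congr (.of_forall fun x => ?_)
  change (1 + ‖x‖ ^ 2) ^ (-(2 * r) / 2) = (japBracket x ^ (-r)) ^ 2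
  rw [japBracket_rpow, ← rpow_mul_natCast (by positivity)]
  congr 1
  push_cast
  ring

end JapBracketRpow

/-! ### Integrals over triples of vectors with zero sum -/

section TrilinearForm

open scoped ENNReal

variable {G : Type*} [AddCommGroup G] [MeasurableSpace G] [MeasurableAdd₂ G] [MeasurableNeg G]
  (μ : Measure G)

/-- The integral of `u(p) v(q) w(r)` over all `p + q + r = 0`, for functions with values
in `[0, ∞]`. -/
def ltrilinear (u v w : G → ℝ≥0∞) : ℝ≥0∞ := ∫⁻ p, ∫⁻ q, u p * v q * w (-p - q) ∂μ ∂μ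

variable {u v w ρ : G → ℝ≥0∞}

lemma ltrilinear_swap [SFinite μ] (hu : Measurable u) (hv : Measurable v) (hw : Measurable w) :
    ltrilinear μ u v w = ltrilinear μ v u w := by
  rw [ltrilinear, lintegral_lintegral_swap (by fun_prop)]
  simp only [ltrilinear, neg_sub_left, add_comm, mul_comm]

lemma ltrilinear_comm_right [μ.IsAddLeftInvariant] [μ.IsNegInvariant] :
    ltrilinear μ u v w = ltrilinear μ u w v := by
  refine lintegral_congr fun p => ?_
  rw [← lintegral_sub_left_eq_self _ (-p)]
  simp only [sub_sub_cancel, mul_right_comm]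

lemma ltrilinear_le_eLpNorm [μ.IsAddLeftInvariant] [μ.IsNegInvariant] (hu : Measurable u)
    (hv : Measurable v) (hw : Measurable w) :
    ltrilinear μ u v w ≤ (∫⁻ p, u p ∂μ) * (eLpNorm v 2 μ * eLpNorm w 2 μ) := by
  have hinner (p : G) : ∫⁻ q, v q * w (-p - q) ∂μ ≤ eLpNorm v 2 μ * eLpNorm w 2 μ := by
    have h := ENNReal.lintegral_mul_le_Lp_mul_Lq μ HolderConjugate.two_two hv.aemeasurable
      (hw.comp (measurable_const_sub (-p))).aemeasurable
    simpa [eLpNorm_eq_lintegral_rpow_enorm_toReal,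
      lintegral_sub_left_eq_self (fun q => w q ^ 2) (-p)] using h
  calc ltrilinear μ u v w = ∫⁻ p, u p * ∫⁻ q, v q * w (-p - q) ∂μ ∂μ := by
        refine lintegral_congr fun p => ?_
        simp only [mul_assoc]
        exact lintegral_const_mul _ (by fun_prop)
    _ ≤ ∫⁻ p, u p * (eLpNorm v 2 μ * eLpNorm w 2 μ) ∂μ := by gcongr with p; exact hinner p
    _ = (∫⁻ p, u p ∂μ) * (eLpNorm v 2 μ * eLpNorm w 2 μ) := lintegral_mul_const _ hu

lemma ltrilinear_mul_left_le [μ.IsAddLeftInvariant] [μ.IsNegInvariant] (hρ : Measurable ρ)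
    (hu : Measurable u) (hv : Measurable v) (hw : Measurable w) :
    ltrilinear μ (ρ * u) v w ≤
      eLpNorm ρ 2 μ * (eLpNorm u 2 μ * (eLpNorm v 2 μ * eLpNorm w 2 μ)) := by
  refine (ltrilinear_le_eLpNorm μ (hρ.mul hu) hv hw).trans ?_
  rw [← mul_assoc (eLpNorm ρ 2 μ)]
  gcongr
  have h := ENNReal.lintegral_mul_le_Lp_mul_Lq μ HolderConjugate.two_two hρ.aemeasurable
    hu.aemeasurable
  simpa [eLpNorm_eq_lintegral_rpow_enorm_toReal] using h

-- Only one factor has to be integrable instead of square-integrable: this is where the weight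
-- `ρ` goes, whichever of the three variables it is evaluated at.
lemma lintegral_weight_mul_le [SFinite μ] [μ.IsAddLeftInvariant] [μ.IsNegInvariant]
    (hρ : Measurable ρ) (hu : Measurable u) (hv : Measurable v) (hw : Measurable w) :
    ∫⁻ p, ∫⁻ q, (ρ p + ρ q + ρ (-p - q)) * (u p * v q * w (-p - q)) ∂μ ∂μ ≤
      3 * (eLpNorm ρ 2 μ * (eLpNorm u 2 μ * (eLpNorm v 2 μ * eLpNorm w 2 μ))) := by
  have hsplit : ∫⁻ p, ∫⁻ q, (ρ p + ρ q + ρ (-p - q)) * (u p * v q * w (-p - q)) ∂μ ∂μ =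
      ltrilinear μ (ρ * u) v w + ltrilinear μ u (ρ * v) w + ltrilinear μ u v (ρ * w) := by
    simp only [ltrilinear, Pi.mul_apply]
    rw [← lintegral_add_left (by fun_prop), ← lintegral_add_left (by fun_prop)]
    refine lintegral_congr fun p => ?_
    rw [← lintegral_add_left (by fun_prop), ← lintegral_add_left (by fun_prop)]
    exact lintegral_congr fun q => by ring
  have hv' : ltrilinear μ u (ρ * v) w = ltrilinear μ (ρ * v) u w :=
    ltrilinear_swap μ hu (hρ.mul hv) hw
  have hw' : ltrilinear μ u v (ρ * w) = ltrilinear μ (ρ * w) u v := by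
    rw [ltrilinear_comm_right, ltrilinear_swap μ hu (hρ.mul hw) hv]
  rw [hsplit, hv', hw']
  refine (add_le_add_three (ltrilinear_mul_left_le μ hρ hu hv hw)
    (ltrilinear_mul_left_le μ hρ hv hu hw) (ltrilinear_mul_left_le μ hρ hw hu hv)).trans_eq ?_
  ring

end TrilinearForm

section Trilinear

open scoped ENNReal SchwartzMap

lemma enorm_mul_prod_le {E : Type*} [NormedAddCommGroup E] {K e c M : ℝ} {x y z : E}
    {α β γ : ℂ} (hK : 0 ≤ K) (hc : 0 ≤ c)
    (hM : |M| ≤ K * ((japBracket x * japBracket y * japBracket z) ^ e * c)) :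
    ‖(M : ℂ) * (α * β * γ)‖ₑ ≤ ENNReal.ofReal K * (ENNReal.ofReal c *
      (‖japBracket x ^ e • α‖ₑ * ‖japBracket y ^ e • β‖ₑ * ‖japBracket z ^ e • γ‖ₑ)) := by
  have hx := japBracket_pos x
  have hy := japBracket_pos y
  have hz := japBracket_pos z
  simp only [← ofReal_norm, ← ENNReal.ofReal_mul, hK, hc, norm_nonneg, mul_nonneg]
  refine ENNReal.ofReal_le_ofReal ?_
  simp only [norm_smul, norm_mul, Complex.norm_real, norm_eq_abs, abs_rpow_of_nonneg, hx.le, hy.le,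
    hz.le, abs_of_pos hx, abs_of_pos hy, abs_of_pos hz]
  calc |M| * (‖α‖ * ‖β‖ * ‖γ‖)
      ≤ K * ((japBracket x * japBracket y * japBracket z) ^ e * c) * (‖α‖ * ‖β‖ * ‖γ‖) := by gcongr
    _ = _ := by
        rw [mul_rpow (by positivity) hz.le, mul_rpow hx.le hy.le]
        ring

variable {E : Type*} [NormedAddCommGroup E] [InnerProductSpace ℝ E] [FiniteDimensional ℝ E]
  [MeasurableSpace E] [BorelSpace E]

/-- The integral of `m(p, q) f(p) g(q) h(r)` over all `p + q + r = 0`: on the Fourier side,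
every cubic quantity in the energy estimate has this form. -/
def trilinear (m : E → E → ℝ) (f g h : E → ℂ) : ℂ :=
  ∫ p, ∫ q, m p q * (f p * g q * h (-p - q))

lemma trilinear_comm_right (m : E → E → ℝ) (f g h : E → ℂ) :
    trilinear m f g h = trilinear (fun p q => m p (-p - q)) f h g := by
  refine integral_congr_ae (.of_forall fun p => ?_)
  dsimp only
  rw [← integral_sub_left_eq_self _ _ (-p)]
  simp only [sub_sub_cancel, mul_right_comm]

/-- The continuous linear map sending a Schwartz function `f` to the class of `⟨x⟩^e f` in
`L²`. -/
def weightedL2 (e : ℝ) : 𝓢(E, ℂ) →L[ℝ] Lp ℂ 2 (volume : Measure E) :=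
  SchwartzMap.toLpCLM ℝ ℂ 2 volume ∘L SchwartzMap.smulLeftCLM ℂ fun x : E => japBracket x ^ e

lemma coeFn_weightedL2 (e : ℝ) (f : 𝓢(E, ℂ)) :
    weightedL2 e f =ᵐ[volume] fun x => japBracket x ^ e • f x := by
  simpa [weightedL2, SchwartzMap.smulLeftCLM_apply (hasTemperateGrowth_japBracket_rpow (E := E) e)]
    using SchwartzMap.coeFn_toLp (SchwartzMap.smulLeftCLM ℂ (fun x : E => japBracket x ^ e) f) 2

lemma integrable_trilinear {m : E → E → ℝ} (hm : m.uncurry.HasTemperateGrowth)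
    (f g h : 𝓢(E, ℂ)) :
    Integrable fun z : E × E => (m z.1 z.2 : ℂ) * (f z.1 * g z.2 * h (-z.1 - z.2)) := by
  obtain ⟨k, C, hC, hmC⟩ := hm.norm_iteratedFDeriv_le_uniform 0
  have hmeas : Continuous fun z : E × E => (m z.1 z.2 : ℂ) * (f z.1 * g z.2 * h (-z.1 - z.2)) :=
    (Complex.continuous_ofReal.comp hm.1.continuous).mul (by fun_prop)
  have hint (u : 𝓢(E, ℂ)) : Integrable fun x : E => japBracket x ^ (k : ℝ) * ‖u x‖ := by
    have hk : (fun x : E => japBracket x ^ (k : ℝ)).HasTemperateGrowth := by fun_prop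
    refine (SchwartzMap.smulLeftCLM ℂ (fun x : E => japBracket x ^ (k : ℝ)) u).integrable.norm.congr
      (.of_forall fun x => ?_)
    dsimp only
    rw [SchwartzMap.smulLeftCLM_apply_apply hk u x, norm_smul,
      norm_of_nonneg (rpow_pos_of_pos (japBracket_pos x) _).le]
  refine (((hint f).mul_prod (hint g)).const_mul
    (C * 2 ^ k * SchwartzMap.seminorm ℝ 0 0 h)).mono' hmeas.aestronglyMeasurable
    (.of_forall fun z => ?_)
  have hmz : |m z.1 z.2| ≤ C * (2 * (japBracket z.1 * japBracket z.2)) ^ k := by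
    have h₀ := hmC 0 le_rfl z
    rw [norm_iteratedFDeriv_zero] at h₀
    exact h₀.trans (by gcongr; exact one_add_norm_prod_le_japBracket z)
  calc ‖(m z.1 z.2 : ℂ) * (f z.1 * g z.2 * h (-z.1 - z.2))‖
      = |m z.1 z.2| * (‖f z.1‖ * ‖g z.2‖ * ‖h (-z.1 - z.2)‖) := by simp
    _ ≤ C * (2 * (japBracket z.1 * japBracket z.2)) ^ k *
          (‖f z.1‖ * ‖g z.2‖ * SchwartzMap.seminorm ℝ 0 0 h) := by
        have hz := mul_pos (japBracket_pos z.1) (japBracket_pos z.2)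
        gcongr
        exact SchwartzMap.norm_le_seminorm ℝ h _
    _ = _ := by
        simp only [rpow_natCast, mul_pow]
        ring

lemma trilinear_swap {m : E → E → ℝ} (hm : m.uncurry.HasTemperateGrowth) (f g h : 𝓢(E, ℂ)) :
    trilinear m f g h = trilinear (fun p q => m q p) g f h := by
  rw [trilinear, integral_integral_swap (integrable_trilinear hm f g h)]
  simp only [trilinear, neg_sub_left, add_comm, mul_comm]

lemma trilinear_sub {m n : E → E → ℝ} (hm : m.uncurry.HasTemperateGrowth)
    (hn : n.uncurry.HasTemperateGrowth) (f g h : 𝓢(E, ℂ)) :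
    trilinear (fun p q => m p q - n p q) f g h = trilinear m f g h - trilinear n f g h := by
  have hmi := integrable_trilinear hm f g h
  have hni := integrable_trilinear hn f g h
  simp only [trilinear, Complex.ofReal_sub, sub_mul]
  exact integral_integral_sub hmi hni

lemma two_mul_trilinear_self {m : E → E → ℝ} (hm : m.uncurry.HasTemperateGrowth)
    (f h : 𝓢(E, ℂ)) :
    2 * trilinear m f f h = trilinear (fun p q => m p q + m q p) f f h := by
  have hmi := integrable_trilinear hm f f h
  have hswap : (fun q p => m p q).uncurry.HasTemperateGrowth :=
    hm.comp (ContinuousLinearEquiv.prodComm ℝ E E).hasTemperateGrowth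
  rw [two_mul]
  nth_rewrite 2 [trilinear_swap hm]
  simp only [trilinear, Complex.ofReal_add, add_mul]
  exact (integral_integral_add hmi (integrable_trilinear hswap f f h)).symm

/-- The `L²` norm of `⟨x⟩^{-r}`. -/
def bracketL2Norm (E : Type*) [NormedAddCommGroup E] [InnerProductSpace ℝ E]
    [FiniteDimensional ℝ E] [MeasurableSpace E] [BorelSpace E] (r : ℝ) : ℝ :=
  (eLpNorm (fun x : E => japBracket x ^ (-r)) 2 volume).toReal

lemma eLpNorm_enorm_bracket_smul (e : ℝ) (f : 𝓢(E, ℂ)) :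
    eLpNorm (fun x => ‖japBracket x ^ e • f x‖ₑ) 2 volume = ENNReal.ofReal ‖weightedL2 e f‖ := by
  rw [eLpNorm_enorm, ← eLpNorm_congr_ae (coeFn_weightedL2 e f), Lp.norm_def,
    ENNReal.ofReal_toReal (Lp.eLpNorm_ne_top _)]

lemma enorm_trilinear_le {m : E → E → ℝ} {f g h : E → ℂ} {K : ℝ≥0∞} {ρ u v w : E → ℝ≥0∞}
    (hK : K ≠ ∞) (hρ : Measurable ρ) (hu : Measurable u) (hv : Measurable v) (hw : Measurable w)
    (hm : ∀ p q, ‖(m p q : ℂ) * (f p * g q * h (-p - q))‖ₑ ≤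
      K * ((ρ p + ρ q + ρ (-p - q)) * (u p * v q * w (-p - q)))) :
    ‖trilinear m f g h‖ₑ ≤ K * (3 * (eLpNorm ρ 2 volume *
      (eLpNorm u 2 volume * (eLpNorm v 2 volume * eLpNorm w 2 volume)))) := calc
  _ ≤ ∫⁻ p, ∫⁻ q, ‖(m p q : ℂ) * (f p * g q * h (-p - q))‖ₑ :=
      (enorm_integral_le_lintegral_enorm _).trans
        (lintegral_mono fun p => enorm_integral_le_lintegral_enorm _)
  _ ≤ ∫⁻ p, ∫⁻ q, K * ((ρ p + ρ q + ρ (-p - q)) * (u p * v q * w (-p - q))) :=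
      lintegral_mono fun p => lintegral_mono fun q => hm p q
  _ ≤ _ := by
      simp only [lintegral_const_mul' _ _ hK]
      gcongr
      exact lintegral_weight_mul_le volume hρ hu hv hw

lemma norm_trilinear_le {K r e : ℝ} {m : E → E → ℝ} (hr : Module.finrank ℝ E < 2 * r)
    (hK : 0 ≤ K)
    (hm : ∀ p q, |m p q| ≤ K * ((japBracket p * japBracket q * japBracket (-p - q)) ^ e *
      (japBracket p ^ (-r) + japBracket q ^ (-r) + japBracket (-p - q) ^ (-r))))
    (f g h : 𝓢(E, ℂ)) :
    ‖trilinear m f g h‖ ≤ 3 * K * bracketL2Norm E r *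
      (‖weightedL2 e f‖ * ‖weightedL2 e g‖ * ‖weightedL2 e h‖) := by
  have hpos (x : E) : 0 ≤ japBracket x ^ (-r) := (rpow_pos_of_pos (japBracket_pos x) _).le
  have hcont (c : ℝ) : Continuous fun x : E => japBracket x ^ c :=
    (hasTemperateGrowth_japBracket_rpow c).1.continuous
  set ρ : E → ℝ≥0∞ := fun x => ‖japBracket x ^ (-r)‖ₑ with hρ
  set u : 𝓢(E, ℂ) → E → ℝ≥0∞ := fun f x => ‖japBracket x ^ e • f x‖ₑ
  have hρm : Measurable ρ := (hcont _).enorm.measurable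
  have hum (f : 𝓢(E, ℂ)) : Measurable (u f) := ((hcont e).smul f.continuous).enorm.measurable
  have hpt (p q : E) : ‖(m p q : ℂ) * (f p * g q * h (-p - q))‖ₑ ≤
      ENNReal.ofReal K * ((ρ p + ρ q + ρ (-p - q)) * (u f p * u g q * u h (-p - q))) := by
    simpa only [hρ, Real.enorm_of_nonneg, ENNReal.ofReal_add, hpos, add_nonneg] using
      enorm_mul_prod_le hK (add_nonneg (add_nonneg (hpos p) (hpos q)) (hpos _)) (hm p q)
  have hρ_norm : eLpNorm ρ 2 volume = ENNReal.ofReal (bracketL2Norm E r) := by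
    rw [bracketL2Norm, ENNReal.ofReal_toReal (memLp_two_japBracket_rpow_neg volume hr).2.ne,
      hρ, eLpNorm_enorm]
  have hu_norm (f : 𝓢(E, ℂ)) : eLpNorm (u f) 2 volume = ENNReal.ofReal ‖weightedL2 e f‖ :=
    eLpNorm_enorm_bracket_smul e f
  have hmain := enorm_trilinear_le ENNReal.ofReal_ne_top hρm (hum f) (hum g) (hum h) hpt
  have hL : 0 ≤ bracketL2Norm E r := ENNReal.toReal_nonneg
  simp only [hρ_norm, hu_norm, ← ofReal_norm] at hmain
  rw [← ENNReal.ofReal_ofNat] at hmain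
  simp only [← ENNReal.ofReal_mul, hK, hL, norm_nonneg, Nat.ofNat_nonneg] at hmain
  rw [ENNReal.ofReal_le_ofReal_iff (by positivity)] at hmain
  exact hmain.trans_eq (by ring)

end Trilinear

/-! ### Fourier transforms of real Schwartz functions -/

section RealFourier

open SchwartzMap
open scoped SchwartzMap LineDeriv Laplacian ComplexConjugate

variable {E : Type*} [NormedAddCommGroup E] [InnerProductSpace ℝ E] [FiniteDimensional ℝ E]
  [MeasurableSpace E] [BorelSpace E]

lemma fourier_fourier_apply (f : 𝓢(E, ℂ)) (x : E) : 𝓕 (𝓕 f) x = f (-x) := by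
  have h := DFunLike.congr_fun (FourierTransform.fourierInv_fourier_eq (F := 𝓢(E, ℂ)) f) (-x)
  rw [← h, fourierInv_apply_eq]
  simp

lemma fourier_pairing (B : ℂ →L[ℂ] ℂ →L[ℂ] ℂ) (f g : 𝓢(E, ℂ)) :
    𝓕 (pairing B f g) = SchwartzMap.convolution B (𝓕 f) (𝓕 g) := by
  suffices h : 𝓕 (𝓕 (pairing B f g)) = 𝓕 (SchwartzMap.convolution B (𝓕 f) (𝓕 g)) by
    simpa using congrArg (𝓕⁻ ·) h
  ext x
  simp [fourier_convolution, fourier_fourier_apply]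

/-- The Fourier transform of a real-valued Schwartz function, as a continuous linear map. -/
def realFourier : 𝓢(E, ℝ) →L[ℝ] 𝓢(E, ℂ) :=
  (FourierTransform.fourierCLM ℂ 𝓢(E, ℂ)).restrictScalars ℝ ∘L postcompCLM Complex.ofRealCLM

lemma realFourier_eq (f : 𝓢(E, ℝ)) : realFourier f = 𝓕 (postcompCLM Complex.ofRealCLM f) := rfl

lemma coe_realFourier (f : 𝓢(E, ℝ)) : ⇑(realFourier f) = 𝓕 fun x => (f x : ℂ) := rfl

lemma realFourier_neg (f : 𝓢(E, ℝ)) (ξ : E) : realFourier f (-ξ) = conj (realFourier f ξ) := by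
  simp only [coe_realFourier, fourier_eq', ← integral_conj, inner_neg_right, smul_eq_mul, map_mul,
    Complex.conj_ofReal, ← Complex.exp_conj, Complex.conj_I]
  refine integral_congr_ae (.of_forall fun x => ?_)
  push_cast
  ring_nf

lemma realFourier_lineDeriv (v : E) (f : 𝓢(E, ℝ)) (ξ : E) :
    realFourier (∂_{v} f) ξ = 2 * π * Complex.I * inner ℝ ξ v * realFourier f ξ := by
  have hcomp : postcompCLM Complex.ofRealCLM (∂_{v} f) =
      ∂_{v} (postcompCLM Complex.ofRealCLM f) := by
    ext x
    have h : HasFDerivAt (postcompCLM Complex.ofRealCLM f) (Complex.ofRealCLM ∘L fderiv ℝ f x) x :=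
      Complex.ofRealCLM.hasFDerivAt.comp x (f.hasFDerivAt x)
    simp [lineDerivOp_apply_eq_fderiv, h.fderiv]
  rw [realFourier_eq, hcomp, fourier_lineDerivOp_eq, ← realFourier_eq, smul_apply,
    smulLeftCLM_apply_apply (by fun_prop), smul_eq_mul, Complex.real_smul, ← mul_assoc]

lemma realFourier_laplacian (f : 𝓢(E, ℝ)) (ξ : E) :
    realFourier (Δ f) ξ = (-(4 * π ^ 2 * ‖ξ‖ ^ 2) : ℝ) * realFourier f ξ := by
  rw [laplacian_eq_sum (stdOrthonormalBasis ℝ E),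
    ← (stdOrthonormalBasis ℝ E).sum_sq_inner_left ξ]
  simp only [map_sum, sum_apply, realFourier_lineDeriv]
  push_cast
  rw [Finset.mul_sum, ← Finset.sum_neg_distrib, Finset.sum_mul]
  refine Finset.sum_congr rfl fun i _ => ?_
  linear_combination (4 * π ^ 2 * (inner ℝ ξ (stdOrthonormalBasis ℝ E i) : ℂ) ^ 2 *
    realFourier f ξ) * Complex.I_sq

lemma realFourier_mul (f g : 𝓢(E, ℝ)) (ξ : E) :
    realFourier (pairing (.mul ℝ ℝ) f g) ξ = ∫ η, realFourier f η * realFourier g (ξ - η) := by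
  have hcomp : postcompCLM Complex.ofRealCLM (pairing (.mul ℝ ℝ) f g) =
      pairing (.mul ℂ ℂ) (postcompCLM Complex.ofRealCLM f) (postcompCLM Complex.ofRealCLM g) := by
    ext x
    simp
  rw [realFourier_eq, hcomp, fourier_pairing, convolution_apply]
  rfl

lemma integrable_realFourier_mul (f g : 𝓢(E, ℝ)) (ξ : E) :
    Integrable fun η => realFourier f η * realFourier g (ξ - η) :=
  (realFourier f).integrable.mul_bdd (c := SchwartzMap.seminorm ℝ 0 0 (realFourier g))
    (by fun_prop) (.of_forall fun _ => norm_le_seminorm ℝ _ _)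

/-- The map `f ↦ ⟨ξ⟩^e 𝓕f`, which embeds real-valued Schwartz functions with the `H^e` norm into
`L²`. -/
def sobolevEmb (e : ℝ) : 𝓢(E, ℝ) →L[ℝ] Lp ℂ 2 (volume : Measure E) :=
  weightedL2 e ∘L realFourier

lemma inner_sobolevEmb_integrand_ae (e : ℝ) (f g : 𝓢(E, ℝ)) :
    (fun ξ => inner ℝ (sobolevEmb e f ξ) (sobolevEmb e g ξ)) =ᵐ[volume]
      fun ξ => japBracket ξ ^ (2 * e) * (realFourier g ξ * conj (realFourier f ξ)).re := by
  filter_upwards [coeFn_weightedL2 e (realFourier f), coeFn_weightedL2 e (realFourier g)]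
    with ξ hf hg
  rw [sobolevEmb, ContinuousLinearMap.comp_apply, hf, ContinuousLinearMap.comp_apply, hg,
    real_inner_smul_left, real_inner_smul_right, Complex.inner, two_mul,
    rpow_add (japBracket_pos ξ), mul_assoc]

lemma inner_sobolevEmb (e : ℝ) (f g : 𝓢(E, ℝ)) :
    inner ℝ (sobolevEmb e f) (sobolevEmb e g) =
      ∫ ξ, japBracket ξ ^ (2 * e) * (realFourier g ξ * conj (realFourier f ξ)).re := by
  rw [L2.inner_def]
  exact integral_congr_ae (inner_sobolevEmb_integrand_ae e f g)

lemma norm_sobolevEmb_sq (e : ℝ) (f : 𝓢(E, ℝ)) :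
    ‖sobolevEmb e f‖ ^ 2 = ∫ ξ, japBracket ξ ^ (2 * e) * ‖realFourier f ξ‖ ^ 2 := by
  rw [← real_inner_self_eq_norm_sq, inner_sobolevEmb]
  simp_rw [Complex.mul_conj', ← Complex.ofReal_pow, Complex.ofReal_re]

lemma integrable_sobolevEmb (e : ℝ) (f : 𝓢(E, ℝ)) :
    Integrable fun ξ => japBracket ξ ^ (2 * e) * ‖realFourier f ξ‖ ^ 2 := by
  refine ((L2.integrable_inner (sobolevEmb e f) (sobolevEmb e f)).congr
    (inner_sobolevEmb_integrand_ae e f f)).congr (.of_forall fun ξ => ?_)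
  simp_rw [Complex.mul_conj', ← Complex.ofReal_pow, Complex.ofReal_re]

lemma inner_sobolevEmb_laplacian (e : ℝ) (f : 𝓢(E, ℝ)) :
    inner ℝ (sobolevEmb e f) (sobolevEmb e (Δ f)) =
      -(4 * π ^ 2) * (‖sobolevEmb (e + 1) f‖ ^ 2 - ‖sobolevEmb e f‖ ^ 2) := by
  rw [inner_sobolevEmb, norm_sobolevEmb_sq, norm_sobolevEmb_sq,
    ← integral_sub (integrable_sobolevEmb _ f) (integrable_sobolevEmb _ f), ← integral_const_mul]
  refine integral_congr_ae (.of_forall fun ξ => ?_)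
  have hsq : japBracket ξ ^ (2 * (e + 1)) = japBracket ξ ^ (2 * e) * (1 + ‖ξ‖ ^ 2) := by
    rw [mul_add, mul_one, rpow_add (japBracket_pos ξ), rpow_two, japBracket_sq]
  dsimp only
  rw [realFourier_laplacian, mul_assoc, Complex.re_ofReal_mul, Complex.mul_conj',
    ← Complex.ofReal_pow, Complex.ofReal_re, hsq]
  ring

lemma inner_sobolevEmb_laplacian_nonpos (e : ℝ) (f : 𝓢(E, ℝ)) :
    inner ℝ (sobolevEmb e f) (sobolevEmb e (Δ f)) ≤ 0 := by
  have hmono : ‖sobolevEmb e f‖ ^ 2 ≤ ‖sobolevEmb (e + 1) f‖ ^ 2 := by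
    rw [norm_sobolevEmb_sq, norm_sobolevEmb_sq]
    refine integral_mono (integrable_sobolevEmb e f) (integrable_sobolevEmb (e + 1) f) fun ξ => ?_
    exact mul_le_mul_of_nonneg_right
      (rpow_le_rpow_of_exponent_le (one_le_japBracket ξ) (by linarith)) (sq_nonneg _)
  rw [inner_sobolevEmb_laplacian]
  exact mul_nonpos_of_nonpos_of_nonneg (by linarith [sq_nonneg π]) (sub_nonneg.2 hmono)

end RealFourier

/-! ### The nonlinear part of the energy balance -/

section EnergyForm

open SchwartzMap
open scoped SchwartzMap LineDeriv Laplacian ComplexConjugate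

/-- The determinant `p₀ q₁ - p₁ q₀`, which is the symbol of the Poisson bracket. -/
def cross (p q : Plane) : ℝ := p 0 * q 1 - p 1 * q 0

lemma cross_swap (p q : Plane) : cross q p = -cross p q := by
  unfold cross; ring

lemma cross_neg_sub (p q : Plane) : cross p (-p - q) = -cross p q := by
  simp only [cross, PiLp.sub_apply, PiLp.neg_apply]; ring

lemma abs_cross_le (p q : Plane) : |cross p q| ≤ japBracket p * japBracket q := by
  have hp := japBracket_pos p
  have hq := japBracket_pos q
  refine abs_le_of_sq_le_sq ?_ (by positivity)
  rw [mul_pow, japBracket_sq, japBracket_sq, EuclideanSpace.norm_sq_eq, EuclideanSpace.norm_sq_eq]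
  simp only [Fin.sum_univ_two, norm_eq_abs, sq_abs, cross]
  nlinarith [sq_nonneg (p 0 * q 0 + p 1 * q 1), sq_nonneg (p 0), sq_nonneg (p 1),
    sq_nonneg (q 0), sq_nonneg (q 1)]

@[fun_prop]
lemma hasTemperateGrowth_cross {F : Type*} [NormedAddCommGroup F] [NormedSpace ℝ F]
    {f g : F → Plane} (hf : f.HasTemperateGrowth) (hg : g.HasTemperateGrowth) :
    (fun z => cross (f z) (g z)).HasTemperateGrowth := by
  have hcoord (i : Fin 2) : (fun p : Plane => p i).HasTemperateGrowth :=
    (EuclideanSpace.proj i : Plane →L[ℝ] ℝ).hasTemperateGrowth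
  exact (((hcoord 0).comp hf).mul ((hcoord 1).comp hg)).sub
    (((hcoord 1).comp hf).mul ((hcoord 0).comp hg))

/-- The partial derivative `pd i`, as a continuous linear map on Schwartz functions. -/
def pdCLM (i : Fin 2) : 𝓢(Plane, ℝ) →L[ℝ] 𝓢(Plane, ℝ) :=
  LineDeriv.lineDerivOpCLM ℝ 𝓢(Plane, ℝ) (EuclideanSpace.single i 1 : Plane)

lemma realFourier_pdCLM (i : Fin 2) (f : 𝓢(Plane, ℝ)) (ξ : Plane) :
    realFourier (pdCLM i f) ξ = 2 * π * Complex.I * (ξ i : ℝ) * realFourier f ξ := by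
  simpa [EuclideanSpace.inner_single_right, pdCLM] using
    realFourier_lineDeriv (EuclideanSpace.single i (1 : ℝ) : Plane) f ξ

/-- The Poisson bracket `{f, g} = ∂ₓf ∂_yg - ∂_yf ∂ₓg`. -/
def poisson (f g : 𝓢(Plane, ℝ)) : 𝓢(Plane, ℝ) :=
  pairing (.mul ℝ ℝ) (pdCLM 0 f) (pdCLM 1 g) - pairing (.mul ℝ ℝ) (pdCLM 1 f) (pdCLM 0 g)

lemma realFourier_poisson (f g : 𝓢(Plane, ℝ)) (ξ : Plane) :
    realFourier (poisson f g) ξ =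
      (-(4 * π ^ 2) : ℝ) * ∫ η, cross η ξ * (realFourier f η * realFourier g (ξ - η)) := by
  rw [poisson, map_sub, sub_apply, realFourier_mul, realFourier_mul,
    ← integral_sub (integrable_realFourier_mul _ _ ξ) (integrable_realFourier_mul _ _ ξ),
    ← integral_const_mul]
  refine integral_congr_ae (.of_forall fun η => ?_)
  simp only [realFourier_pdCLM, cross, PiLp.sub_apply]
  push_cast
  linear_combination (4 * π ^ 2 * (η 0 * ξ 1 - η 1 * ξ 0) *
    (realFourier f η * realFourier g (ξ - η))) * Complex.I_sq

lemma hasTemperateGrowth_japBracket_mul_cross (e : ℝ) :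
    (fun p q : Plane => japBracket p ^ e * cross p q).uncurry.HasTemperateGrowth := by
  have hfst := (ContinuousLinearMap.fst ℝ Plane Plane).hasTemperateGrowth
  have hsnd := (ContinuousLinearMap.snd ℝ Plane Plane).hasTemperateGrowth
  exact ((hasTemperateGrowth_japBracket_rpow e).comp hfst).mul (hasTemperateGrowth_cross hfst hsnd)

lemma inner_sobolevEmb_poisson (e : ℝ) (f g h : 𝓢(Plane, ℝ)) :
    inner ℝ (sobolevEmb e h) (sobolevEmb e (poisson f g)) =
      -(4 * π ^ 2) * (trilinear (fun p q => japBracket p ^ (2 * e) * cross p q)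
        (realFourier h) (realFourier f) (realFourier g)).re := by
  have hint := (integrable_trilinear (hasTemperateGrowth_japBracket_mul_cross (2 * e))
    (realFourier h) (realFourier f) (realFourier g)).integral_prod_left
  rw [inner_sobolevEmb, trilinear, ← Complex.reCLM_apply,
    ← Complex.reCLM.integral_comp_comm hint, ← integral_const_mul, ← integral_neg_eq_self]
  refine integral_congr_ae (.of_forall fun p => ?_)
  have hinner : ∫ q, ((japBracket p ^ (2 * e) * cross p q : ℝ) : ℂ) *
      (realFourier h p * realFourier f q * realFourier g (-p - q)) =
      (japBracket p ^ (2 * e) : ℝ) * (realFourier h p * ∫ q, cross q (-p) *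
        (realFourier f q * realFourier g (-p - q))) := by
    rw [← integral_const_mul, ← integral_const_mul]
    refine integral_congr_ae (.of_forall fun q => ?_)
    have hcross : cross q (-p) = cross p q := by simp only [cross, PiLp.neg_apply]; ring
    dsimp only
    rw [hcross]
    push_cast
    ring
  dsimp only
  rw [Complex.reCLM_apply, hinner, mul_comm (realFourier h p), Complex.re_ofReal_mul,
    realFourier_poisson, realFourier_neg, Complex.conj_conj, japBracket_neg, mul_assoc,
    Complex.re_ofReal_mul, mul_left_comm]

/-- The energy balance of a solution `(a, b)` contains `trilinear (energyMultiplier s) â â b̂`,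
where hats denote Fourier transforms. -/
def energyMultiplier (s : ℝ) (p q : Plane) : ℝ :=
  (japBracket p ^ (2 * (s + 1)) + japBracket (-p - q) ^ (2 * s) * ‖q‖ ^ 2) * cross p q

lemma hasTemperateGrowth_energyMultiplier (s : ℝ) :
    (energyMultiplier s).uncurry.HasTemperateGrowth := by
  have hfst := (ContinuousLinearMap.fst ℝ Plane Plane).hasTemperateGrowth
  have hsnd := (ContinuousLinearMap.snd ℝ Plane Plane).hasTemperateGrowth
  exact (((hasTemperateGrowth_japBracket_rpow _).comp hfst).add
    (((hasTemperateGrowth_japBracket_rpow _).comp (hfst.neg.sub hsnd)).mul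
      (Function.HasTemperateGrowth.comp (g := fun q : Plane => ‖q‖ ^ 2) (by fun_prop) hsnd))).mul
    (hasTemperateGrowth_cross hfst hsnd)

lemma energyMultiplier_add_swap (s : ℝ) (p q : Plane) :
    energyMultiplier s p q + energyMultiplier s q p =
      energySymbol s (japBracket p) (japBracket q) (japBracket (-p - q)) * cross p q := by
  have hcomm : -q - p = -p - q := by abel
  rw [energyMultiplier, energyMultiplier, hcomm, cross_swap p q, energySymbol, japBracket_sq,
    japBracket_sq]
  ring

/-- The contribution of the Poisson brackets to the energy balance of a solution `(a, b)`. -/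
def energyForm (s : ℝ) (a b : 𝓢(Plane, ℝ)) : ℝ :=
  4 * π ^ 2 * inner ℝ (sobolevEmb (s + 1) a) (sobolevEmb (s + 1) (poisson a b)) -
    inner ℝ (sobolevEmb s b) (sobolevEmb s (poisson a (Δ a)))

lemma inner_sobolevEmb_poisson_laplacian (s : ℝ) (a b : 𝓢(Plane, ℝ)) :
    inner ℝ (sobolevEmb s b) (sobolevEmb s (poisson a (Δ a))) =
      16 * π ^ 4 * (trilinear (fun p q => japBracket (-p - q) ^ (2 * s) * ‖q‖ ^ 2 * cross p q)
        (realFourier a) (realFourier a) (realFourier b)).re := by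
  have hcross (p q : Plane) : cross (-p - q) p = cross p q := by
    rw [cross_swap, cross_neg_sub, neg_neg]
  have htri : trilinear (fun p q => japBracket (-p - q) ^ (2 * s) * cross p q)
        (realFourier a) (realFourier (Δ a)) (realFourier b) = (-(4 * π ^ 2) : ℝ) *
      trilinear (fun p q => japBracket (-p - q) ^ (2 * s) * ‖q‖ ^ 2 * cross p q)
        (realFourier a) (realFourier a) (realFourier b) := by
    simp only [trilinear, realFourier_laplacian, ← integral_const_mul]
    refine integral_congr_ae (.of_forall fun p => integral_congr_ae (.of_forall fun q => ?_))
    push_cast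
    ring
  rw [inner_sobolevEmb_poisson,
    trilinear_swap (hasTemperateGrowth_japBracket_mul_cross (2 * s)), trilinear_comm_right]
  simp only [hcross]
  rw [htri, Complex.re_ofReal_mul]
  ring

lemma energyForm_eq_trilinear (s : ℝ) (a b : 𝓢(Plane, ℝ)) :
    energyForm s a b = -(8 * π ^ 4) * (trilinear (fun p q =>
      energySymbol s (japBracket p) (japBracket q) (japBracket (-p - q)) * cross p q)
        (realFourier a) (realFourier a) (realFourier b)).re := by
  have hsub : trilinear (fun p q => japBracket (-p - q) ^ (2 * s) * ‖q‖ ^ 2 * cross p q)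
        (realFourier a) (realFourier a) (realFourier b) =
      trilinear (energyMultiplier s) (realFourier a) (realFourier a) (realFourier b) -
        trilinear (fun p q => japBracket p ^ (2 * (s + 1)) * cross p q)
          (realFourier a) (realFourier a) (realFourier b) := by
    rw [← trilinear_sub (hasTemperateGrowth_energyMultiplier s)
      (hasTemperateGrowth_japBracket_mul_cross _)]
    simp only [energyMultiplier, add_mul, add_sub_cancel_left]
  have hsym := two_mul_trilinear_self (hasTemperateGrowth_energyMultiplier s)
    (realFourier a) (realFourier b)
  simp only [energyMultiplier_add_swap] at hsym
  rw [energyForm, inner_sobolevEmb_poisson, inner_sobolevEmb_poisson_laplacian, hsub, ← hsym,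
    Complex.sub_re, ← Complex.ofReal_ofNat, Complex.re_ofReal_mul]
  ring

lemma abs_energySymbol_mul_cross_le {s : ℝ} (hs : 1 / 2 ≤ s) (p q : Plane) :
    |energySymbol s (japBracket p) (japBracket q) (japBracket (-p - q)) * cross p q| ≤
      symbolConst s * ((japBracket p * japBracket q * japBracket (-p - q)) ^ (s + 1) *
        (japBracket p ^ (-(s - 1)) + japBracket q ^ (-(s - 1)) +
          japBracket (-p - q) ^ (-(s - 1)))) := by
  have hpr := abs_cross_le p (-p - q)
  have hqr := abs_cross_le q (-q - p)
  rw [cross_neg_sub, abs_neg] at hpr hqr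
  rw [cross_swap, abs_neg, japBracket_neg_sub, add_comm, ← japBracket_neg_sub] at hqr
  have hpqr := japBracket_le_add_japBracket_add p q
  have hqpr := japBracket_le_add_japBracket_add q p
  rw [add_comm q] at hqpr
  rw [abs_mul, mul_comm, neg_sub]
  refine mul_abs_energySymbol_le hs (japBracket_pos _) (japBracket_pos _) (japBracket_pos _)
    ?_ ?_ ?_ (abs_cross_le p q) hqr hpr
  · rwa [japBracket_neg_sub]
  · rwa [japBracket_neg_sub]
  · rw [japBracket_neg_sub]; exact japBracket_add_le p q

/-- The constant in `abs_energyForm_le`. -/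
def energyConst (s : ℝ) : ℝ := 24 * π ^ 4 * symbolConst s * bracketL2Norm Plane (s - 1)

lemma abs_energyForm_le {s : ℝ} (hs : 2 < s) (a b : 𝓢(Plane, ℝ)) :
    |energyForm s a b| ≤
      energyConst s * (‖sobolevEmb (s + 1) a‖ ^ 2 * ‖sobolevEmb (s + 1) b‖) := by
  have hdim : (Module.finrank ℝ Plane : ℝ) < 2 * (s - 1) := by
    rw [finrank_euclideanSpace_fin]; push_cast; linarith
  have hconst : 0 ≤ symbolConst s := by unfold symbolConst; positivity
  have htri := norm_trilinear_le hdim hconst (abs_energySymbol_mul_cross_le (by linarith))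
    (realFourier a) (realFourier a) (realFourier b)
  rw [energyForm_eq_trilinear, abs_mul, abs_neg, abs_of_pos (by positivity)]
  calc _ ≤ 8 * π ^ 4 * (3 * symbolConst s * bracketL2Norm Plane (s - 1) *
      (‖sobolevEmb (s + 1) a‖ * ‖sobolevEmb (s + 1) a‖ * ‖sobolevEmb (s + 1) b‖)) := by
        gcongr
        exact (Complex.abs_re_le_norm _).trans htri
    _ = _ := by rw [energyConst]; ring

end EnergyForm

/-! ### Curves of Schwartz functions -/

section EventuallyBounded

open Filter

variable {ι : Type*} {l : Filter ι} {V W : Type*} [AddCommGroup V] [Module ℝ V] [TopologicalSpace V]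
  [AddCommGroup W] [Module ℝ W] [TopologicalSpace W] {u : ι → V}

/-- A family in a topological vector space is eventually bounded along a filter if every continuous
seminorm is. The set of parameters on which a bound holds may depend on the seminorm. -/
def EventuallyBounded (l : Filter ι) (u : ι → V) : Prop :=
  ∀ p : Seminorm ℝ V, Continuous p → l.IsBoundedUnder (· ≤ ·) fun τ => p (u τ)

lemma eventuallyBounded_of_withSeminorms {κ : Type*} {p : SeminormFamily ℝ V κ}
    (hp : WithSeminorms p) (hu : ∀ i, l.IsBoundedUnder (· ≤ ·) fun τ => p i (u τ)) :
    EventuallyBounded l u := by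
  intro q hq
  obtain ⟨s, C, -, hqs⟩ := Seminorm.bound_of_continuous hp q hq
  obtain ⟨K, hK⟩ := isBoundedUnder_le_sum s fun i _ => hu i
  refine ⟨C * K, eventually_map.2 ((eventually_map.1 hK).mono fun τ hτ => ?_)⟩
  rw [Finset.sum_apply] at hτ
  calc q (u τ) ≤ C * s.sup p (u τ) := hqs (u τ)
    _ ≤ C * ∑ i ∈ s, p i (u τ) := by
        gcongr
        simpa using Seminorm.finset_sup_le_sum p s (u τ)
    _ ≤ C * K := by gcongr

lemma EventuallyBounded.map (hu : EventuallyBounded l u) (L : V →L[ℝ] W) :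
    EventuallyBounded l fun τ => L (u τ) :=
  fun p hp => hu (p.comp L.toLinearMap) (hp.comp L.continuous)

end EventuallyBounded

section EventuallyDominated

open Filter

variable {ι : Type*} {l : Filter ι} {α F : Type*} [MeasureSpace α] [NormedAddCommGroup F]
  {u v : ι → α → F}

/-- The domination hypothesis of the dominated convergence theorem. -/
def EventuallyDominated (l : Filter ι) (u : ι → α → F) : Prop :=
  ∃ bound : α → ℝ, Integrable bound ∧ ∀ᶠ τ in l, ∀ x, ‖u τ x‖ ≤ bound x

lemma EventuallyDominated.add (hu : EventuallyDominated l u) (hv : EventuallyDominated l v) :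
    EventuallyDominated l (u + v) := by
  obtain ⟨U, hU, huU⟩ := hu
  obtain ⟨V, hV, hvV⟩ := hv
  refine ⟨U + V, hU.add hV, ?_⟩
  filter_upwards [huU, hvV] with τ hτu hτv x using norm_add_le_of_le (hτu x) (hτv x)

lemma EventuallyDominated.neg (hu : EventuallyDominated l u) : EventuallyDominated l (-u) := by
  simpa [EventuallyDominated] using hu

lemma EventuallyDominated.sub (hu : EventuallyDominated l u) (hv : EventuallyDominated l v) :
    EventuallyDominated l (u - v) := by
  simpa [sub_eq_add_neg] using hu.add hv.neg

lemma EventuallyDominated.bdd_mul {R : Type*} [NormedRing R] {u v : ι → α → R} {K : ℝ}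
    (hu : ∀ᶠ τ in l, ∀ x, ‖u τ x‖ ≤ K) (hv : EventuallyDominated l v) :
    EventuallyDominated l (u * v) := by
  obtain ⟨V, hV, hvV⟩ := hv
  refine ⟨fun x => K * V x, hV.const_mul K, ?_⟩
  filter_upwards [hu, hvV] with τ hτu hτv x
  exact norm_mul_le_of_le (hτu x) (hτv x)

end EventuallyDominated

section SchwartzCurve

open Filter Topology SchwartzMap
open scoped SchwartzMap ComplexConjugate

variable {ι : Type*} {l : Filter ι} {E F : Type*} [NormedAddCommGroup E] [NormedAddCommGroup F]
  [NormedSpace ℝ F]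

lemma EventuallyBounded.exists_norm_apply_le [NormedSpace ℝ E] {u : ι → 𝓢(E, F)}
    (hu : EventuallyBounded l u) : ∃ K, ∀ᶠ τ in l, ∀ x, ‖u τ x‖ ≤ K := by
  obtain ⟨K, hK⟩ := hu (SchwartzMap.seminorm ℝ 0 0)
    ((schwartz_withSeminorms ℝ E F).continuous_seminorm (0, 0))
  exact ⟨K, (eventually_map.1 hK).mono fun τ hτ x => (norm_le_seminorm ℝ _ x).trans hτ⟩

lemma eventuallyBounded_of_seminorm_le [NormedSpace ℝ E] {u : ℝ → 𝓢(E, F)} {S : Set ℝ}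
    {t : ℝ}
    (hu : ∀ k n : ℕ, ∃ δ > 0, ∃ K : ℝ, ∀ τ ∈ S, |τ - t| < δ →
      SchwartzMap.seminorm ℝ k n (u τ) ≤ K) :
    EventuallyBounded (𝓝[S] t) u := by
  refine eventuallyBounded_of_withSeminorms (schwartz_withSeminorms ℝ E F) fun m => ?_
  obtain ⟨δ, hδ, K, hK⟩ := hu m.1 m.2
  refine ⟨K, eventually_map.2 (eventually_nhdsWithin_iff.2 ?_)⟩
  filter_upwards [Metric.ball_mem_nhds t hδ] with τ hτ hτS using hK τ hτS hτ

variable [InnerProductSpace ℝ E] [FiniteDimensional ℝ E] [MeasurableSpace E] [BorelSpace E]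

lemma EventuallyBounded.eventuallyDominated {u : ι → 𝓢(E, F)} (hu : EventuallyBounded l u) :
    EventuallyDominated l fun τ => ⇑(u τ) := by
  set d := Module.finrank ℝ E + 1
  set p : Seminorm ℝ 𝓢(E, F) := (Finset.Iic (d, 0)).sup fun m => SchwartzMap.seminorm ℝ m.1 m.2
  obtain ⟨K, hK⟩ := hu p (Seminorm.continuous_finsetSup fun m _ =>
    (schwartz_withSeminorms ℝ E F).continuous_seminorm m)
  refine ⟨fun x => 2 ^ d * K * (1 + ‖x‖) ^ (-(d : ℝ)),
    (integrable_one_add_norm (by simp [d])).const_mul _, ?_⟩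
  filter_upwards [eventually_map.1 hK] with τ hτ x
  have hdecay := one_add_le_sup_seminorm_apply (𝕜 := ℝ) (m := (d, 0)) le_rfl le_rfl (u τ) x
  rw [norm_iteratedFDeriv_zero] at hdecay
  rw [rpow_neg (by positivity), rpow_natCast, ← div_eq_mul_inv, le_div_iff₀ (by positivity),
    mul_comm]
  exact hdecay.trans (by gcongr)

lemma EventuallyBounded.eventuallyDominated_japBracket_smul {u : ι → 𝓢(E, F)}
    (hu : EventuallyBounded l u) (e : ℝ) :
    EventuallyDominated l fun τ ξ => japBracket ξ ^ e • u τ ξ := by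
  simpa only [smulLeftCLM_apply (hasTemperateGrowth_japBracket_rpow (E := E) e)] using
    (hu.map (smulLeftCLM F fun ξ : E => japBracket ξ ^ e)).eventuallyDominated

lemma norm_realFourier_le (f : 𝓢(E, ℝ)) (ξ : E) : ‖realFourier f ξ‖ ≤ ∫ x, ‖f x‖ := by
  have h := VectorFourier.norm_fourierIntegral_le_integral_norm 𝐞 volume (innerₗ E)
    (fun x => (f x : ℂ)) ξ
  simp only [Complex.norm_real] at h
  exact h

lemma EventuallyDominated.exists_norm_realFourier_le {u : ι → 𝓢(E, ℝ)}
    (hu : EventuallyDominated l fun τ => ⇑(u τ)) :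
    ∃ K, ∀ᶠ τ in l, ∀ ξ, ‖realFourier (u τ) ξ‖ ≤ K := by
  obtain ⟨U, hU, huU⟩ := hu
  refine ⟨∫ x, U x, huU.mono fun τ hτ ξ => (norm_realFourier_le _ ξ).trans ?_⟩
  exact integral_mono (u τ).integrable.norm hU hτ

lemma tendsto_realFourier [l.IsCountablyGenerated] {u : ι → 𝓢(E, ℝ)} {v : 𝓢(E, ℝ)}
    (hu : EventuallyDominated l fun τ => ⇑(u τ)) (h : ∀ x, Tendsto (fun τ => u τ x) l (𝓝 (v x)))
    (ξ : E) : Tendsto (fun τ => realFourier (u τ) ξ) l (𝓝 (realFourier v ξ)) := by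
  obtain ⟨U, hU, huU⟩ := hu
  simp only [coe_realFourier, fourier_eq]
  refine tendsto_integral_filter_of_dominated_convergence U (.of_forall fun τ => ?_)
    (huU.mono fun τ hτ => .of_forall fun x => ?_) hU (.of_forall fun x => ?_)
  · exact Continuous.aestronglyMeasurable (by fun_prop)
  · simpa using hτ x
  · exact ((Complex.continuous_ofReal.tendsto _).comp (h x)).const_smul _

lemma hasDerivAt_realFourier {u u' : ℝ → 𝓢(E, ℝ)} {t : ℝ}
    (hu : ∀ᶠ τ in 𝓝 t, ∀ x, HasDerivAt (fun r => u r x) (u' τ x) τ)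
    (hu' : EventuallyDominated (𝓝 t) fun τ => ⇑(u' τ)) (ξ : E) :
    HasDerivAt (fun τ => realFourier (u τ) ξ) (realFourier (u' t) ξ) t := by
  obtain ⟨U, hU, huU⟩ := hu'
  simp only [coe_realFourier, fourier_eq]
  refine (hasDerivAt_integral_of_dominated_loc_of_deriv_le (hu.and huU) (bound := U)
    (F' := fun τ x => 𝐞 (-inner ℝ x ξ) • (u' τ x : ℂ)) (.of_forall fun τ => ?_) ?_ ?_
    (.of_forall fun x τ hτ => ?_) hU (.of_forall fun x τ hτ => ?_)).2
  · exact Continuous.aestronglyMeasurable (by fun_prop)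
  · exact (fourierIntegral_convergent_iff ξ).2 (u t).integrable.ofReal
  · exact Continuous.aestronglyMeasurable (by fun_prop)
  · simpa using hτ.2 x
  · exact (hτ.1 x).ofReal_comp.const_smul _

lemma EventuallyBounded.eventuallyDominated_inner {u : ι → 𝓢(E, ℂ)} {w : ι → E → ℂ} {K : ℝ}
    (hu : EventuallyBounded l u) (hw : ∀ᶠ τ in l, ∀ ξ, ‖w τ ξ‖ ≤ K) (e : ℝ) :
    EventuallyDominated l fun τ ξ => japBracket ξ ^ e * inner ℝ (u τ ξ) (w τ ξ) := by
  obtain ⟨U, hU, huU⟩ := hu.eventuallyDominated_japBracket_smul e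
  refine ⟨fun ξ => U ξ * K, hU.mul_const K, ?_⟩
  filter_upwards [huU, hw] with τ hτu hτw ξ
  rw [← real_inner_smul_left]
  exact (norm_inner_le_norm _ _).trans
    (mul_le_mul (hτu ξ) (hτw ξ) (norm_nonneg _) ((norm_nonneg _).trans (hτu ξ)))

lemma tendsto_norm_sobolevEmb_sq [l.IsCountablyGenerated] {u : ι → 𝓢(E, ℝ)} {v : 𝓢(E, ℝ)}
    (hu : EventuallyBounded l u) (h : ∀ x, Tendsto (fun τ => u τ x) l (𝓝 (v x))) (e : ℝ) :
    Tendsto (fun τ => ‖sobolevEmb e (u τ)‖ ^ 2) l (𝓝 (‖sobolevEmb e v‖ ^ 2)) := by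
  obtain ⟨K, hK⟩ := (hu.map realFourier).exists_norm_apply_le
  obtain ⟨U, hU, huU⟩ := (hu.map realFourier).eventuallyDominated_inner hK (2 * e)
  simp only [real_inner_self_eq_norm_sq] at huU
  simp only [norm_sobolevEmb_sq]
  refine tendsto_integral_filter_of_dominated_convergence U
    (.of_forall fun τ => (integrable_sobolevEmb e (u τ)).aestronglyMeasurable)
    (huU.mono fun τ hτ => .of_forall hτ) hU (.of_forall fun ξ => ?_)
  exact ((tendsto_realFourier hu.eventuallyDominated h ξ).norm.pow 2).const_mul _

lemma hasDerivAt_norm_sobolevEmb_sq {u u' : ℝ → 𝓢(E, ℝ)} {t : ℝ} (hu : EventuallyBounded (𝓝 t) u)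
    (hd : ∀ᶠ τ in 𝓝 t, ∀ x, HasDerivAt (fun r => u r x) (u' τ x) τ)
    (hu' : EventuallyDominated (𝓝 t) fun τ => ⇑(u' τ)) (e : ℝ) :
    HasDerivAt (fun τ => ‖sobolevEmb e (u τ)‖ ^ 2)
      (2 * inner ℝ (sobolevEmb e (u t)) (sobolevEmb e (u' t))) t := by
  obtain ⟨K, hK⟩ := hu'.exists_norm_realFourier_le
  obtain ⟨U, hU, huU⟩ := (hu.map realFourier).eventuallyDominated_inner hK (2 * e)
  have hderiv : ∀ᶠ τ in 𝓝 t, ∀ ξ, HasDerivAt (fun r => realFourier (u r) ξ)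
      (realFourier (u' τ) ξ) τ := by
    obtain ⟨V, hV, huV⟩ := hu'
    filter_upwards [hd.eventually_nhds, huV.eventually_nhds] with τ hτd hτV ξ
    exact hasDerivAt_realFourier hτd ⟨V, hV, hτV⟩ ξ
  rw [inner_sobolevEmb, ← integral_const_mul]
  simp only [norm_sobolevEmb_sq, ← Complex.inner]
  refine (hasDerivAt_integral_of_dominated_loc_of_deriv_le (hderiv.and huU)
    (bound := fun ξ => 2 * U ξ) (F' := fun τ ξ => 2 * (japBracket ξ ^ (2 * e) *
      inner ℝ (realFourier (u τ) ξ) (realFourier (u' τ) ξ)))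
    (.of_forall fun τ => (integrable_sobolevEmb e (u τ)).aestronglyMeasurable)
    (integrable_sobolevEmb e (u t)) ?_ (.of_forall fun ξ τ hτ => ?_) (hU.const_mul 2)
    (.of_forall fun ξ τ hτ => ?_)).2
  · have hcont : Continuous fun ξ : E => japBracket ξ ^ (2 * e) :=
      (hasTemperateGrowth_japBracket_rpow _).1.continuous
    exact Continuous.aestronglyMeasurable (by fun_prop)
  · simpa using hτ.2 ξ
  · exact ((hτ.1 ξ).norm_sq.const_mul _).congr_deriv (by ring)

end SchwartzCurve

/-! ### A quadratic differential inequality -/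

section QuadraticGrowth

-- The function `e^{-ct} F / (1 + F)` is nonincreasing.
lemma div_one_add_le_exp_mul_of_deriv_le {F F' : ℝ → ℝ} {c T : ℝ} (hF : ∀ t, 0 ≤ F t)
    (hcont : ContinuousOn F (Set.Ico 0 T))
    (hderiv : ∀ t ∈ Set.Ioo 0 T, HasDerivAt F (F' t) t)
    (hle : ∀ t ∈ Set.Ioo 0 T, F' t ≤ c * (F t ^ 2 + F t)) {t : ℝ} (ht : t ∈ Set.Ico 0 T) :
    F t / (1 + F t) ≤ exp (c * t) * (F 0 / (1 + F 0)) := by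
  have hpos (r : ℝ) : 0 < 1 + F r := by linarith [hF r]
  have hd (r : ℝ) (hr : r ∈ Set.Ioo 0 T) : HasDerivAt (fun r => exp (-(c * r)) * (F r / (1 + F r)))
      (exp (-(c * r)) * ((F' r - c * (F r ^ 2 + F r)) / (1 + F r) ^ 2)) r := by
    have hexp : HasDerivAt (fun r => exp (-(c * r))) (exp (-(c * r)) * -c) r := by
      simpa using ((hasDerivAt_id r).const_mul c).neg.exp
    have hdiv : HasDerivAt (fun r => F r / (1 + F r)) _ r :=
      (hderiv r hr).div ((hderiv r hr).const_add 1) (hpos r).ne'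
    refine (hexp.mul hdiv).congr_deriv ?_
    have hne := (hpos r).ne'
    field_simp
    ring
  have hanti : AntitoneOn (fun r => exp (-(c * r)) * (F r / (1 + F r))) (Set.Ico 0 T) := by
    refine antitoneOn_of_deriv_nonpos (convex_Ico 0 T) ?_ ?_ ?_
    · exact (Continuous.continuousOn (by fun_prop)).mul
        (hcont.div (hcont.const_add 1) fun r _ => (hpos r).ne')
    · rw [interior_Ico]
      exact fun r hr => (hd r hr).differentiableAt.differentiableWithinAt
    · rw [interior_Ico]
      intro r hr
      rw [(hd r hr).deriv]
      exact mul_nonpos_of_nonneg_of_nonpos (exp_pos _).le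
        (div_nonpos_of_nonpos_of_nonneg (sub_nonpos.2 (hle r hr)) (sq_nonneg _))
  have h := hanti ⟨le_rfl, ht.1.trans_lt ht.2⟩ ht ht.1
  simp only [mul_zero, neg_zero, exp_zero, one_mul, exp_neg] at h
  rwa [inv_mul_le_iff₀ (exp_pos _)] at h

lemma le_two_mul_of_div_one_add_le {x y M q : ℝ} (hx : 0 ≤ x) (hy : 0 ≤ y) (hyM : y ≤ M)
    (hq : q ≤ 1 + (1 + 2 * M)⁻¹) (h : x / (1 + x) ≤ q * (y / (1 + y))) : x ≤ 2 * y := by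
  have hqy : q * (y / (1 + y)) ≤ 2 * y / (1 + 2 * y) := calc
    _ ≤ (1 + (1 + 2 * y)⁻¹) * (y / (1 + y)) := by
        gcongr
        refine hq.trans ?_
        gcongr
    _ = _ := by field_simp; ring
  have := h.trans hqy
  rw [div_le_div_iff₀ (by positivity) (by positivity)] at this
  linarith

/-- A time before which a function whose initial value is at most `M` and whose derivative satisfies
`F' ≤ c (F² + F)` cannot double. -/
def doublingTime (c M : ℝ) : ℝ := log (1 + (1 + 2 * M)⁻¹) / c

lemma doublingTime_pos {c M : ℝ} (hc : 0 < c) (hM : 0 ≤ M) : 0 < doublingTime c M :=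
  div_pos (log_pos (lt_add_of_pos_right 1 (by positivity))) hc

lemma le_two_mul_of_lt_doublingTime {F F' : ℝ → ℝ} {c M T : ℝ} (hc : 0 < c) (hF : ∀ t, 0 ≤ F t)
    (hcont : ContinuousOn F (Set.Ico 0 T))
    (hderiv : ∀ t ∈ Set.Ioo 0 T, HasDerivAt F (F' t) t)
    (hle : ∀ t ∈ Set.Ioo 0 T, F' t ≤ c * (F t ^ 2 + F t)) (hM : F 0 ≤ M) {t : ℝ}
    (ht : t ∈ Set.Ico 0 T) (htM : t < doublingTime c M) : F t ≤ 2 * F 0 := by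
  have hM₀ : 0 ≤ M := (hF 0).trans hM
  refine le_two_mul_of_div_one_add_le (hF t) (hF 0) hM ?_
    (div_one_add_le_exp_mul_of_deriv_le hF hcont hderiv hle ht)
  rw [← le_log_iff_exp_le (by positivity), mul_comm]
  exact ((lt_div_iff₀ hc).1 htM).le

end QuadraticGrowth

/-! ### Solutions of the electron MHD system -/

section EMHD

open Filter Topology SchwartzMap
open scoped SchwartzMap LineDeriv Laplacian

lemma sobNorm_sq (e : ℝ) (f : 𝓢(Plane, ℝ)) : sobNorm e f ^ 2 = ‖sobolevEmb e f‖ ^ 2 := by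
  have h : ∫ ξ : Plane, (1 + ‖ξ‖ ^ 2) ^ e * ‖𝓕 (fun x => (f x : ℂ)) ξ‖ ^ 2 =
      ‖sobolevEmb e f‖ ^ 2 := by
    simp only [norm_sobolevEmb_sq, japBracket_rpow, mul_div_cancel_left₀ e two_ne_zero,
      coe_realFourier]
  rw [sobNorm, h, ← sqrt_eq_rpow, sqrt_sq (norm_nonneg _)]

lemma poisson_apply (f g : 𝓢(Plane, ℝ)) (x : Plane) :
    poisson f g x = pd 0 f x * pd 1 g x - pd 1 f x * pd 0 g x := rfl

lemma laplacian_eq_pdCLM (f : 𝓢(Plane, ℝ)) : Δ f = pdCLM 0 (pdCLM 0 f) + pdCLM 1 (pdCLM 1 f) := by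
  rw [laplacian_eq_sum (EuclideanSpace.basisFun (Fin 2) ℝ), Fin.sum_univ_two]
  simp [pdCLM]

lemma coe_laplacian (f : 𝓢(Plane, ℝ)) : ⇑(Δ f : 𝓢(Plane, ℝ)) = lap f := by
  rw [laplacian_eq_pdCLM]
  rfl

lemma EventuallyBounded.eventuallyDominated_poisson {ι : Type*} {l : Filter ι}
    {f g : ι → 𝓢(Plane, ℝ)} (hf : EventuallyBounded l f) (hg : EventuallyBounded l g) :
    EventuallyDominated l fun τ => ⇑(poisson (f τ) (g τ)) := by
  obtain ⟨K₀, hK₀⟩ := (hf.map (pdCLM 0)).exists_norm_apply_le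
  obtain ⟨K₁, hK₁⟩ := (hf.map (pdCLM 1)).exists_norm_apply_le
  exact ((hg.map (pdCLM 1)).eventuallyDominated.bdd_mul hK₀).sub
    ((hg.map (pdCLM 0)).eventuallyDominated.bdd_mul hK₁)

lemma EventuallyBounded.laplacian {ι : Type*} {l : Filter ι} {f : ι → 𝓢(Plane, ℝ)}
    (hf : EventuallyBounded l f) : EventuallyBounded l fun τ => Δ (f τ) :=
  hf.map (LineDeriv.laplacianCLM ℝ Plane 𝓢(Plane, ℝ))

/-- The time derivative of `a` prescribed by the electron MHD system with horizontal resistivity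
`μ`. -/
def emhdRateFst (μ : ℝ) (a b : 𝓢(Plane, ℝ)) : 𝓢(Plane, ℝ) := poisson a b + μ • Δ a

/-- The time derivative of `b` prescribed by the electron MHD system with vertical resistivity
`ν`. -/
def emhdRateSnd (ν : ℝ) (a b : 𝓢(Plane, ℝ)) : 𝓢(Plane, ℝ) := ν • Δ b - poisson a (Δ a)

section Rates

variable {ι : Type*} {l : Filter ι} {a b : ι → 𝓢(Plane, ℝ)}

lemma EventuallyBounded.eventuallyDominated_emhdRateFst (ha : EventuallyBounded l a)
    (hb : EventuallyBounded l b) (μ : ℝ) :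
    EventuallyDominated l fun τ => ⇑(emhdRateFst μ (a τ) (b τ)) :=
  (ha.eventuallyDominated_poisson hb).add
    (ha.laplacian.map (μ • ContinuousLinearMap.id ℝ _)).eventuallyDominated

lemma EventuallyBounded.eventuallyDominated_emhdRateSnd (ha : EventuallyBounded l a)
    (hb : EventuallyBounded l b) (ν : ℝ) :
    EventuallyDominated l fun τ => ⇑(emhdRateSnd ν (a τ) (b τ)) := by
  have hΔ : EventuallyDominated l fun τ => ⇑(ν • Δ (b τ)) :=
    (hb.laplacian.map (ν • ContinuousLinearMap.id ℝ 𝓢(Plane, ℝ))).eventuallyDominated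
  have hP : EventuallyDominated l fun τ => ⇑(poisson (a τ) (Δ (a τ))) :=
    ha.eventuallyDominated_poisson ha.laplacian
  exact hΔ.sub hP

end Rates

/-- A solution of the 2½D electron MHD system on the time interval `[0, T)`, with resistivities `μ`
and `ν`. The Schwartz seminorms are locally bounded in time; in time, only pointwise
differentiability is required. -/
structure IsEMHDSolution (μ ν T : ℝ) (a b : ℝ → 𝓢(Plane, ℝ)) : Prop where
  hasDerivWithinAt_fst : ∀ t ∈ Set.Ico 0 T, ∀ x,
    HasDerivWithinAt (fun τ => a τ x) (emhdRateFst μ (a t) (b t) x) (Set.Ico 0 T) t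
  hasDerivWithinAt_snd : ∀ t ∈ Set.Ico 0 T, ∀ x,
    HasDerivWithinAt (fun τ => b τ x) (emhdRateSnd ν (a t) (b t) x) (Set.Ico 0 T) t
  eventuallyBounded_fst : ∀ t ∈ Set.Ico 0 T, EventuallyBounded (𝓝[Set.Ico 0 T] t) a
  eventuallyBounded_snd : ∀ t ∈ Set.Ico 0 T, EventuallyBounded (𝓝[Set.Ico 0 T] t) b

/-- The energy `4π² ‖a‖²_{H^{s+1}} + ‖b‖²_{H^s}`. The factor `4π²` comes from the normalization of
the Fourier transform; with it the highest-order terms of the energy balance cancel. -/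
def emhdEnergy (s : ℝ) (a b : 𝓢(Plane, ℝ)) : ℝ :=
  4 * π ^ 2 * ‖sobolevEmb (s + 1) a‖ ^ 2 + ‖sobolevEmb s b‖ ^ 2

/-- The time derivative of `emhdEnergy` along solutions. -/
def emhdEnergyRate (μ ν s : ℝ) (a b : 𝓢(Plane, ℝ)) : ℝ :=
  2 * energyForm s a b +
    2 * (4 * π ^ 2 * μ * inner ℝ (sobolevEmb (s + 1) a) (sobolevEmb (s + 1) (Δ a)) +
      ν * inner ℝ (sobolevEmb s b) (sobolevEmb s (Δ b)))

lemma emhdEnergy_nonneg (s : ℝ) (a b : 𝓢(Plane, ℝ)) : 0 ≤ emhdEnergy s a b := by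
  unfold emhdEnergy; positivity

namespace IsEMHDSolution

variable {μ ν T : ℝ} {a b : ℝ → 𝓢(Plane, ℝ)}

lemma continuousOn_emhdEnergy (h : IsEMHDSolution μ ν T a b) (s : ℝ) :
    ContinuousOn (fun t => emhdEnergy s (a t) (b t)) (Set.Ico 0 T) := by
  intro t ht
  have ha := tendsto_norm_sobolevEmb_sq (h.eventuallyBounded_fst t ht)
    (fun x => (h.hasDerivWithinAt_fst t ht x).continuousWithinAt.tendsto) (s + 1)
  have hb := tendsto_norm_sobolevEmb_sq (h.eventuallyBounded_snd t ht)
    (fun x => (h.hasDerivWithinAt_snd t ht x).continuousWithinAt.tendsto) s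
  exact (ha.const_mul _).add hb

lemma hasDerivAt_emhdEnergy (h : IsEMHDSolution μ ν T a b) (s : ℝ) {t : ℝ}
    (ht : t ∈ Set.Ioo 0 T) : HasDerivAt (fun τ => emhdEnergy s (a τ) (b τ))
      (emhdEnergyRate μ ν s (a t) (b t)) t := by
  have hmem : ∀ τ ∈ Set.Ioo 0 T, Set.Ico 0 T ∈ 𝓝 τ := fun τ hτ => Ico_mem_nhds hτ.1 hτ.2
  have hsub : Set.Ioo 0 T ⊆ Set.Ico 0 T := Set.Ioo_subset_Ico_self
  have hev : ∀ᶠ τ in 𝓝 t, τ ∈ Set.Ioo 0 T := Ioo_mem_nhds ht.1 ht.2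
  have ha := h.eventuallyBounded_fst t (hsub ht)
  have hb := h.eventuallyBounded_snd t (hsub ht)
  rw [nhdsWithin_eq_nhds.2 (hmem t ht)] at ha hb
  have hda := hasDerivAt_norm_sobolevEmb_sq ha
    (hev.mono fun τ hτ x => (h.hasDerivWithinAt_fst τ (hsub hτ) x).hasDerivAt (hmem τ hτ))
    (ha.eventuallyDominated_emhdRateFst hb μ) (s + 1)
  have hdb := hasDerivAt_norm_sobolevEmb_sq hb
    (hev.mono fun τ hτ x => (h.hasDerivWithinAt_snd τ (hsub hτ) x).hasDerivAt (hmem τ hτ))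
    (ha.eventuallyDominated_emhdRateSnd hb ν) s
  refine ((hda.const_mul _).add hdb).congr_deriv ?_
  rw [emhdRateFst, emhdRateSnd, map_add, map_sub, map_smul, map_smul, inner_add_right,
    inner_sub_right, real_inner_smul_right, real_inner_smul_right, emhdEnergyRate, energyForm]
  ring

end IsEMHDSolution

/-- The constant in `emhdEnergyRate_le`. -/
def energyGrowth (s ν : ℝ) : ℝ := energyConst s ^ 2 / (8 * π ^ 2 * ν) + 8 * π ^ 2 * ν

lemma energyGrowth_pos (s : ℝ) {ν : ℝ} (hν : 0 < ν) : 0 < energyGrowth s ν := by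
  unfold energyGrowth; positivity

lemma le_emhdEnergy (s : ℝ) (a b : 𝓢(Plane, ℝ)) :
    ‖sobolevEmb (s + 1) a‖ ^ 2 + ‖sobolevEmb s b‖ ^ 2 ≤ emhdEnergy s a b :=
  add_le_add_left (le_mul_of_one_le_left (sq_nonneg _) (by nlinarith [pi_gt_three])) _

lemma emhdEnergy_le (s : ℝ) (a b : 𝓢(Plane, ℝ)) :
    emhdEnergy s a b ≤ 4 * π ^ 2 * (‖sobolevEmb (s + 1) a‖ ^ 2 + ‖sobolevEmb s b‖ ^ 2) := by
  rw [mul_add]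
  exact add_le_add_right (le_mul_of_one_le_left (sq_nonneg _) (by nlinarith [pi_gt_three])) _

-- The resistive term `-8π²ν ‖b‖²_{H^{s+1}}` absorbs the factor `‖b‖_{H^{s+1}}` of the trilinear
-- bound.
lemma emhdEnergyRate_le {μ ν s : ℝ} (hμ : 0 ≤ μ) (hν : 0 < ν) (hs : 2 < s) (a b : 𝓢(Plane, ℝ)) :
    emhdEnergyRate μ ν s a b ≤
      energyGrowth s ν * (emhdEnergy s a b ^ 2 + emhdEnergy s a b) := by
  have hE := le_emhdEnergy s a b
  have ha : μ * inner ℝ (sobolevEmb (s + 1) a) (sobolevEmb (s + 1) (Δ a)) ≤ 0 :=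
    mul_nonpos_of_nonneg_of_nonpos hμ (inner_sobolevEmb_laplacian_nonpos _ a)
  have hb := inner_sobolevEmb_laplacian s b
  have hform := (le_abs_self _).trans (abs_energyForm_le hs a b)
  rw [emhdEnergyRate, hb]
  set X := ‖sobolevEmb (s + 1) a‖ ^ 2
  set Y := ‖sobolevEmb (s + 1) b‖
  set B := ‖sobolevEmb s b‖ ^ 2
  set K := energyConst s
  set E := emhdEnergy s a b
  have hX₀ : 0 ≤ X := sq_nonneg _
  have hB₀ : 0 ≤ B := sq_nonneg _
  have hκ : 0 < 8 * π ^ 2 * ν := by positivity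
  have hXE : X ^ 2 ≤ E ^ 2 + E := by nlinarith
  have hBE : B ≤ E ^ 2 + E := by nlinarith
  have hamgm : 2 * (K * (X * Y)) ≤ 8 * π ^ 2 * ν * Y ^ 2 + K ^ 2 / (8 * π ^ 2 * ν) * X ^ 2 := by
    have h := div_nonneg (sq_nonneg (8 * π ^ 2 * ν * Y - K * X)) hκ.le
    have hsq : (8 * π ^ 2 * ν * Y - K * X) ^ 2 / (8 * π ^ 2 * ν) = 8 * π ^ 2 * ν * Y ^ 2 +
        K ^ 2 / (8 * π ^ 2 * ν) * X ^ 2 - 2 * (K * (X * Y)) := by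
      field_simp
      ring
    linarith
  calc _ ≤ 2 * (K * (X * Y)) - 8 * π ^ 2 * ν * Y ^ 2 + 8 * π ^ 2 * ν * B := by
        nlinarith [mul_nonpos_of_nonneg_of_nonpos (sq_nonneg π) ha]
    _ ≤ K ^ 2 / (8 * π ^ 2 * ν) * X ^ 2 + 8 * π ^ 2 * ν * B := by linarith
    _ ≤ K ^ 2 / (8 * π ^ 2 * ν) * (E ^ 2 + E) + 8 * π ^ 2 * ν * (E ^ 2 + E) := by gcongr
    _ = _ := (add_mul _ _ _).symm

namespace IsEMHDSolution

variable {μ ν T : ℝ} {a b : ℝ → 𝓢(Plane, ℝ)}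

lemma emhdEnergy_le_two_mul (h : IsEMHDSolution μ ν T a b) {s M : ℝ} (hμ : 0 ≤ μ) (hν : 0 < ν)
    (hs : 2 < s) (hM : emhdEnergy s (a 0) (b 0) ≤ M) {t : ℝ} (ht : t ∈ Set.Ico 0 T)
    (htM : t < doublingTime (energyGrowth s ν) M) :
    emhdEnergy s (a t) (b t) ≤ 2 * emhdEnergy s (a 0) (b 0) :=
  le_two_mul_of_lt_doublingTime (F := fun t => emhdEnergy s (a t) (b t)) (energyGrowth_pos s hν)
    (fun _ => emhdEnergy_nonneg ..) (h.continuousOn_emhdEnergy s)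
    (fun _ => h.hasDerivAt_emhdEnergy s) (fun _ _ => emhdEnergyRate_le hμ hν hs ..) hM ht htM

lemma of_derivWithin
    (ha : ∀ x, DifferentiableOn ℝ (fun τ => a τ x) (Set.Ico 0 T))
    (hb : ∀ x, DifferentiableOn ℝ (fun τ => b τ x) (Set.Ico 0 T))
    (hbdd : ∀ t ∈ Set.Ico 0 T, ∀ k n : ℕ, ∃ δ > 0, ∃ K : ℝ, ∀ τ ∈ Set.Ico 0 T, |τ - t| < δ →
      SchwartzMap.seminorm ℝ k n (a τ) ≤ K ∧ SchwartzMap.seminorm ℝ k n (b τ) ≤ K)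
    (hda : ∀ t ∈ Set.Ico 0 T, ∀ x : Plane,
      derivWithin (fun τ => a τ x) (Set.Ico 0 T) t
        + pd 1 (a t) x * pd 0 (b t) x - pd 0 (a t) x * pd 1 (b t) x = μ * lap (a t) x)
    (hdb : ∀ t ∈ Set.Ico 0 T, ∀ x : Plane,
      derivWithin (fun τ => b τ x) (Set.Ico 0 T) t
        - pd 1 (a t) x * pd 0 (lap (a t)) x + pd 0 (a t) x * pd 1 (lap (a t)) x
          = ν * lap (b t) x) :
    IsEMHDSolution μ ν T a b where
  hasDerivWithinAt_fst t ht x := (ha x t ht).hasDerivWithinAt.congr_deriv <| by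
    rw [emhdRateFst, add_apply, smul_apply, poisson_apply, coe_laplacian, smul_eq_mul]
    linarith [hda t ht x]
  hasDerivWithinAt_snd t ht x := (hb x t ht).hasDerivWithinAt.congr_deriv <| by
    rw [emhdRateSnd, sub_apply, smul_apply, poisson_apply, coe_laplacian, coe_laplacian,
      smul_eq_mul]
    linarith [hdb t ht x]
  eventuallyBounded_fst t ht := eventuallyBounded_of_seminorm_le fun k n =>
    let ⟨δ, hδ, K, hK⟩ := hbdd t ht k n
    ⟨δ, hδ, K, fun τ hτ hτt => (hK τ hτ hτt).1⟩
  eventuallyBounded_snd t ht := eventuallyBounded_of_seminorm_le fun k n =>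
    let ⟨δ, hδ, K, hK⟩ := hbdd t ht k n
    ⟨δ, hδ, K, fun τ hτ hτt => (hK τ hτ hτt).2⟩

end IsEMHDSolution

lemma differentiableOn_apply_of_contDiffOn_prod {E F G : Type*} [NormedAddCommGroup E]
    [NormedSpace ℝ E] [NormedAddCommGroup F] [NormedSpace ℝ F] [NormedAddCommGroup G]
    [NormedSpace ℝ G] {f : E → F → G} {s : Set E} {n : WithTop ℕ∞} (hn : n ≠ 0)
    (hf : ContDiffOn ℝ n (fun q : E × F => f q.1 q.2) (s ×ˢ Set.univ)) (x : F) :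
    DifferentiableOn ℝ (fun τ => f τ x) s :=
  (hf.differentiableOn hn).comp (f := fun τ => (τ, x))
    (differentiableOn_id.prodMk (differentiableOn_const x)) fun _ hτ => ⟨hτ, Set.mem_univ x⟩

theorem emhd_uniform_sobolev_bound_vertical_general {s ν M : ℝ} (hs : 2 < s) (hν : 0 < ν)
    (hM : 0 ≤ M) : ∃ T : ℝ, 0 < T ∧ ∀ μ : ℝ, 0 ≤ μ → ∀ (T' : ℝ) (a b : ℝ → 𝓢(Plane, ℝ)),
      IsEMHDSolution μ ν T' a b → sobNorm (s + 1) (a 0) ^ 2 + sobNorm s (b 0) ^ 2 ≤ M →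
      ∀ t : ℝ, 0 ≤ t → t < min T T' → sobNorm (s + 1) (a t) ^ 2 + sobNorm s (b t) ^ 2 ≤
        8 * π ^ 2 * (sobNorm (s + 1) (a 0) ^ 2 + sobNorm s (b 0) ^ 2) := by
  refine ⟨doublingTime (energyGrowth s ν) (4 * π ^ 2 * M),
    doublingTime_pos (energyGrowth_pos s hν) (by positivity), fun μ hμ T' a b h hM₀ t ht htT => ?_⟩
  simp only [sobNorm_sq] at hM₀ ⊢
  have h₀ : emhdEnergy s (a 0) (b 0) ≤
      4 * π ^ 2 * (‖sobolevEmb (s + 1) (a 0)‖ ^ 2 + ‖sobolevEmb s (b 0)‖ ^ 2) := emhdEnergy_le ..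
  have ht' := lt_min_iff.1 htT
  calc _ ≤ emhdEnergy s (a t) (b t) := le_emhdEnergy ..
    _ ≤ 2 * emhdEnergy s (a 0) (b 0) :=
        h.emhdEnergy_le_two_mul hμ hν hs (h₀.trans (by gcongr)) ⟨ht, ht'.2⟩ ht'.1
    _ ≤ _ := by linarith

end EMHD

/-- Uniform Sobolev bound on a short time interval for the 2½D electron MHD system with
vertical resistivity `ν > 0` (and `μ = 0`): for `s > 2`, `ν > 0`, `M > 0` there exist
`T > 0` and `C ≥ 1` (depending only on `s, ν, M`) such that any smooth solution on
`[0,T')` that is Schwartz in space (with Schwartz seminorms locally bounded in time)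
with `‖a(0)‖_{H^{s+1}}² + ‖b(0)‖_{H^s}² ≤ M` satisfies
`‖a(t)‖_{H^{s+1}}² + ‖b(t)‖_{H^s}² ≤ C(‖a(0)‖_{H^{s+1}}² + ‖b(0)‖_{H^s}²)` on
`[0, min(T,T'))`. -/
theorem emhd_uniform_sobolev_bound_vertical
    (s ν M : ℝ) (hs : 2 < s) (hν : 0 < ν) (hM : 0 < M) :
    ∃ T : ℝ, 0 < T ∧ ∃ C : ℝ, 1 ≤ C ∧
      ∀ T' : ℝ, 0 < T' →
      ∀ a b : ℝ → SchwartzMap Plane ℝ,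
      ContDiffOn ℝ (⊤ : ℕ∞) (fun q : ℝ × Plane => a q.1 q.2) (Set.Ico 0 T' ×ˢ Set.univ) →
      ContDiffOn ℝ (⊤ : ℕ∞) (fun q : ℝ × Plane => b q.1 q.2) (Set.Ico 0 T' ×ˢ Set.univ) →
      (∀ t ∈ Set.Ico 0 T', ∀ k n : ℕ, ∃ δ > 0, ∃ K : ℝ,
        ∀ τ ∈ Set.Ico 0 T', |τ - t| < δ →
          SchwartzMap.seminorm ℝ k n (a τ) ≤ K ∧ SchwartzMap.seminorm ℝ k n (b τ) ≤ K) →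
      (∀ t ∈ Set.Ico 0 T', ∀ x : Plane,
        derivWithin (fun τ => a τ x) (Set.Ico 0 T') t
          + pd 1 (a t) x * pd 0 (b t) x - pd 0 (a t) x * pd 1 (b t) x = 0) →
      (∀ t ∈ Set.Ico 0 T', ∀ x : Plane,
        derivWithin (fun τ => b τ x) (Set.Ico 0 T') t
          - pd 1 (a t) x * pd 0 (lap (a t)) x + pd 0 (a t) x * pd 1 (lap (a t)) x
            = ν * lap (b t) x) →
      sobNorm (s+1) (⇑(a 0)) ^ 2 + sobNorm s (⇑(b 0)) ^ 2 ≤ M →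
      ∀ t : ℝ, 0 ≤ t → t < min T T' →
        sobNorm (s+1) (⇑(a t)) ^ 2 + sobNorm s (⇑(b t)) ^ 2
          ≤ C * (sobNorm (s+1) (⇑(a 0)) ^ 2 + sobNorm s (⇑(b 0)) ^ 2) := by
  obtain ⟨T, hT, hbound⟩ := emhd_uniform_sobolev_bound_vertical_general hs hν hM.le
  refine ⟨T, hT, 8 * π ^ 2, by nlinarith [pi_gt_three], fun T' _ a b ha hb hbdd hda hdb => ?_⟩
  have hsol : IsEMHDSolution 0 ν T' a b := .of_derivWithin
    (differentiableOn_apply_of_contDiffOn_prod (by simp) ha)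
    (differentiableOn_apply_of_contDiffOn_prod (by simp) hb) hbdd
    (fun t ht x => by rw [hda t ht x, zero_mul]) hdb
  exact hbound 0 le_rfl T' a b hsol
end
end
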